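/- There is a positive constant c > 0 such that for every ε > 0 the following holds: if n is sufficiently large with respect to ε, then for every real number a, Pr(|per M_n − a| ≤ n^{n/2−εn}) ≤ n^{−c}. In particular, Pr(per M_n = a) ≤ n^{−c} for every real a. -/

import Mathlib

/-!
The rows and columns of the symmetric sign matrix are revealed one at a time, and submatrix
permanents ("minors") of the leading `t × t` block are followed. Each new row and column expresses a
minor of the larger block as a linear, bilinear or quadratic form in fresh signs whose coefficients
are minors of the old block, so a single large coefficient keeps the form large with a definite
probability. Since the matrix is symmetric, the new row and the new column carry the same signs, and
the pairs of deleted sets `(I, J)` have to be handled with care: only pairs with `I ≠ J` are kept.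

*Growth.* Let `K = n - 1 - 2N` with `N ≈ γ n`. For a set `A` of rows, the sum of the squares of all
minors with rows `A` gains a factor `θ = n ^ (1 - ε / 2)` each time a new row joins `A`, unless an
event of probability at most a prescribed constant `η` occurs (`small_ball`, which combines a second
moment computation for the quadratic chaos with the Littlewood–Offord inequality). A union bound
over the failing rounds (`grow`) shows that, up to an exponentially small probability, at time `K`
some minor with only a few deleted rows and columns exceeds `Λ ≈ n ^ (n / 2 - ε n)` (`growth`).

*Descent.* A minor of the `t × t` block is heavy if it is at least `lam Λ t = Λ (2 / 3) ^ t` in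
absolute value. The potential `V` is the least weight `#I + 3 (#(I \ J) - 2)` of the deleted sets of
a heavy minor. It goes up by at most `1` per round, and it goes down with a probability large enough
to give a supermartingale: two missing indices are added back at once (`fill_gain`), or, when
`#(I \ J) ≥ 2`, among three minors linked by exchanging deleted indices two must have a large sum,
and such a sum is a mixed coefficient of a quadratic form (`mixed_gain`, `triangle_HV`). Thus a
suitable function `phi` of `V` contracts until `V = 1`, that is, until there is an off-diagonal heavy
minor with one deleted row and one deleted column.

*Density.* From `V = 1`, the minor deleting the two newest indices is heavy two rounds later with
probability at least `1 / 4`; if a positive proportion of the first-order minors is heavy (`Dense`),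
this probability is `1 - O(n ^ (-1/2))`, by the Littlewood–Offord inequality applied twice
(`spec_dense`). By exchangeability of the indices (`exchange`) all off-diagonal first-order minors
have the same law, so the expectation `Psi` of `phi V` on the event that heavy minors are not dense
contracts by a constant factor every two rounds, up to an error `O(n ^ (-1/2))` (`Psi_contract`).

*Last row.* When heavy first-order minors are dense, the permanent is a quadratic form in the last
row with many large coefficients. Decoupling (squaring the probability and resampling half of the
signs) reduces it to a bilinear form, and costs a square root: the probability of a small ball is
`O(n ^ (-1/4))` (`final_dense`). With the other errors, this is below `n ^ (-1/8)` for large `n`.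
-/

open Finset

/-- The real number (`1` or `-1`) associated to a Boolean: a Rademacher value. -/
noncomputable def rad (b : Bool) : ℝ := if b then 1 else -1

/-- The permanent of a square real matrix. -/
noncomputable def perm {n : ℕ} (M : Matrix (Fin n) (Fin n) ℝ) : ℝ :=
  ∑ σ : Equiv.Perm (Fin n), ∏ i, M i (σ i)

/-- The symmetric `n × n` sign matrix determined by Boolean data `ω` (the entries on and
above the diagonal are `rad (ω i j)` for `i ≤ j`; below-diagonal entries are given by
symmetry). As `ω` ranges uniformly over all Boolean data, this is exactly the random
symmetric matrix `M_n` with i.i.d. Rademacher entries on and above the diagonal. -/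
noncomputable def symMat (n : ℕ) (ω : Fin n → Fin n → Bool) : Matrix (Fin n) (Fin n) ℝ :=
  fun i j => if i ≤ j then rad (ω i j) else rad (ω j i)

open Classical in
/-- The probability of the event `P` for the random symmetric Rademacher matrix `M_n`. -/
noncomputable def prob (n : ℕ) (P : Matrix (Fin n) (Fin n) ℝ → Prop) : ℝ :=
  ((univ.filter fun ω : Fin n → Fin n → Bool => P (symMat n ω)).card : ℝ) / 2 ^ (n * n)

namespace PerAnti

section

/-! ### Submatrix permanents -/

lemma expo_apply {ι : Type*} [DecidableEq ι] (B : Finset ι) (b : ι) :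
    (∑ c ∈ B, Finsupp.single c (1 : ℕ)) b = if b ∈ B then 1 else 0 := by
  rw [Finsupp.finsetSum_apply]
  simp [Finsupp.single_apply]

section Per

variable {ι : Type*} [Fintype ι] [DecidableEq ι]

/-- The permanent of the submatrix of `M` with rows `A` and columns `B`, encoded as the coefficient
of `∏ b ∈ B, X b` in `∏ a ∈ A, ∑ b, M a b * X b`; it is `0` when `A` and `B` have different sizes. -/
noncomputable def perF (M : ι → ι → ℝ) (A B : Finset ι) : ℝ :=
  MvPolynomial.coeff (∑ b ∈ B, Finsupp.single b 1)
    (∏ a ∈ A, ∑ b, MvPolynomial.C (M a b) * MvPolynomial.X b)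

lemma perF_empty (M : ι → ι → ℝ) (B : Finset ι) :
    perF M ∅ B = if B = ∅ then 1 else 0 := by
  unfold perF
  rw [Finset.prod_empty, MvPolynomial.coeff_one]
  congr 1
  rw [eq_iff_iff]
  constructor
  · intro h
    refine Finset.eq_empty_of_forall_notMem fun b hb => ?_
    have := DFunLike.congr_fun h b
    rw [expo_apply, if_pos hb] at this
    exact zero_ne_one this
  · rintro rfl; simp

/-- Laplace expansion along a row. -/
lemma perF_insert (M : ι → ι → ℝ) {A : Finset ι} {u : ι} (hu : u ∉ A) (B : Finset ι) :
    perF M (insert u A) B = ∑ b ∈ B, M u b * perF M A (B.erase b) := by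
  unfold perF
  rw [Finset.prod_insert hu, Finset.sum_mul, MvPolynomial.coeff_sum]
  rw [← Finset.sum_subset (Finset.subset_univ B)]
  · refine Finset.sum_congr rfl fun b hb => ?_
    rw [mul_assoc, MvPolynomial.coeff_C_mul, mul_comm (MvPolynomial.X b),
      MvPolynomial.coeff_mul_X', if_pos]
    · congr 2
      ext c
      rw [Finsupp.tsub_apply, expo_apply, expo_apply, Finsupp.single_apply]
      by_cases hc : b = c
      · subst hc; simp [hb]
      · have : c ≠ b := fun h => hc h.symm
        simp [hc, this]
    · rw [Finsupp.mem_support_iff, expo_apply, if_pos hb]; exact one_ne_zero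
  · intro b _ hb
    rw [mul_assoc, MvPolynomial.coeff_C_mul, mul_comm (MvPolynomial.X b),
      MvPolynomial.coeff_mul_X', if_neg, mul_zero]
    rw [Finsupp.mem_support_iff, expo_apply, if_neg hb]; simp

/-- Laplace expansion along a column. -/
lemma perF_col (M : ι → ι → ℝ) (A : Finset ι) : ∀ (B : Finset ι) (c : ι), c ∈ B →
    perF M A B = ∑ a ∈ A, M a c * perF M (A.erase a) (B.erase c) := by
  induction A using Finset.induction_on with
  | empty =>
    intro B c hc
    rw [perF_empty, if_neg (Finset.ne_empty_of_mem hc), Finset.sum_empty]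
  | insert u A hu ih =>
    intro B c hc
    rw [perF_insert M hu, ← Finset.add_sum_erase B _ hc, Finset.sum_insert hu,
      Finset.erase_insert hu]
    congr 1
    have h1 : ∀ b ∈ B.erase c, M u b * perF M A (B.erase b) =
        ∑ a ∈ A, M u b * (M a c * perF M (A.erase a) ((B.erase c).erase b)) := by
      intro b hb
      rw [ih (B.erase b) c (Finset.mem_erase.2 ⟨fun h => (Finset.mem_erase.1 hb).1 h.symm, hc⟩),
        Finset.mul_sum, Finset.erase_right_comm]
    rw [Finset.sum_congr rfl h1, Finset.sum_comm]
    refine Finset.sum_congr rfl fun a ha => ?_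
    have hua : a ≠ u := fun h => hu (h ▸ ha)
    have h2 : (insert u A).erase a = insert u (A.erase a) :=
      Finset.erase_insert_of_ne hua.symm
    rw [h2, perF_insert M (fun h => hu (Finset.mem_of_mem_erase h)), Finset.mul_sum]
    refine Finset.sum_congr rfl fun b _ => ?_
    ring

lemma perF_symm (M : ι → ι → ℝ) (hM : ∀ i j, M i j = M j i) (A : Finset ι) :
    ∀ B : Finset ι, perF M A B = perF M B A := by
  induction A using Finset.induction_on with
  | empty =>
    intro B
    rw [perF_empty]
    split_ifs with h
    · rw [h, perF_empty, if_pos rfl]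
    · obtain ⟨b, hb⟩ := Finset.nonempty_iff_ne_empty.2 h
      rw [← Finset.insert_erase hb, perF_insert M (Finset.notMem_erase b B), Finset.sum_empty]
  | insert u A hu ih =>
    intro B
    rw [perF_insert M hu, perF_col M B (insert u A) u (Finset.mem_insert_self u A),
      Finset.erase_insert hu]
    refine Finset.sum_congr rfl fun b _ => ?_
    rw [hM u b, ih]

lemma perF_congr {M M' : ι → ι → ℝ} (A : Finset ι) : ∀ B : Finset ι,
    (∀ a ∈ A, ∀ b ∈ B, M a b = M' a b) → perF M A B = perF M' A B := by
  induction A using Finset.induction_on with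
  | empty => intro B _; rw [perF_empty, perF_empty]
  | insert u A hu ih =>
    intro B h
    rw [perF_insert M hu, perF_insert M' hu]
    refine Finset.sum_congr rfl fun b hb => ?_
    rw [h u (Finset.mem_insert_self u A) b hb, ih (B.erase b) fun a ha c hc =>
      h a (Finset.mem_insert_of_mem ha) c (Finset.mem_of_mem_erase hc)]

lemma perF_map (M : ι → ι → ℝ) (σ : Equiv.Perm ι) (A : Finset ι) : ∀ B : Finset ι,
    perF (fun i j => M (σ i) (σ j)) A B = perF M (A.map σ.toEmbedding) (B.map σ.toEmbedding) := by
  induction A using Finset.induction_on with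
  | empty => intro B; rw [perF_empty, Finset.map_empty, perF_empty]; simp
  | insert u A hu ih =>
    intro B
    rw [perF_insert _ hu, Finset.map_insert, perF_insert M (by simpa using hu), Finset.sum_map]
    refine Finset.sum_congr rfl fun b _ => ?_
    rw [ih, Finset.map_erase]
    rfl

/-- Expansion of a submatrix permanent along a row and the column with the same index `w`. -/
lemma perF_quad (M : ι → ι → ℝ) {A B : Finset ι} {w : ι} (hA : w ∉ A) (hB : w ∉ B) :
    perF M (insert w A) (insert w B) = M w w * perF M A B +
      ∑ b ∈ B, ∑ a ∈ A, M w b * M a w * perF M (A.erase a) (B.erase b) := by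
  rw [perF_insert M hA, Finset.sum_insert hB, Finset.erase_insert hB]
  congr 1
  refine Finset.sum_congr rfl fun b hb => ?_
  have hbw : w ≠ b := fun h => hB (h ▸ hb)
  rw [Finset.erase_insert_of_ne hbw, perF_col M A _ w (Finset.mem_insert_self _ _), Finset.mul_sum,
    Finset.erase_insert (fun h => hB (Finset.mem_of_mem_erase h))]
  refine Finset.sum_congr rfl fun a _ => ?_
  ring

end Per

lemma perF_univ {n : ℕ} (M : Matrix (Fin n) (Fin n) ℝ) : perF M univ univ = perm M := by
  classical
  unfold perF perm
  rw [Finset.prod_univ_sum, MvPolynomial.coeff_sum]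
  have key : ∀ f : Fin n → Fin n,
      MvPolynomial.coeff (∑ b, Finsupp.single b 1)
        (∏ i, (MvPolynomial.C (M i (f i)) * MvPolynomial.X (f i) : MvPolynomial (Fin n) ℝ)) =
      if Function.Bijective f then ∏ i, M i (f i) else 0 := by
    intro f
    have h1 : ∏ i, (MvPolynomial.C (M i (f i)) * MvPolynomial.X (f i) : MvPolynomial (Fin n) ℝ) =
        MvPolynomial.monomial (∑ i, Finsupp.single (f i) 1) (∏ i, M i (f i)) := by
      rw [MvPolynomial.monomial_sum_index, Finset.prod_mul_distrib, map_prod]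
      rfl
    rw [h1, MvPolynomial.coeff_monomial]
    congr 1
    rw [eq_iff_iff]
    constructor
    · intro h
      refine (Finite.surjective_iff_bijective).1 fun j => ?_
      have := DFunLike.congr_fun h j
      rw [expo_apply, if_pos (Finset.mem_univ j), Finsupp.finsetSum_apply] at this
      by_contra hj
      push Not at hj
      rw [Finset.sum_eq_zero fun i _ => by rw [Finsupp.single_apply, if_neg (hj i)]] at this
      exact zero_ne_one this
    · intro h
      exact (Equiv.ofBijective f h).sum_comp (fun b => Finsupp.single b 1)
  rw [Fintype.piFinset_univ, Finset.sum_congr rfl fun f _ => key f, ← Finset.sum_filter]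
  symm
  refine Finset.sum_bij (fun σ _ => (σ : Fin n → Fin n)) ?_ ?_ ?_ ?_
  · intro σ _; exact Finset.mem_filter.2 ⟨Finset.mem_univ _, σ.bijective⟩
  · intro σ _ τ _ h; exact DFunLike.coe_injective h
  · intro f hf
    exact ⟨Equiv.ofBijective f (Finset.mem_filter.1 hf).2, Finset.mem_univ _, rfl⟩
  · intro σ _; rfl

end

section

/-! ### Averages over finite types -/

section Av

variable {α β : Type*} [Fintype α] [Fintype β]

/-- The average of a real function over a finite type: expectation for the uniform measure. -/
noncomputable def av {α : Type*} [Fintype α] (f : α → ℝ) : ℝ := (∑ a, f a) / Fintype.card α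

open Classical in
/-- The real-valued indicator of a proposition. -/
noncomputable def ind (p : Prop) : ℝ := if p then 1 else 0

lemma ind_pos {p : Prop} (h : p) : ind p = 1 := if_pos h
lemma ind_neg {p : Prop} (h : ¬ p) : ind p = 0 := if_neg h
lemma ind_nonneg (p : Prop) : 0 ≤ ind p := by unfold ind; split_ifs <;> norm_num
lemma ind_le_one (p : Prop) : ind p ≤ 1 := by unfold ind; split_ifs <;> norm_num
lemma ind_mono {p q : Prop} (h : p → q) : ind p ≤ ind q := by
  by_cases hp : p
  · rw [ind_pos hp, ind_pos (h hp)]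
  · rw [ind_neg hp]; exact ind_nonneg q
lemma ind_or_le (p q : Prop) : ind (p ∨ q) ≤ ind p + ind q := by
  by_cases hp : p
  · rw [ind_pos hp, ind_pos (Or.inl hp)]; linarith [ind_nonneg q]
  · rw [ind_neg hp, zero_add]; exact ind_mono fun h => h.resolve_left hp
lemma ind_not (p : Prop) : ind (¬ p) = 1 - ind p := by
  by_cases hp : p
  · rw [ind_pos hp, ind_neg (not_not.2 hp)]; norm_num
  · rw [ind_neg hp, ind_pos hp]; norm_num
lemma ind_and (p q : Prop) : ind (p ∧ q) = ind p * ind q := by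
  by_cases hp : p
  · by_cases hq : q
    · rw [ind_pos hp, ind_pos hq, ind_pos ⟨hp, hq⟩]; norm_num
    · rw [ind_neg hq, ind_neg fun h => hq h.2, mul_zero]
  · rw [ind_neg hp, ind_neg fun h => hp h.1, zero_mul]

lemma av_mono {f g : α → ℝ} (h : ∀ a, f a ≤ g a) : av f ≤ av g := by
  unfold av; gcongr with a; exact h a

lemma av_add (f g : α → ℝ) : av (fun a => f a + g a) = av f + av g := by
  unfold av; rw [Finset.sum_add_distrib, add_div]

lemma av_sub (f g : α → ℝ) : av (fun a => f a - g a) = av f - av g := by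
  unfold av; rw [Finset.sum_sub_distrib, sub_div]

lemma av_mul (c : ℝ) (f : α → ℝ) : av (fun a => c * f a) = c * av f := by
  unfold av; rw [← Finset.mul_sum, mul_div_assoc]

lemma av_mul_right (c : ℝ) (f : α → ℝ) : av (fun a => f a * c) = av f * c := by
  unfold av; rw [← Finset.sum_mul]; ring

lemma av_const [Nonempty α] (c : ℝ) : av (fun _ : α => c) = c := by
  unfold av
  rw [Finset.sum_const, nsmul_eq_mul, Finset.card_univ, mul_div_assoc, mul_comm,
    div_mul_cancel₀]
  exact_mod_cast Fintype.card_ne_zero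

lemma av_nonneg {f : α → ℝ} (h : ∀ a, 0 ≤ f a) : 0 ≤ av f := by
  unfold av; exact div_nonneg (Finset.sum_nonneg fun a _ => h a) (Nat.cast_nonneg _)

lemma av_le_of_le [Nonempty α] {f : α → ℝ} {c : ℝ} (h : ∀ a, f a ≤ c) : av f ≤ c :=
  (av_mono h).trans (av_const c).le

lemma av_sum {κ : Type*} (s : Finset κ) (f : κ → α → ℝ) :
    av (fun a => ∑ k ∈ s, f k a) = ∑ k ∈ s, av (f k) := by
  unfold av; rw [Finset.sum_comm, Finset.sum_div]

lemma av_comm (f : α → β → ℝ) : av (fun a => av (f a)) = av (fun b => av fun a => f a b) := by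
  unfold av
  rw [← Finset.sum_div, ← Finset.sum_div, Finset.sum_comm, div_div, div_div, mul_comm]

lemma av_equiv (e : α ≃ β) (f : β → ℝ) : av (fun a => f (e a)) = av f := by
  unfold av; rw [e.sum_comp, Fintype.card_congr e]

lemma av_prod (f : α × β → ℝ) : av f = av fun a => av fun b => f (a, b) := by
  unfold av
  rw [Fintype.sum_prod_type, Fintype.card_prod, ← Finset.sum_div, div_div, Nat.cast_mul, mul_comm]

/-- Resampling: averages are unchanged by replacing `a` by the first component of an involution
applied to `(a, b)`, with `b` a fresh variable. -/
lemma av_resample [Nonempty β] (Φ : α × β → α × β) (hΦ : Function.Involutive Φ) (F : α → ℝ) :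
    av F = av fun a => av fun b => F (Φ (a, b)).1 := by
  rw [← av_prod (fun p : α × β => F (Φ p).1), ← av_equiv hΦ.toPerm, av_prod]
  simp [hΦ _, av_const]

lemma av_le_one_of_ind [Nonempty α] (p : α → Prop) : av (fun a => ind (p a)) ≤ 1 :=
  av_le_of_le fun _ => ind_le_one _

lemma av_ind_eq (p : α → Prop) [DecidablePred p] :
    av (fun a => ind (p a)) = (univ.filter p).card / Fintype.card α := by
  unfold av
  congr 1
  rw [Finset.card_filter]
  push_cast
  refine Finset.sum_congr rfl fun a _ => ?_
  unfold ind
  split_ifs <;> simp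

/-- Jensen's inequality for the square. -/
lemma av_sq_le [Nonempty α] (f : α → ℝ) : av f ^ 2 ≤ av fun a => f a ^ 2 := by
  have h : 0 ≤ av fun a => (f a - av f) ^ 2 := av_nonneg fun a => sq_nonneg _
  have e : (fun a => (f a - av f) ^ 2) = fun a => f a ^ 2 - (2 * av f) * f a + (av f) ^ 2 := by
    funext a; ring
  rw [e, av_add, av_sub, av_mul, av_const] at h
  nlinarith

/-- Markov's inequality. -/
lemma markov (f : α → ℝ) (hf : ∀ a, 0 ≤ f a) {r : ℝ} (hr : 0 < r) :
    av (fun a => ind (r ≤ f a)) ≤ av f / r := by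
  rw [le_div_iff₀ hr, ← av_mul_right]
  refine av_mono fun a => ?_
  by_cases h : r ≤ f a
  · rw [ind_pos h]; linarith
  · rw [ind_neg h]; linarith [hf a]

end Av

/-! ### Signed sums and the Littlewood–Offord inequality -/

section Cube

variable {ι : Type*} [Fintype ι] [DecidableEq ι]

lemma rad_mul_self (b : Bool) : rad b * rad b = 1 := by cases b <;> simp [rad]
lemma abs_rad (b : Bool) : |rad b| = 1 := by cases b <;> simp [rad]
lemma rad_not (b : Bool) : rad (!b) = - rad b := by cases b <;> simp [rad]
lemma rad_inj {b c : Bool} (h : rad b = rad c) : b = c := by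
  cases b <;> cases c <;> simp [rad] at h ⊢ <;> norm_num at h

lemma card_cube : (Fintype.card (ι → Bool) : ℝ) = 2 ^ Fintype.card ι := by
  simp

/-- Resampling the coordinates in `S`. -/
lemma av_piecewise (S : Finset ι) (f : (ι → Bool) → ℝ) :
    av f = av fun x => av fun y => f (S.piecewise y x) := by
  refine av_resample (fun p : (ι → Bool) × (ι → Bool) => (S.piecewise p.2 p.1, S.piecewise p.1 p.2))
    ?_ f
  rintro ⟨x, y⟩
  ext i <;> by_cases h : i ∈ S <;> simp [h]

/-- If `bad` singles out at most one assignment of the coordinates in `S` given the others,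
then it has probability at most `2 ^ (-#S)`. -/
lemma one_bad (S : Finset ι) (bad : (ι → Bool) → Prop)
    (h : ∀ x y, bad x → bad y → (∀ i ∉ S, x i = y i) → x = y) :
    av (fun x => ind (bad x)) ≤ (1 / 2) ^ S.card := by
  classical
  rw [av_ind_eq, card_cube]
  have h1 : (univ.filter bad).card ≤ Fintype.card ((Sᶜ : Finset ι) → Bool) := by
    rw [← Finset.card_univ]
    refine Finset.card_le_card_of_injOn (fun x i => x i) (fun _ _ => Finset.mem_coe.2 (mem_univ _)) ?_
    intro x hx y hy hxy
    refine h x y (by simpa using hx) (by simpa using hy) fun i hi => ?_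
    exact congrFun hxy ⟨i, Finset.mem_compl.2 hi⟩
  have h2 : Fintype.card ((Sᶜ : Finset ι) → Bool) = 2 ^ (Fintype.card ι - S.card) := by
    simp
  rw [h2] at h1
  have h3 : S.card ≤ Fintype.card ι := Finset.card_le_univ S
  rw [div_le_iff₀ (by positivity)]
  calc ((univ.filter bad).card : ℝ) ≤ 2 ^ (Fintype.card ι - S.card) := by exact_mod_cast h1
    _ = (1 / 2) ^ S.card * 2 ^ Fintype.card ι := by
      conv_rhs => rw [← Nat.sub_add_cancel h3, pow_add]
      rw [one_div, inv_pow]; field_simp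

lemma centralBinom_sq (k : ℕ) : (2 * k + 1) * k.centralBinom ^ 2 ≤ 16 ^ k := by
  induction k with
  | zero => simp
  | succ k ih =>
    have h := Nat.succ_mul_centralBinom_succ k
    have h2 : ((k + 1) * (k + 1).centralBinom) ^ 2 = (2 * (2 * k + 1) * k.centralBinom) ^ 2 := by
      rw [h]
    have h3 : (k + 1) ^ 2 * ((2 * (k + 1) + 1) * (k + 1).centralBinom ^ 2) ≤
        (k + 1) ^ 2 * 16 ^ (k + 1) := by
      calc (k + 1) ^ 2 * ((2 * (k + 1) + 1) * (k + 1).centralBinom ^ 2)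
          = (2 * k + 3) * ((k + 1) * (k + 1).centralBinom) ^ 2 := by ring
        _ = 4 * ((2 * k + 3) * (2 * k + 1)) * ((2 * k + 1) * k.centralBinom ^ 2) := by
          rw [h2]; ring
        _ ≤ 4 * (4 * (k + 1) ^ 2) * 16 ^ k := by
          refine Nat.mul_le_mul (Nat.mul_le_mul_left _ ?_) ih
          nlinarith
        _ = (k + 1) ^ 2 * 16 ^ (k + 1) := by ring
    exact Nat.le_of_mul_le_mul_left h3 (by positivity)

/-- The middle binomial coefficient satisfies `choose m (m / 2) ≤ 2 ^ m / √m`. -/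
lemma choose_mid_sq (m : ℕ) : m * (m.choose (m / 2)) ^ 2 ≤ 4 ^ m := by
  obtain ⟨k, rfl | rfl⟩ := Nat.even_or_odd' m
  · have := centralBinom_sq k
    rw [Nat.centralBinom] at this
    rw [Nat.mul_div_cancel_left _ (by norm_num : 0 < 2), pow_mul]
    norm_num
    nlinarith [Nat.zero_le ((2 * k).choose k ^ 2)]
  · have h := centralBinom_sq (k + 1)
    have h1 : (k + 1).centralBinom = 2 * (2 * k + 1).choose k := by
      rw [Nat.centralBinom, show 2 * (k + 1) = (2 * k + 1) + 1 by ring, Nat.choose_succ_succ,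
        Nat.choose_symm_half]; ring
    have h2 : (2 * k + 1) / 2 = k := by omega
    rw [h1] at h
    rw [h2]
    have h3 : (4 : ℕ) ^ (2 * k + 1) = 4 * 16 ^ k := by
      rw [pow_succ, pow_mul]; norm_num; ring
    rw [h3]
    rw [pow_succ 16 k] at h
    nlinarith [Nat.zero_le ((2 * k + 1).choose k ^ 2)]

lemma choose_mid_le {m : ℕ} {s : ℝ} (hs : 0 < s) (hm : s ≤ m) :
    (m.choose (m / 2) : ℝ) / 2 ^ m ≤ 1 / √s := by
  have h : (m : ℝ) * (m.choose (m / 2)) ^ 2 ≤ 4 ^ m := by exact_mod_cast choose_mid_sq m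
  rw [div_le_div_iff₀ (by positivity) (Real.sqrt_pos.2 hs), one_mul]
  refine abs_le_of_sq_le_sq' ?_ (by positivity) |>.2
  rw [mul_pow, Real.sq_sqrt hs.le, ← pow_mul, mul_comm m 2, pow_mul]
  norm_num
  nlinarith [sq_nonneg (m.choose (m / 2) : ℝ)]

/-- The Littlewood–Offord inequality when all coefficients are large. The sets of indices contributing
positively, for the assignments whose sum lies in the interval, form an antichain, to which
Sperner's theorem applies. -/
lemma LO_full (c : ι → ℝ) {ρ : ℝ} (hρ : 0 < ρ) (hc : ∀ i, ρ ≤ |c i|) (a : ℝ) :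
    av (fun x : ι → Bool => ind (a ≤ ∑ i, rad (x i) * c i ∧ ∑ i, rad (x i) * c i < a + 2 * ρ)) ≤
      ((Fintype.card ι).choose (Fintype.card ι / 2) : ℝ) / 2 ^ Fintype.card ι := by
  classical
  rw [av_ind_eq, card_cube]
  gcongr
  set bad := univ.filter fun x : ι → Bool =>
    a ≤ ∑ i, rad (x i) * c i ∧ ∑ i, rad (x i) * c i < a + 2 * ρ with hbad
  let g : (ι → Bool) → Finset ι := fun x => univ.filter fun i => rad (x i) * c i = |c i|
  have hg : ∀ x i, i ∉ g x → rad (x i) * c i = - |c i| := by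
    intro x i hi
    have hi' : ¬ rad (x i) * c i = |c i| := by simpa [g] using hi
    have : |rad (x i) * c i| = |c i| := by rw [abs_mul, abs_rad, one_mul]
    rcases abs_choice (rad (x i) * c i) with h | h <;> rw [h] at this
    · exact absurd this hi'
    · linarith
  have hg' : ∀ x i, i ∈ g x → rad (x i) * c i = |c i| := by
    intro x i hi; simpa [g] using hi
  have ginj : Function.Injective g := by
    intro x y hxy
    funext i
    have hci : c i ≠ 0 := by
      intro h; have := hc i; rw [h, abs_zero] at this; linarith
    refine rad_inj (mul_right_cancel₀ hci ?_)
    by_cases hi : i ∈ g x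
    · rw [hg' x i hi, hg' y i (hxy ▸ hi)]
    · rw [hg x i hi, hg y i (hxy ▸ hi)]
  rw [← Finset.card_image_of_injective bad ginj]
  refine IsAntichain.sperner ?_
  intro A hA B hB hAB hsub
  obtain ⟨x, hx, rfl⟩ := Finset.mem_image.1 (Finset.mem_coe.1 hA)
  obtain ⟨y, hy, rfl⟩ := Finset.mem_image.1 (Finset.mem_coe.1 hB)
  obtain ⟨j, hjy, hjx⟩ := Finset.exists_of_ssubset (Finset.ssubset_iff_subset_ne.2 ⟨hsub, hAB⟩)
  have hx1 := (Finset.mem_filter.1 hx).2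
  have hy1 := (Finset.mem_filter.1 hy).2
  have key : 2 * ρ ≤ ∑ i, (rad (y i) * c i - rad (x i) * c i) := by
    have h1 : 2 * ρ ≤ rad (y j) * c j - rad (x j) * c j := by
      rw [hg' y j hjy, hg x j hjx]; linarith [hc j]
    refine h1.trans (Finset.single_le_sum (f := fun i => rad (y i) * c i - rad (x i) * c i)
      (fun i _ => ?_) (mem_univ j))
    by_cases hi : i ∈ g x
    · simp only [hg' x i hi, hg' y i (hsub hi)]; linarith
    · simp only [hg x i hi]
      by_cases hi' : i ∈ g y
      · rw [hg' y i hi']; linarith [abs_nonneg (c i)]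
      · rw [hg y i hi']; linarith
  rw [Finset.sum_sub_distrib] at key
  linarith [hx1.1, hy1.2]

/-- The Erdős–Littlewood–Offord inequality: if at least `s` of the coefficients have absolute value
at least `ρ`, a signed sum lies in a given interval of length `2 * ρ` with probability at most
`1 / √s`. -/
lemma LO (c : ι → ℝ) {ρ s : ℝ} (hρ : 0 < ρ) (hs : 0 < s) (S : Finset ι) (hS : s ≤ S.card)
    (hc : ∀ i ∈ S, ρ ≤ |c i|) (a : ℝ) :
    av (fun x : ι → Bool => ind (a ≤ ∑ i, rad (x i) * c i ∧ ∑ i, rad (x i) * c i < a + 2 * ρ)) ≤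
      1 / √s := by
  classical
  let e := Equiv.piEquivPiSubtypeProd (fun i => i ∈ S) (fun _ => Bool)
  rw [← av_equiv e.symm, av_prod, av_comm]
  refine av_le_of_le fun y => ?_
  have h1 : ∀ x : {i // i ∈ S} → Bool, ∑ i, rad (e.symm (x, y) i) * c i =
      ∑ i, rad (x i) * c i + ∑ i, rad (y i) * c i := by
    intro x
    rw [← Fintype.sum_subtype_add_sum_subtype (fun i => i ∈ S)]
    congr 1
    · refine Finset.sum_congr (by ext; simp) fun i _ => ?_
      simp [e, Equiv.piEquivPiSubtypeProd]
    · refine Fintype.sum_congr _ _ fun i => ?_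
      simp [e, Equiv.piEquivPiSubtypeProd, i.2]
  have h2 := LO_full (fun i : {i // i ∈ S} => c i) hρ (fun i => hc i i.2)
    (a - ∑ i, rad (y i) * c i)
  refine le_trans (le_of_eq ?_) (h2.trans (choose_mid_le hs (by simpa using hS)))
  congr 1
  funext x
  congr 1
  rw [h1]
  rw [eq_iff_iff]
  constructor <;> rintro ⟨h3, h4⟩ <;> constructor <;> linarith

lemma LO_abs (c : ι → ℝ) {ρ s : ℝ} (hρ : 0 < ρ) (hs : 0 < s) (S : Finset ι) (hS : s ≤ S.card)
    (hc : ∀ i ∈ S, ρ ≤ |c i|) (a : ℝ) :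
    av (fun x : ι → Bool => ind (|∑ i, rad (x i) * c i + a| < ρ)) ≤ 1 / √s := by
  refine le_trans (av_mono fun x => ind_mono fun h => ?_) (LO c hρ hs S hS hc (-a - ρ))
  rw [abs_lt] at h
  constructor <;> linarith [h.1, h.2]

/-- The Littlewood–Offord inequality at a scale `R` coarser than the coefficients. -/
lemma LO_scaled (c : ι → ℝ) {ρ s R : ℝ} (hρ : 0 < ρ) (hs : 0 < s) (hR : 0 ≤ R)
    (S : Finset ι) (hS : s ≤ S.card) (hc : ∀ i ∈ S, ρ ≤ |c i|) :
    av (fun x : ι → Bool => ind (|∑ i, rad (x i) * c i| < R)) ≤ (R / ρ + 1) / √s := by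
  let N := ⌈R / ρ⌉₊
  have hN : (N : ℝ) ≤ R / ρ + 1 := (Nat.ceil_lt_add_one (by positivity)).le
  have hN' : R ≤ N * ρ := by rw [← div_le_iff₀ hρ]; exact Nat.le_ceil _
  have h1 : ∀ x : ι → Bool, ind (|∑ i, rad (x i) * c i| < R) ≤
      ∑ k ∈ range N, ind ((-R + 2 * ρ * k) ≤ ∑ i, rad (x i) * c i ∧
        ∑ i, rad (x i) * c i < (-R + 2 * ρ * k) + 2 * ρ) := by
    intro x
    by_cases h : |∑ i, rad (x i) * c i| < R
    · rw [ind_pos h]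
      rw [abs_lt] at h
      set v := ∑ i, rad (x i) * c i
      let k := ⌊(v + R) / (2 * ρ)⌋₊
      have hv : 0 ≤ (v + R) / (2 * ρ) := div_nonneg (by linarith) (by linarith)
      have hk1 : (k : ℝ) * (2 * ρ) ≤ v + R := by
        rw [← le_div_iff₀ (by linarith)]; exact Nat.floor_le hv
      have hk2 : v + R < (k + 1) * (2 * ρ) := by
        rw [← div_lt_iff₀ (by linarith)]; exact Nat.lt_floor_add_one _
      have hkN : k < N := by
        have : (k : ℝ) * (2 * ρ) < N * (2 * ρ) := by nlinarith
        exact_mod_cast lt_of_mul_lt_mul_right this (by linarith)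
      refine le_trans ?_ (Finset.single_le_sum (fun j _ => ind_nonneg _) (Finset.mem_range.2 hkN))
      rw [ind_pos]
      constructor <;> linarith
    · rw [ind_neg h]; exact Finset.sum_nonneg fun _ _ => ind_nonneg _
  refine (av_mono h1).trans ?_
  rw [av_sum]
  refine (Finset.sum_le_sum fun (k : ℕ) _ => LO c hρ hs S hS hc (-R + 2 * ρ * k)).trans ?_
  rw [Finset.sum_const, Finset.card_range, nsmul_eq_mul, mul_one_div]
  gcongr

end Cube

end

section

variable {n : ℕ}

/-! ### Symmetric sign matrices -/

/-- Symmetric Boolean `n × n` arrays. -/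
abbrev Om (n : ℕ) := {f : Fin n → Fin n → Bool // ∀ i j, f i j = f j i}

instance : Nonempty (Om n) := ⟨⟨fun _ _ => true, fun _ _ => rfl⟩⟩

/-- The sign matrix of a symmetric Boolean array. -/
noncomputable def mat (ω : Om n) : Fin n → Fin n → ℝ := fun i j => rad (ω.1 i j)

lemma mat_symm (ω : Om n) (i j : Fin n) : mat ω i j = mat ω j i := by
  unfold mat; rw [ω.2]

/-- Replace row and column `w` of `ω` by `x`. -/
def upd (ω : Om n) (w : Fin n) (x : Fin n → Bool) : Om n :=
  ⟨fun i j => if i = w then x j else if j = w then x i else ω.1 i j, by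
    intro i j
    by_cases hi : i = w <;> by_cases hj : j = w <;> simp [hi, hj, ω.2 i j]⟩

lemma mat_upd_left (ω : Om n) (w : Fin n) (x : Fin n → Bool) (j : Fin n) :
    mat (upd ω w x) w j = rad (x j) := by simp [mat, upd]

lemma mat_upd_right (ω : Om n) (w : Fin n) (x : Fin n → Bool) (j : Fin n) :
    mat (upd ω w x) j w = rad (x j) := by rw [mat_symm, mat_upd_left]

lemma mat_upd_ne (ω : Om n) {w : Fin n} (x : Fin n → Bool) {i j : Fin n} (hi : i ≠ w)
    (hj : j ≠ w) : mat (upd ω w x) i j = mat ω i j := by simp [mat, upd, hi, hj]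

/-- Resampling a row (and the corresponding column) does not change the average. -/
lemma av_upd (w : Fin n) (F : Om n → ℝ) : av F = av fun ω => av fun x => F (upd ω w x) := by
  refine av_resample (fun p : Om n × (Fin n → Bool) => (upd p.1 w p.2, p.1.1 w)) ?_ F
  rintro ⟨ω, x⟩
  refine Prod.ext (Subtype.ext ?_) ?_
  · funext i j
    by_cases hi : i = w <;> by_cases hj : j = w <;> simp [upd, hi, hj, ω.2]
  · funext j; simp [upd]

/-- Simultaneous relabelling of rows and columns. -/
def relabel (σ : Equiv.Perm (Fin n)) : Om n ≃ Om n where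
  toFun ω := ⟨fun i j => ω.1 (σ i) (σ j), fun i j => ω.2 _ _⟩
  invFun ω := ⟨fun i j => ω.1 (σ.symm i) (σ.symm j), fun i j => ω.2 _ _⟩
  left_inv ω := by ext; simp
  right_inv ω := by ext; simp

lemma mat_relabel (σ : Equiv.Perm (Fin n)) (ω : Om n) :
    mat (relabel σ ω) = fun i j => mat ω (σ i) (σ j) := rfl

lemma av_relabel (σ : Equiv.Perm (Fin n)) (F : Om n → ℝ) : av (fun ω => F (relabel σ ω)) = av F :=
  av_equiv (relabel σ) F

/-- `prob` is the average over symmetric Boolean arrays: the entries of `ω` below the diagonal are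
irrelevant for `symMat`. -/
lemma prob_eq_av (P : Matrix (Fin n) (Fin n) ℝ → Prop) :
    prob n P = av fun ω : Om n => ind (P (mat ω)) := by
  classical
  let sym : (Fin n → Fin n → Bool) → Om n := fun f =>
    ⟨fun i j => if i ≤ j then f i j else f j i, by
      intro i j
      rcases lt_trichotomy i j with h | h | h
      · simp [h.le, not_le.2 h]
      · simp [h]
      · simp [h.le, not_le.2 h]⟩
  have h1 : prob n P = av fun f : Fin n → Fin n → Bool => ind (P (mat (sym f))) := by
    rw [av_ind_eq]
    unfold prob
    have h2 : (Fintype.card (Fin n → Fin n → Bool) : ℝ) = 2 ^ (n * n) := by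
      simp [pow_mul]
    rw [h2]
    congr 2
    have h3 : ∀ f, mat (sym f) = symMat n f := by
      intro f
      funext i j
      simp only [mat, symMat, sym]
      split_ifs <;> rfl
    simp only [h3]
  rw [h1, av_resample (β := Om n) (fun p : (Fin n → Fin n → Bool) × Om n =>
    ((fun i j => if i ≤ j then p.2.1 i j else p.1 i j), sym p.1))]
  · have h4 : ∀ (f : Fin n → Fin n → Bool) (ω : Om n),
        sym (fun i j => if i ≤ j then ω.1 i j else f i j) = ω := by
      intro f ω
      refine Subtype.ext ?_
      funext i j
      simp only [sym]
      by_cases h : i ≤ j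
      · simp [h]
      · simp [h, (not_le.1 h).le, ω.2 j i]
    simp only [h4]
    rw [av_const]
  · rintro ⟨f, ω⟩
    refine Prod.ext ?_ (Subtype.ext ?_)
    · funext i j
      by_cases h : i ≤ j <;> simp [sym, h]
    · funext i j
      by_cases h : i ≤ j
      · simp [sym, h]
      · simp [sym, h, (not_le.1 h).le, ω.2 j i]

/-- The initial segment `{i | i < t}` of the index set. -/
def lt (n t : ℕ) : Finset (Fin n) := univ.filter fun i => i.val < t

lemma mem_lt {t : ℕ} {i : Fin n} : i ∈ lt n t ↔ i.val < t := by simp [lt]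

lemma lt_succ {t : ℕ} (ht : t < n) : lt n (t + 1) = insert ⟨t, ht⟩ (lt n t) := by
  ext i; simp only [mem_lt, Finset.mem_insert, Fin.ext_iff]; omega

lemma notMem_lt {t : ℕ} (ht : t < n) : (⟨t, ht⟩ : Fin n) ∉ lt n t := by simp [mem_lt]

lemma card_lt {t : ℕ} (ht : t ≤ n) : (lt n t).card = t := by
  unfold lt
  rw [Fin.card_filter_val_lt]
  omega

lemma lt_full : lt n n = univ := by ext i; simp [mem_lt]

lemma lt_mono {s t : ℕ} (h : s ≤ t) : lt n s ⊆ lt n t := fun _ hi =>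
  mem_lt.2 (lt_of_lt_of_le (mem_lt.1 hi) h)

/-- Submatrix permanents avoiding the index `w` are unaffected by resampling row `w`. -/
lemma perF_upd_of_notMem (ω : Om n) {w : Fin n} (x : Fin n → Bool) {A B : Finset (Fin n)}
    (hA : w ∉ A) (hB : w ∉ B) : perF (mat (upd ω w x)) A B = perF (mat ω) A B :=
  perF_congr A B fun _ ha _ hb =>
    mat_upd_ne ω x (fun h => hA (h ▸ ha)) (fun h => hB (h ▸ hb))

lemma perF_upd_row (ω : Om n) {w : Fin n} (x : Fin n → Bool) {A B : Finset (Fin n)}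
    (hA : w ∉ A) (hB : w ∉ B) : perF (mat (upd ω w x)) (insert w A) B =
      ∑ b ∈ B, rad (x b) * perF (mat ω) A (B.erase b) := by
  rw [perF_insert _ hA]
  refine Finset.sum_congr rfl fun b _ => ?_
  rw [mat_upd_left, perF_upd_of_notMem ω x hA (fun h => hB (Finset.mem_of_mem_erase h))]

lemma perF_upd_quad (ω : Om n) {w : Fin n} (x : Fin n → Bool) {A B : Finset (Fin n)}
    (hA : w ∉ A) (hB : w ∉ B) : perF (mat (upd ω w x)) (insert w A) (insert w B) =
      rad (x w) * perF (mat ω) A B +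
      ∑ b ∈ B, ∑ a ∈ A, rad (x b) * rad (x a) * perF (mat ω) (A.erase a) (B.erase b) := by
  rw [perF_quad _ hA hB, mat_upd_left, perF_upd_of_notMem ω x hA hB]
  congr 1
  refine Finset.sum_congr rfl fun b _ => Finset.sum_congr rfl fun a _ => ?_
  rw [mat_upd_left, mat_upd_right, perF_upd_of_notMem ω x
    (fun h => hA (Finset.mem_of_mem_erase h)) (fun h => hB (Finset.mem_of_mem_erase h))]

/-! ### Heavy minors and the potential -/

/-- The threshold at time `t`; it shrinks by `2 / 3` at each step. -/
noncomputable def lam (Λ : ℝ) (t : ℕ) : ℝ := Λ * (2 / 3) ^ t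

lemma lam_pos {Λ : ℝ} (hΛ : 0 < Λ) (t : ℕ) : 0 < lam Λ t := by unfold lam; positivity

lemma lam_succ (Λ : ℝ) (t : ℕ) : lam Λ (t + 1) = 2 / 3 * lam Λ t := by unfold lam; ring

lemma lam_succ_le {Λ : ℝ} (hΛ : 0 < Λ) (t : ℕ) : lam Λ (t + 1) ≤ lam Λ t := by
  rw [lam_succ]; linarith [lam_pos hΛ t]

lemma lam_anti {Λ : ℝ} (hΛ : 0 < Λ) {s t : ℕ} (h : s ≤ t) : lam Λ t ≤ lam Λ s :=
  antitone_nat_of_succ_le (lam_succ_le hΛ) h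

/-- At time `t`, deleting the rows `I` and the columns `J` from the leading `t × t` block leaves a
submatrix with permanent at least `lam Λ t` in absolute value; moreover `I` and `J` are distinct
subsets of the same size. -/
def Adm (Λ : ℝ) (t : ℕ) (ω : Om n) (I J : Finset (Fin n)) : Prop :=
  I ⊆ lt n t ∧ J ⊆ lt n t ∧ I.card = J.card ∧ 1 ≤ (I \ J).card ∧
    lam Λ t ≤ |perF (mat ω) (lt n t \ I) (lt n t \ J)|

/-- The weight of a pair of deleted sets. The subtraction is truncated: only an excess of
`#(I \ J)` over `2` is penalized. -/
def wt (I J : Finset (Fin n)) : ℕ := I.card + 3 * ((I \ J).card - 2)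

/-- Some admissible pair has weight at most `v`. -/
def HV (Λ : ℝ) (t : ℕ) (ω : Om n) (v : ℕ) : Prop := ∃ I J, Adm Λ t ω I J ∧ wt I J ≤ v

lemma HV.mono {Λ : ℝ} {t : ℕ} {ω : Om n} {v v' : ℕ} (h : HV Λ t ω v) (hv : v ≤ v') :
    HV Λ t ω v' := by
  obtain ⟨I, J, h1, h2⟩ := h
  exact ⟨I, J, h1, h2.trans hv⟩

open Classical in
/-- The least weight of an admissible pair, with value `4 * n + 1`, which exceeds all weights, if
there is none. -/
noncomputable def V (Λ : ℝ) (t : ℕ) (ω : Om n) : ℕ :=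
  Nat.find (⟨4 * n + 1, Or.inr rfl⟩ : ∃ v, HV Λ t ω v ∨ v = 4 * n + 1)

lemma V_le_cap (Λ : ℝ) (t : ℕ) (ω : Om n) : V Λ t ω ≤ 4 * n + 1 := by
  classical
  exact Nat.find_min' _ (Or.inr rfl)

lemma V_le {Λ : ℝ} {t : ℕ} {ω : Om n} {v : ℕ} (h : HV Λ t ω v) : V Λ t ω ≤ v := by
  classical
  exact Nat.find_min' _ (Or.inl h)

lemma HV_V {Λ : ℝ} {t : ℕ} {ω : Om n} (h : V Λ t ω ≠ 4 * n + 1) : HV Λ t ω (V Λ t ω) := by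
  classical
  exact (Nat.find_spec (⟨4 * n + 1, Or.inr rfl⟩ : ∃ v, HV Λ t ω v ∨ v = 4 * n + 1)).resolve_right h

lemma exists_adm {Λ : ℝ} {t : ℕ} {ω : Om n} (h : V Λ t ω ≠ 4 * n + 1) :
    ∃ I J, Adm Λ t ω I J ∧ wt I J = V Λ t ω := by
  obtain ⟨I, J, h1, h2⟩ := HV_V h
  exact ⟨I, J, h1, le_antisymm h2 (V_le ⟨I, J, h1, le_rfl⟩)⟩

lemma V_pos {Λ : ℝ} {t : ℕ} {ω : Om n} : 1 ≤ V Λ t ω := by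
  by_cases h : V Λ t ω = 4 * n + 1
  · omega
  · obtain ⟨I, J, h1, h2⟩ := exists_adm h
    have := h1.2.2.2.1
    have h3 : (I \ J).card ≤ I.card := Finset.card_le_card Finset.sdiff_subset
    unfold wt at h2
    omega

lemma V_eq_of_HV {Λ : ℝ} {t : ℕ} {ω ω' : Om n} (h : ∀ v, HV Λ t ω v ↔ HV Λ t ω' v) :
    V Λ t ω = V Λ t ω' := by
  have key : ∀ ω ω' : Om n, (∀ v, HV Λ t ω v ↔ HV Λ t ω' v) → V Λ t ω ≤ V Λ t ω' := by
    intro ω ω' h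
    by_cases hc : V Λ t ω' = 4 * n + 1
    · rw [hc]; exact V_le_cap _ _ _
    · exact V_le ((h _).2 (HV_V hc))
  exact le_antisymm (key ω ω' h) (key ω' ω fun v => (h v).symm)

lemma Adm_congr {Λ : ℝ} {t : ℕ} {ω ω' : Om n}
    (h : ∀ i ∈ lt n t, ∀ j ∈ lt n t, mat ω i j = mat ω' i j) (I J : Finset (Fin n)) :
    Adm Λ t ω I J ↔ Adm Λ t ω' I J := by
  unfold Adm
  rw [perF_congr (lt n t \ I) (lt n t \ J) fun a ha b hb =>
    h a (Finset.sdiff_subset ha) b (Finset.sdiff_subset hb)]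

lemma V_congr {Λ : ℝ} {t : ℕ} {ω ω' : Om n}
    (h : ∀ i ∈ lt n t, ∀ j ∈ lt n t, mat ω i j = mat ω' i j) : V Λ t ω = V Λ t ω' :=
  V_eq_of_HV fun v => by unfold HV; simp only [Adm_congr h]

/-- `V` at time `t` only sees the leading `t × t` block. -/
lemma V_upd {Λ : ℝ} {t : ℕ} (ω : Om n) {w : Fin n} (hw : w ∉ lt n t) (x : Fin n → Bool) :
    V Λ t (upd ω w x) = V Λ t ω :=
  V_congr fun _ hi _ hj => mat_upd_ne ω x (fun h => hw (h ▸ hi)) (fun h => hw (h ▸ hj))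

lemma lt_map {t : ℕ} {σ : Equiv.Perm (Fin n)} (hσ : ∀ i, σ i ∈ lt n t ↔ i ∈ lt n t) :
    (lt n t).map σ.toEmbedding = lt n t := by
  ext i
  rw [Finset.mem_map_equiv, ← hσ, Equiv.apply_symm_apply]

lemma Adm_relabel {Λ : ℝ} {t : ℕ} {σ : Equiv.Perm (Fin n)}
    (hσ : ∀ i, σ i ∈ lt n t ↔ i ∈ lt n t) {ω : Om n} {I J : Finset (Fin n)} :
    Adm Λ t (relabel σ ω) I J ↔ Adm Λ t ω (I.map σ.toEmbedding) (J.map σ.toEmbedding) := by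
  unfold Adm
  have h1 : ∀ I : Finset (Fin n), I.map σ.toEmbedding ⊆ lt n t ↔ I ⊆ lt n t := by
    intro I
    conv_lhs => rw [← lt_map hσ]
    exact Finset.map_subset_map
  rw [h1, h1, Finset.card_map, Finset.card_map, ← Finset.map_sdiff, Finset.card_map, mat_relabel,
    perF_map, Finset.map_sdiff, Finset.map_sdiff, lt_map hσ]

lemma wt_map (σ : Equiv.Perm (Fin n)) (I J : Finset (Fin n)) :
    wt (I.map σ.toEmbedding) (J.map σ.toEmbedding) = wt I J := by
  unfold wt; rw [← Finset.map_sdiff, Finset.card_map, Finset.card_map]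

lemma V_relabel {Λ : ℝ} {t : ℕ} {σ : Equiv.Perm (Fin n)}
    (hσ : ∀ i, σ i ∈ lt n t ↔ i ∈ lt n t) (ω : Om n) : V Λ t (relabel σ ω) = V Λ t ω := by
  refine V_eq_of_HV fun v => ⟨?_, ?_⟩
  · rintro ⟨I, J, h1, h2⟩
    exact ⟨_, _, (Adm_relabel hσ).1 h1, by rwa [wt_map]⟩
  · rintro ⟨I, J, h1, h2⟩
    have e : ∀ I : Finset (Fin n), (I.map σ.symm.toEmbedding).map σ.toEmbedding = I := by
      intro I; ext i; simp [Finset.mem_map_equiv]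
    refine ⟨I.map σ.symm.toEmbedding, J.map σ.symm.toEmbedding, (Adm_relabel hσ).2 ?_, ?_⟩
    · rwa [e, e]
    · rwa [wt_map]

end

section

variable {n : ℕ}

/-! ### One-step gains -/

/-- If every assignment can be modified on `S` to become good, good has probability at least
`2 ^ (-#S)`. -/
lemma one_good {ι : Type*} [Fintype ι] [DecidableEq ι] (S : Finset ι) (good : (ι → Bool) → Prop)
    (h : ∀ x : ι → Bool, ∃ y : ι → Bool, good y ∧ ∀ i ∉ S, y i = x i) :
    (1 / 2) ^ S.card ≤ av (fun x => ind (good x)) := by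
  classical
  rw [av_ind_eq, card_cube]
  have h1 : Fintype.card ((Sᶜ : Finset ι) → Bool) ≤ (univ.filter good).card := by
    rw [← Finset.card_univ]
    refine Finset.card_le_card_of_surjOn (fun x i => x i) ?_
    intro z _
    obtain ⟨y, hy, hy'⟩ := h (fun i => if hi : i ∈ (Sᶜ : Finset ι) then z ⟨i, hi⟩ else true)
    refine ⟨y, by simpa using hy, ?_⟩
    funext i
    have := hy' i (Finset.mem_compl.1 i.2)
    rw [dif_pos i.2] at this
    exact this
  have h2 : Fintype.card ((Sᶜ : Finset ι) → Bool) = 2 ^ (Fintype.card ι - S.card) := by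
    simp
  rw [h2] at h1
  have h3 : S.card ≤ Fintype.card ι := Finset.card_le_univ S
  rw [le_div_iff₀ (by positivity)]
  calc (1 / 2) ^ S.card * 2 ^ Fintype.card ι = (2 : ℝ) ^ (Fintype.card ι - S.card) := by
        conv_lhs => rw [← Nat.sub_add_cancel h3, pow_add]
        rw [one_div, inv_pow]; field_simp
    _ ≤ ((univ.filter good).card : ℝ) := by exact_mod_cast h1

lemma rad_sub_abs {b c : Bool} (h : b ≠ c) : |rad b - rad c| = 2 := by
  cases b <;> cases c <;> simp_all [rad] <;> norm_num

/-- Keeping the deleted sets: the fresh diagonal entry alone makes this succeed half of the time. -/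
lemma diag_gain (ω : Om n) {w : Fin n} {A B : Finset (Fin n)} (hA : w ∉ A) (hB : w ∉ B) {r : ℝ}
    (hr : r ≤ |perF (mat ω) A B|) :
    1 / 2 ≤ av fun x => ind (r ≤ |perF (mat (upd ω w x)) (insert w A) (insert w B)|) := by
  have h1 : av (fun x => ind (¬ r ≤ |perF (mat (upd ω w x)) (insert w A) (insert w B)|)) ≤
      (1 / 2) ^ ({w} : Finset (Fin n)).card := by
    refine one_bad {w} _ fun x y hx hy hxy => ?_
    have hxy' : ∀ i, i ≠ w → x i = y i := fun i hi => hxy i (by simpa using hi)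
    by_contra hne
    have hw : x w ≠ y w := by
      intro h
      apply hne; funext i
      by_cases hi : i = w
      · rw [hi, h]
      · exact hxy' i hi
    rw [perF_upd_quad ω x hA hB, not_le] at hx
    rw [perF_upd_quad ω y hA hB, not_le] at hy
    have e : ∑ b ∈ B, ∑ a ∈ A, rad (x b) * rad (x a) * perF (mat ω) (A.erase a) (B.erase b) =
        ∑ b ∈ B, ∑ a ∈ A, rad (y b) * rad (y a) * perF (mat ω) (A.erase a) (B.erase b) := by
      refine Finset.sum_congr rfl fun b hb => Finset.sum_congr rfl fun a ha => ?_
      rw [hxy' b (fun h => hB (h ▸ hb)), hxy' a (fun h => hA (h ▸ ha))]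
    rw [e] at hx
    have h2 := rad_sub_abs hw
    have h3 : |(rad (x w) - rad (y w)) * perF (mat ω) A B| = 2 * |perF (mat ω) A B| := by
      rw [abs_mul, h2]
    have h4 := abs_sub (rad (x w) * perF (mat ω) A B +
        ∑ b ∈ B, ∑ a ∈ A, rad (y b) * rad (y a) * perF (mat ω) (A.erase a) (B.erase b))
        (rad (y w) * perF (mat ω) A B +
        ∑ b ∈ B, ∑ a ∈ A, rad (y b) * rad (y a) * perF (mat ω) (A.erase a) (B.erase b))
    rw [add_sub_add_right_eq_sub, ← sub_mul, h3] at h4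
    linarith
  simp only [ind_not] at h1
  rw [av_sub, av_const] at h1
  norm_num at h1 ⊢
  linarith

/-- Adding back one row `i ∈ I₁` and one column `j ∈ J₁`, where `J₁` consists of indices deleted on
both sides: some choice succeeds, except for at most one value of `x` on `I₁` and then at most one
value of `x` on `J₁`. -/
lemma fill_gain (ω : Om n) {w : Fin n} {A B I₁ J₁ : Finset (Fin n)} (hA : w ∉ A) (hB : w ∉ B)
    (hwI : w ∉ I₁) (hwJ : w ∉ J₁) (hIA : Disjoint I₁ A) (hJA : Disjoint J₁ A) (hJB : Disjoint J₁ B)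
    (hIJ : Disjoint I₁ J₁) {r : ℝ} (hr : r ≤ |perF (mat ω) A B|) :
    (1 - (1 / 2) ^ I₁.card) * (1 - (1 / 2) ^ J₁.card) ≤ av fun x => ind (∃ i ∈ I₁, ∃ j ∈ J₁,
      r ≤ |perF (mat (upd ω w x)) (insert w (insert i A)) (insert w (insert j B))|) := by
  let l : Fin n → (Fin n → Bool) → ℝ := fun i x =>
    ∑ a ∈ insert i A, rad (x a) * perF (mat ω) ((insert i A).erase a) B
  -- the linear forms `l i`, `i ∈ I₁`, are not all small
  have h1 : av (fun x => ind (¬ ∃ i ∈ I₁, r ≤ |l i x|)) ≤ (1 / 2) ^ I₁.card := by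
    refine one_bad I₁ _ fun x y hx hy hxy => ?_
    push Not at hx hy
    funext i
    by_cases hi : i ∈ I₁
    · by_contra hne
      have hiA : i ∉ A := Finset.disjoint_left.1 hIA hi
      have e : l i x - l i y = (rad (x i) - rad (y i)) * perF (mat ω) A B := by
        simp only [l]
        rw [Finset.sum_insert hiA, Finset.sum_insert hiA, Finset.erase_insert hiA]
        have : ∑ a ∈ A, rad (x a) * perF (mat ω) ((insert i A).erase a) B =
            ∑ a ∈ A, rad (y a) * perF (mat ω) ((insert i A).erase a) B :=
          Finset.sum_congr rfl fun a ha => by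
            rw [hxy a (fun h => Finset.disjoint_left.1 hIA h ha)]
        rw [this]; ring
      have h2 := abs_sub (l i x) (l i y)
      rw [e, abs_mul, rad_sub_abs hne] at h2
      linarith [hx i hi, hy i hi]
    · exact hxy i hi
  have hl : ∀ i ∈ I₁, ∀ x y, l i (J₁.piecewise y x) = l i x := by
    intro i hi x y
    refine Finset.sum_congr rfl fun a ha => ?_
    have : a ∉ J₁ := by
      rcases Finset.mem_insert.1 ha with rfl | ha
      · exact Finset.disjoint_left.1 hIJ hi
      · exact fun h => Finset.disjoint_left.1 hJA h ha
    rw [Finset.piecewise_eq_of_notMem _ _ _ this]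
  have hf : ∀ i ∈ I₁, ∀ j ∈ J₁, ∀ x y, (∀ k ∉ J₁, x k = y k) →
      perF (mat (upd ω w x)) (insert w (insert i A)) (insert w (insert j B)) -
      perF (mat (upd ω w y)) (insert w (insert i A)) (insert w (insert j B)) =
      (rad (x j) - rad (y j)) * l i x := by
    intro i hi j hj x y hxy
    have hwA : w ∉ insert i A := by
      rw [Finset.mem_insert]; rintro (rfl | h); exacts [hwI hi, hA h]
    have hwB : w ∉ insert j B := by
      rw [Finset.mem_insert]; rintro (rfl | h); exacts [hwJ hj, hB h]
    have hjB : j ∉ B := Finset.disjoint_left.1 hJB hj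
    have hxA : ∀ a ∈ insert i A, x a = y a := by
      intro a ha
      refine hxy a ?_
      rcases Finset.mem_insert.1 ha with rfl | ha
      · exact Finset.disjoint_left.1 hIJ hi
      · exact fun h => Finset.disjoint_left.1 hJA h ha
    have hxB : ∀ b ∈ B, x b = y b := fun b hb => hxy b fun h => Finset.disjoint_left.1 hJB h hb
    rw [perF_upd_quad ω x hwA hwB, perF_upd_quad ω y hwA hwB, Finset.sum_insert hjB,
      Finset.sum_insert hjB, Finset.erase_insert hjB, hxy w hwJ]
    have e1 : ∑ a ∈ insert i A, rad (x j) * rad (x a) * perF (mat ω) ((insert i A).erase a) B =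
        rad (x j) * l i x := by
      simp only [l]; rw [Finset.mul_sum]; exact Finset.sum_congr rfl fun a _ => by ring
    have e2 : ∑ a ∈ insert i A, rad (y j) * rad (y a) * perF (mat ω) ((insert i A).erase a) B =
        rad (y j) * l i x := by
      simp only [l]; rw [Finset.mul_sum]
      exact Finset.sum_congr rfl fun a ha => by rw [hxA a ha]; ring
    have e3 : ∑ b ∈ B, ∑ a ∈ insert i A, rad (x b) * rad (x a) *
          perF (mat ω) ((insert i A).erase a) ((insert j B).erase b) =
        ∑ b ∈ B, ∑ a ∈ insert i A, rad (y b) * rad (y a) *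
          perF (mat ω) ((insert i A).erase a) ((insert j B).erase b) :=
      Finset.sum_congr rfl fun b hb => Finset.sum_congr rfl fun a ha => by rw [hxA a ha, hxB b hb]
    rw [e1, e2, e3]; ring
  have h3 : ∀ x, ind (∃ i ∈ I₁, r ≤ |l i x|) * (1 - (1 / 2) ^ J₁.card) ≤
      av fun y => ind (∃ i ∈ I₁, ∃ j ∈ J₁, r ≤ |perF (mat (upd ω w (J₁.piecewise y x)))
        (insert w (insert i A)) (insert w (insert j B))|) := by
    intro x
    by_cases hx : ∃ i ∈ I₁, r ≤ |l i x|
    · rw [ind_pos hx, one_mul]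
      obtain ⟨i, hi, hix⟩ := hx
      have h4 : av (fun y => ind (¬ ∃ i ∈ I₁, ∃ j ∈ J₁, r ≤
          |perF (mat (upd ω w (J₁.piecewise y x))) (insert w (insert i A)) (insert w (insert j B))|))
          ≤ (1 / 2) ^ J₁.card := by
        refine one_bad J₁ _ fun y z hy hz hyz => ?_
        push Not at hy hz
        funext j
        by_cases hj : j ∈ J₁
        · by_contra hne
          have h5 := hf i hi j hj (J₁.piecewise y x) (J₁.piecewise z x) (fun k hk => by
            rw [Finset.piecewise_eq_of_notMem _ _ _ hk, Finset.piecewise_eq_of_notMem _ _ _ hk])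
          rw [hl i hi, Finset.piecewise_eq_of_mem _ _ _ hj, Finset.piecewise_eq_of_mem _ _ _ hj]
            at h5
          have h6 := abs_sub
            (perF (mat (upd ω w (J₁.piecewise y x))) (insert w (insert i A)) (insert w (insert j B)))
            (perF (mat (upd ω w (J₁.piecewise z x))) (insert w (insert i A)) (insert w (insert j B)))
          rw [h5, abs_mul, rad_sub_abs hne] at h6
          linarith [hy i hi j hj, hz i hi j hj]
        · exact hyz j hj
      simp only [ind_not] at h4
      rw [av_sub, av_const] at h4
      linarith
    · rw [ind_neg hx, zero_mul]; exact av_nonneg fun _ => ind_nonneg _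
  rw [av_piecewise J₁]
  refine le_trans ?_ (av_mono h3)
  rw [av_mul_right]
  simp only [ind_not] at h1
  rw [av_sub, av_const] at h1
  have h7 : (1 / 2 : ℝ) ^ J₁.card ≤ 1 := pow_le_one₀ (by norm_num) (by norm_num)
  exact mul_le_mul_of_nonneg_right (by linarith) (by linarith)

/-- A mixed coefficient `x p * x q` of the quadratic expansion bounds the new permanent from below
for at least one of the four choices of `x p` and `x q`. -/
lemma mixed_gain (ω : Om n) {w p q : Fin n} {A B : Finset (Fin n)} (hA : w ∉ A) (hB : w ∉ B)
    (hpq : p ≠ q) (hpA : p ∈ A) (hpB : p ∈ B) (hqA : q ∈ A) (hqB : q ∈ B) {r : ℝ}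
    (hr : r ≤ |perF (mat ω) (A.erase p) (B.erase q) + perF (mat ω) (A.erase q) (B.erase p)|) :
    1 / 4 ≤ av fun x => ind (r ≤ |perF (mat (upd ω w x)) (insert w A) (insert w B)|) := by
  have h1 : (1 / 4 : ℝ) = (1 / 2) ^ ({p, q} : Finset (Fin n)).card := by
    rw [Finset.card_pair hpq]; norm_num
  rw [h1]
  refine one_good {p, q} _ fun x => ?_
  let X : Bool → Bool → Fin n → Bool := fun s u => Function.update (Function.update x p s) q u
  let f : Bool → Bool → ℝ := fun s u => perF (mat (upd ω w (X s u))) (insert w A) (insert w B)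
  have hXp : ∀ s u, X s u p = s := by intro s u; simp [X, hpq]
  have hXq : ∀ s u, X s u q = u := by intro s u; simp [X]
  have hXo : ∀ s u i, i ≠ p → i ≠ q → X s u i = x i := by intro s u i h1 h2; simp [X, h1, h2]
  have key : f true true - f true false - f false true + f false false =
      4 * (perF (mat ω) (A.erase p) (B.erase q) + perF (mat ω) (A.erase q) (B.erase p)) := by
    have hwp : w ≠ p := fun h => hA (h ▸ hpA)
    have hwq : w ≠ q := fun h => hA (h ▸ hqA)
    have term : ∀ a b : Fin n,
        rad (X true true b) * rad (X true true a) - rad (X true false b) * rad (X true false a)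
        - rad (X false true b) * rad (X false true a)
        + rad (X false false b) * rad (X false false a) =
        (if b = q then (if a = p then 4 else 0) else 0) +
        (if b = p then (if a = q then 4 else 0) else 0) := by
      intro a b
      by_cases hbq : b = q
      · subst hbq
        by_cases hap : a = p
        · subst hap; simp [hXp, hXq, hpq.symm, rad]; norm_num
        · by_cases haq : a = b
          · subst haq; simp [hXq, hap, rad]
          · simp [hXq, hXo _ _ a hap haq, hap, hpq.symm, rad]
      · by_cases hbp : b = p
        · subst hbp
          by_cases haq : a = q
          · subst haq; simp [hXp, hXq, hbq, rad]; norm_num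
          · by_cases hap : a = b
            · subst hap; simp [hXp, hbq, rad]
            · simp [hXp, hXo _ _ a hap haq, haq, hpq, rad]
        · by_cases hap : a = p
          · subst hap; simp [hXp, hXo _ _ b hbp hbq, hbq, hbp, rad]
          · by_cases haq : a = q
            · subst haq; simp [hXq, hXo _ _ b hbp hbq, hbq, hbp, rad]
            · simp [hXo _ _ b hbp hbq, hXo _ _ a hap haq, hbq, hbp]
    simp only [f]
    rw [perF_upd_quad ω _ hA hB, perF_upd_quad ω _ hA hB, perF_upd_quad ω _ hA hB,
      perF_upd_quad ω _ hA hB]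
    simp only [hXo _ _ w hwp hwq]
    have h2 : ∑ b ∈ B, ∑ a ∈ A, ((if b = q then (if a = p then 4 else 0) else 0) +
        (if b = p then (if a = q then 4 else 0) else 0)) *
          perF (mat ω) (A.erase a) (B.erase b) =
        4 * (perF (mat ω) (A.erase p) (B.erase q) + perF (mat ω) (A.erase q) (B.erase p)) := by
      simp only [add_mul, Finset.sum_add_distrib, ite_mul, zero_mul, Finset.sum_ite_irrel,
        Finset.sum_const_zero]
      simp [hpA, hpB, hqA, hqB]
      ring
    rw [← h2]
    simp only [← term, sub_mul, add_mul, Finset.sum_add_distrib, Finset.sum_sub_distrib]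
    ring
  have hX : ∀ s u, ∀ i ∉ ({p, q} : Finset (Fin n)), X s u i = x i := by
    intro s u i hi
    simp only [Finset.mem_insert, Finset.mem_singleton, not_or] at hi
    exact hXo s u i hi.1 hi.2
  by_contra hcon
  push Not at hcon
  have hlt : ∀ s u, |f s u| < r := by
    intro s u
    by_contra h
    obtain ⟨i, hi, hi'⟩ := hcon (X s u) (not_lt.1 h)
    exact hi' (hX s u i hi)
  have a1 := abs_lt.1 (hlt true true)
  have a2 := abs_lt.1 (hlt true false)
  have a3 := abs_lt.1 (hlt false true)
  have a4 := abs_lt.1 (hlt false false)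
  rcases le_abs.1 hr with h | h <;> linarith [a1.1, a1.2, a2.1, a2.2, a3.1, a3.2, a4.1, a4.2]

end

section

variable {n : ℕ}

/-! ### Drift of the weight -/

lemma lt_succ_sdiff {t : ℕ} (ht : t < n) {I : Finset (Fin n)} (hI : I ⊆ lt n t) :
    lt n (t + 1) \ I = insert ⟨t, ht⟩ (lt n t \ I) := by
  rw [lt_succ ht, Finset.insert_sdiff_of_notMem]
  exact fun h => notMem_lt ht (hI h)

lemma adm_step {Λ : ℝ} {t : ℕ} (ht : t < n) (ω : Om n) {I J : Finset (Fin n)}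
    (hI : I ⊆ lt n t) (hJ : J ⊆ lt n t) (hIJ : I.card = J.card) (h1 : 1 ≤ (I \ J).card)
    (h2 : 2 / 3 * lam Λ t ≤
      |perF (mat ω) (insert ⟨t, ht⟩ (lt n t \ I)) (insert ⟨t, ht⟩ (lt n t \ J))|) :
    Adm Λ (t + 1) ω I J := by
  refine ⟨hI.trans (lt_mono (Nat.le_succ t)), hJ.trans (lt_mono (Nat.le_succ t)), hIJ, h1, ?_⟩
  rw [lt_succ_sdiff ht hI, lt_succ_sdiff ht hJ, lam_succ]
  exact h2

/-- Deleting the new index on both sides keeps a heavy minor. -/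
lemma adm_wait {Λ : ℝ} (hΛ : 0 < Λ) {t : ℕ} (ht : t < n) {ω : Om n} {I J : Finset (Fin n)}
    (h : Adm Λ t ω I J) : Adm Λ (t + 1) ω (insert ⟨t, ht⟩ I) (insert ⟨t, ht⟩ J) ∧
      wt (insert ⟨t, ht⟩ I) (insert ⟨t, ht⟩ J) = wt I J + 1 := by
  obtain ⟨hI, hJ, hc, h1, h2⟩ := h
  have hwI : (⟨t, ht⟩ : Fin n) ∉ I := fun h => notMem_lt ht (hI h)
  have hwJ : (⟨t, ht⟩ : Fin n) ∉ J := fun h => notMem_lt ht (hJ h)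
  have hsd : insert (⟨t, ht⟩ : Fin n) I \ insert ⟨t, ht⟩ J = I \ J := by
    rw [Finset.insert_sdiff_insert, Finset.sdiff_insert_of_notMem hwI]
  have hlt : ∀ K : Finset (Fin n),
      lt n (t + 1) \ insert (⟨t, ht⟩ : Fin n) K = lt n t \ K := by
    intro K
    rw [lt_succ ht, Finset.insert_sdiff_insert, Finset.sdiff_insert_of_notMem (notMem_lt ht)]
  refine ⟨⟨?_, ?_, ?_, ?_, ?_⟩, ?_⟩
  · rw [lt_succ ht]; exact Finset.insert_subset_insert _ hI
  · rw [lt_succ ht]; exact Finset.insert_subset_insert _ hJ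
  · rw [Finset.card_insert_of_notMem hwI, Finset.card_insert_of_notMem hwJ, hc]
  · rwa [hsd]
  · rw [hlt, hlt]
    exact (lam_succ_le hΛ t).trans h2
  · unfold wt
    rw [hsd, Finset.card_insert_of_notMem hwI]; omega

lemma V_succ_le {Λ : ℝ} (hΛ : 0 < Λ) {t : ℕ} (ht : t < n) (ω : Om n) (x : Fin n → Bool) :
    V Λ (t + 1) (upd ω ⟨t, ht⟩ x) ≤ V Λ t ω + 1 := by
  rw [← V_upd (Λ := Λ) ω (notMem_lt ht) x]
  by_cases hV : V Λ t (upd ω ⟨t, ht⟩ x) = 4 * n + 1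
  · rw [hV]; exact (V_le_cap _ _ _).trans (Nat.le_succ _)
  obtain ⟨I, J, h, hw⟩ := exists_adm hV
  obtain ⟨h1, h2⟩ := adm_wait hΛ ht h
  exact V_le ⟨_, _, h1, by omega⟩

lemma V_ne_cap {Λ : ℝ} {t : ℕ} {ω : Om n} {I J : Finset (Fin n)} (h : Adm Λ t ω I J) :
    V Λ t ω ≠ 4 * n + 1 := by
  have h1 := V_le ⟨I, J, h, le_rfl⟩
  have h2 : I.card ≤ n := by simpa using Finset.card_le_univ I
  have h3 : (I \ J).card ≤ n := by simpa using Finset.card_le_univ (I \ J)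
  unfold wt at h1
  omega

/-- The event that no minor is heavy can only shrink with time. -/
lemma V_cap_mono {Λ : ℝ} (hΛ : 0 < Λ) {s t : ℕ} (hst : s ≤ t) (ht : t ≤ n) {ω : Om n}
    (h : V Λ t ω = 4 * n + 1) : V Λ s ω = 4 * n + 1 := by
  induction t, hst using Nat.le_induction with
  | base => exact h
  | succ t hst ih =>
    refine ih (by omega) ?_
    by_contra hV
    obtain ⟨I, J, h1, _⟩ := exists_adm hV
    exact V_ne_cap (adm_wait hΛ (by omega) h1).1 h

/-- Adding back a row from `I₁` and a column from `J₁` yields an admissible pair with one index less on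
each side, whose weight is its size since `#(I \ J)` stays at most `2`. -/
lemma fill_HV {Λ : ℝ} (hΛ : 0 < Λ) {t : ℕ} (ht : t < n) {ω : Om n} {I J I₁ J₁ : Finset (Fin n)}
    (h : Adm Λ t ω I J) (hI₁ : I₁ ⊆ I) (hJ₁ : J₁ ⊆ I ∩ J) (hd : Disjoint I₁ J₁)
    (he : ∀ i ∈ I₁, ∀ j ∈ J₁, 1 ≤ (I.erase i \ J.erase j).card ∧
      (I.erase i \ J.erase j).card ≤ 2) :
    (1 - (1 / 2) ^ I₁.card) * (1 - (1 / 2) ^ J₁.card) ≤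
      av fun x => ind (HV Λ (t + 1) (upd ω ⟨t, ht⟩ x) (I.card - 1)) := by
  obtain ⟨hI, hJ, hc, h1, h2⟩ := h
  have hw := notMem_lt ht
  have hJI : J₁ ⊆ I := hJ₁.trans Finset.inter_subset_left
  have hJJ : J₁ ⊆ J := hJ₁.trans Finset.inter_subset_right
  refine (fill_gain ω (w := ⟨t, ht⟩) (A := lt n t \ I) (B := lt n t \ J) (I₁ := I₁) (J₁ := J₁)
    (fun h => hw (Finset.sdiff_subset h)) (fun h => hw (Finset.sdiff_subset h))
    (fun h => hw (hI (hI₁ h))) (fun h => hw (hI (hJI h)))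
    (Finset.disjoint_left.2 fun a ha hb => (Finset.mem_sdiff.1 hb).2 (hI₁ ha))
    (Finset.disjoint_left.2 fun a ha hb => (Finset.mem_sdiff.1 hb).2 (hJI ha))
    (Finset.disjoint_left.2 fun a ha hb => (Finset.mem_sdiff.1 hb).2 (hJJ ha)) hd h2).trans ?_
  refine av_mono fun x => ind_mono ?_
  rintro ⟨i, hi, j, hj, hij⟩
  obtain ⟨e1, e2⟩ := he i hi j hj
  refine ⟨I.erase i, J.erase j, adm_step ht _ ((Finset.erase_subset _ _).trans hI)
    ((Finset.erase_subset _ _).trans hJ) ?_ e1 ?_, ?_⟩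
  · rw [Finset.card_erase_of_mem (hI₁ hi), Finset.card_erase_of_mem (hJJ hj), hc]
  · have s1 : lt n t \ I.erase i = insert i (lt n t \ I) :=
      Finset.sdiff_erase (hI (hI₁ hi))
    have s2 : lt n t \ J.erase j = insert j (lt n t \ J) := Finset.sdiff_erase (hJ (hJJ hj))
    rw [s1, s2]
    linarith [lam_pos hΛ t]
  · unfold wt
    rw [Finset.card_erase_of_mem (hI₁ hi)]; omega

/-- Let `i ∈ I \ J` and let `j`, `j'` be distinct elements of `J \ I`. The minor of `(I, J)` and the two
minors obtained by exchanging `i` with `j`, respectively `j'`, cannot have all three pairwise sums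
below `2 / 3` of the threshold; each pairwise sum is a mixed coefficient of a minor at time `t + 1`
with one index less deleted on each side. -/
lemma triangle_HV {Λ : ℝ} {t : ℕ} (ht : t < n) {ω : Om n} {I J : Finset (Fin n)}
    (h : Adm Λ t ω I J) (he : 2 ≤ (I \ J).card) :
    1 / 4 ≤ av fun x => ind (HV Λ (t + 1) (upd ω ⟨t, ht⟩ x)
      (I.card - 1 + 3 * ((I \ J).card - 1 - 2))) := by
  obtain ⟨hI, hJ, hc, h1, h2⟩ := h
  have hw := notMem_lt ht
  have he' : 2 ≤ (J \ I).card := by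
    rwa [← Finset.card_sdiff_comm hc]
  obtain ⟨i, hi⟩ := Finset.card_pos.1 (lt_of_lt_of_le one_pos h1)
  obtain ⟨j, hj, j', hj', hjj⟩ := Finset.one_lt_card.1 he'
  rw [Finset.mem_sdiff] at hi hj hj'
  have hit := hI hi.1
  have hjt := hJ hj.1
  have hjt' := hJ hj'.1
  have hij' : i ≠ j' := fun h => hi.2 (h ▸ hj'.1)
  have hij : i ≠ j := fun h => hi.2 (h ▸ hj.1)
  -- generic step: from a heavy mixed coefficient to `HV`
  have step : ∀ (J' : Finset (Fin n)) (p q : Fin n), J' ⊆ lt n t → J'.card = J.card - 1 →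
      (I.erase i \ J').card = (I \ J).card - 1 → p ≠ q → p ∈ lt n t → q ∈ lt n t →
      p ∉ I.erase i → q ∉ I.erase i → p ∉ J' → q ∉ J' →
      2 / 3 * lam Λ t ≤ |perF (mat ω) ((lt n t \ I.erase i).erase p) ((lt n t \ J').erase q) +
        perF (mat ω) ((lt n t \ I.erase i).erase q) ((lt n t \ J').erase p)| →
      1 / 4 ≤ av fun x => ind (HV Λ (t + 1) (upd ω ⟨t, ht⟩ x)
        (I.card - 1 + 3 * ((I \ J).card - 1 - 2))) := by
    intro J' p q hJ' hc' he'' hpq hp hq hpI hqI hpJ hqJ hr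
    refine (mixed_gain ω (w := ⟨t, ht⟩) (fun h => hw (Finset.sdiff_subset h))
      (fun h => hw (Finset.sdiff_subset h)) hpq (Finset.mem_sdiff.2 ⟨hp, hpI⟩)
      (Finset.mem_sdiff.2 ⟨hp, hpJ⟩) (Finset.mem_sdiff.2 ⟨hq, hqI⟩)
      (Finset.mem_sdiff.2 ⟨hq, hqJ⟩) hr).trans ?_
    refine av_mono fun x => ind_mono fun hx => ?_
    refine ⟨I.erase i, J', adm_step ht _ ((Finset.erase_subset _ _).trans hI) hJ' ?_ ?_ hx, ?_⟩
    · rw [Finset.card_erase_of_mem hi.1, hc', hc]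
    · omega
    · unfold wt; rw [he'', Finset.card_erase_of_mem hi.1]
  have hce : ((I \ J).erase i).card = (I \ J).card - 1 :=
    Finset.card_erase_of_mem (Finset.mem_sdiff.2 hi)
  set q1 := perF (mat ω) (lt n t \ I) (lt n t \ J) with hq1
  set q2 := perF (mat ω) (lt n t \ insert j (I.erase i)) (lt n t \ insert i (J.erase j)) with hq2
  set q3 := perF (mat ω) (lt n t \ insert j' (I.erase i)) (lt n t \ insert i (J.erase j')) with hq3
  have hs : ∀ (S : Finset (Fin n)) (a : Fin n), (lt n t \ S).erase a = lt n t \ insert a S := by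
    intro S a; rw [Finset.sdiff_insert]
  have hIi : insert i (I.erase i) = I := Finset.insert_erase hi.1
  have main : 2 / 3 * lam Λ t ≤ |q1 + q2| ∨ 2 / 3 * lam Λ t ≤ |q1 + q3| ∨
      2 / 3 * lam Λ t ≤ |q2 + q3| := by
    by_contra hcon
    push Not at hcon
    obtain ⟨b1, b2, b3⟩ := hcon
    rw [abs_lt] at b1 b2 b3
    rcases le_abs.1 h2 with h | h <;> linarith [b1.1, b1.2, b2.1, b2.2, b3.1, b3.2]
  have pairCase : ∀ k, k ∈ J → k ∉ I → i ≠ k → 2 / 3 * lam Λ t ≤ |q1 + perF (mat ω)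
      (lt n t \ insert k (I.erase i)) (lt n t \ insert i (J.erase k))| →
      1 / 4 ≤ av fun x => ind (HV Λ (t + 1) (upd ω ⟨t, ht⟩ x)
        (I.card - 1 + 3 * ((I \ J).card - 1 - 2))) := by
    intro k hkJ hkI hik hm
    refine step (J.erase k) i k ((Finset.erase_subset _ _).trans hJ) (Finset.card_erase_of_mem hkJ)
      ?_ hik hit (hJ hkJ) (Finset.notMem_erase _ _) (fun h => hkI (Finset.mem_of_mem_erase h))
      (fun h => hi.2 (Finset.mem_of_mem_erase h)) (Finset.notMem_erase _ _) ?_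
    · rw [← hce]; congr 1; ext a; simp only [Finset.mem_sdiff, Finset.mem_erase]
      constructor
      · rintro ⟨⟨b1, b2⟩, b3⟩
        exact ⟨b1, b2, fun h => b3 ⟨fun h' => hkI (h' ▸ b2), h⟩⟩
      · rintro ⟨b1, b2, b3⟩
        exact ⟨⟨b1, b2⟩, fun h => b3 h.2⟩
    · rw [hs, hs, hs, hs, hIi, Finset.insert_erase hkJ]
      exact hm
  rcases main with hm | hm | hm
  · exact pairCase j hj.1 hj.2 hij hm
  · exact pairCase j' hj'.1 hj'.2 hij' hm
  · have hj2 : j' ∈ J.erase j := Finset.mem_erase.2 ⟨hjj.symm, hj'.1⟩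
    refine step (insert i ((J.erase j).erase j')) j j' ?_ ?_ ?_ hjj hjt hjt'
      (fun h => hj.2 (Finset.mem_of_mem_erase h)) (fun h => hj'.2 (Finset.mem_of_mem_erase h))
      ?_ ?_ ?_
    · exact Finset.insert_subset hit
        (((Finset.erase_subset _ _).trans (Finset.erase_subset _ _)).trans hJ)
    · rw [Finset.card_insert_of_notMem, Finset.card_erase_of_mem hj2, Finset.card_erase_of_mem hj.1]
      · have : 2 ≤ J.card := he'.trans (Finset.card_le_card Finset.sdiff_subset)
        omega
      · exact fun h => hi.2 (Finset.mem_of_mem_erase (Finset.mem_of_mem_erase h))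
    · rw [← hce]; congr 1; ext a
      simp only [Finset.mem_sdiff, Finset.mem_erase, Finset.mem_insert, not_or]
      constructor
      · rintro ⟨⟨b1, b2⟩, b3, b4⟩
        exact ⟨b1, b2, fun h => b4 ⟨fun h' => hj'.2 (h' ▸ b2), fun h' => hj.2 (h' ▸ b2), h⟩⟩
      · rintro ⟨b1, b2, b3⟩
        exact ⟨⟨b1, b2⟩, b1, fun h => b3 h.2.2⟩
    · simp [hij.symm]
    · simp [hij'.symm]
    · have E1 : insert j' (insert i ((J.erase j).erase j')) = insert i (J.erase j) := by
        rw [Finset.insert_comm, Finset.insert_erase hj2]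
      have E2 : insert j (insert i ((J.erase j).erase j')) = insert i (J.erase j') := by
        rw [Finset.insert_comm, Finset.erase_right_comm,
          Finset.insert_erase (Finset.mem_erase.2 ⟨hjj, hj.1⟩)]
      rw [hs, hs, hs, hs, E1, E2]
      exact hm

/-- From weight `1`, the weight stays `1` at least half of the time. -/
lemma drift_one {Λ : ℝ} (hΛ : 0 < Λ) {t : ℕ} (ht : t < n) {ω : Om n} (hV : V Λ t ω = 1)
    (hn : 0 < n) :
    1 / 2 ≤ av fun x => ind (HV Λ (t + 1) (upd ω ⟨t, ht⟩ x) 1) := by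
  obtain ⟨I, J, ⟨hI, hJ, hc, h1, h2⟩, hw⟩ := exists_adm (by omega : V Λ t ω ≠ 4 * n + 1)
  have hwt := notMem_lt ht
  refine (diag_gain ω (w := ⟨t, ht⟩) (fun h => hwt (Finset.sdiff_subset h))
    (fun h => hwt (Finset.sdiff_subset h)) h2).trans (av_mono fun x => ind_mono fun hx => ?_)
  exact ⟨I, J, adm_step ht _ hI hJ hc h1 (by linarith [lam_pos hΛ t]), by omega⟩

lemma card_erase_sdiff {I J : Finset (Fin n)} {i j : Fin n} (hj : j ∈ I) (hij : i ≠ j) :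
    (I.erase i \ J.erase j) = insert j ((I \ J).erase i) := by
  ext a
  simp only [Finset.mem_sdiff, Finset.mem_erase, Finset.mem_insert]
  constructor
  · rintro ⟨⟨h1, h2⟩, h3⟩
    by_cases ha : a = j
    · exact Or.inl ha
    · exact Or.inr ⟨h1, h2, fun h => h3 ⟨ha, h⟩⟩
  · rintro (rfl | ⟨h1, h2, h3⟩)
    · exact ⟨⟨hij.symm, hj⟩, fun h => h.1 rfl⟩
    · exact ⟨⟨h1, h2⟩, fun h => h3 h.2⟩

/-- The weight decreases with a definite probability. -/
lemma drift {Λ : ℝ} (hΛ : 0 < Λ) {t : ℕ} (ht : t < n) {ω : Om n} (hV : V Λ t ω ≠ 4 * n + 1)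
    (h2 : 2 ≤ V Λ t ω) :
    ((V Λ t ω ≤ 4 ∧
      1 / 4 ≤ av fun x => ind (HV Λ (t + 1) (upd ω ⟨t, ht⟩ x) (V Λ t ω - 1))) ∨
    9 / 16 ≤ av fun x => ind (HV Λ (t + 1) (upd ω ⟨t, ht⟩ x) (V Λ t ω - 1))) ∨
    (6 ≤ V Λ t ω ∧ 1 / 4 ≤ av fun x => ind (HV Λ (t + 1) (upd ω ⟨t, ht⟩ x) (V Λ t ω - 4))) := by
  obtain ⟨I, J, hA, hw⟩ := exists_adm hV
  have h1 := hA.2.2.2.1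
  have hc := Finset.card_sdiff_add_card_inter I J
  unfold wt at hw
  have hdisj : Disjoint (I \ J) (I ∩ J) := Finset.disjoint_left.2 fun a ha hb =>
    (Finset.mem_sdiff.1 ha).2 (Finset.mem_inter.1 hb).2
  -- probability bounds in terms of lower bounds on the two sizes
  have pb : ∀ a b k l : ℕ, k ≤ a → l ≤ b → (1 - (1 / 2 : ℝ) ^ k) * (1 - (1 / 2) ^ l) ≤
      (1 - (1 / 2) ^ a) * (1 - (1 / 2) ^ b) := by
    intro a b k l hk hl
    have e1 : (1 / 2 : ℝ) ^ a ≤ (1 / 2) ^ k :=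
      pow_le_pow_of_le_one (by norm_num) (by norm_num) hk
    have e2 : (1 / 2 : ℝ) ^ b ≤ (1 / 2) ^ l :=
      pow_le_pow_of_le_one (by norm_num) (by norm_num) hl
    have e3 : (1 / 2 : ℝ) ^ k ≤ 1 := pow_le_one₀ (by norm_num) (by norm_num)
    have e4 : (1 / 2 : ℝ) ^ l ≤ 1 := pow_le_one₀ (by norm_num) (by norm_num)
    exact mul_le_mul (by linarith) (by linarith) (by linarith) (by linarith)
  by_cases he3 : 3 ≤ (I \ J).card
  · right
    refine ⟨by omega, ?_⟩
    have := triangle_HV ht hA (by omega)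
    rwa [show I.card - 1 + 3 * ((I \ J).card - 1 - 2) = V Λ t ω - 4 by omega] at this
  left
  have hVI : I.card = V Λ t ω := by omega
  by_cases he2 : (I \ J).card = 2
  · by_cases hD : (I ∩ J).card = 0
    · left
      refine ⟨by omega, ?_⟩
      have := triangle_HV ht hA (by omega)
      rwa [show I.card - 1 + 3 * ((I \ J).card - 1 - 2) = V Λ t ω - 1 by omega] at this
    · have := fill_HV hΛ ht hA (I₁ := I \ J) (J₁ := I ∩ J) Finset.sdiff_subset le_rfl hdisj (by
        intro i hi j hj
        have hij : i ≠ j := by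
          rintro rfl
          exact (Finset.mem_sdiff.1 hi).2 (Finset.mem_inter.1 hj).2
        rw [card_erase_sdiff (Finset.mem_inter.1 hj).1 hij, Finset.card_insert_of_notMem, Finset.card_erase_of_mem hi]
        · omega
        · exact fun h => (Finset.mem_sdiff.1 (Finset.mem_of_mem_erase h)).2
            (Finset.mem_inter.1 hj).2)
      rw [hVI] at this
      by_cases hv : V Λ t ω ≤ 4
      · left
        refine ⟨hv, le_trans ?_ ((pb _ _ 2 1 (by omega) (by omega)).trans this)⟩
        norm_num
      · right
        refine le_trans ?_ ((pb _ _ 2 3 (by omega) (by omega)).trans this)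
        norm_num
  · have he1 : (I \ J).card = 1 := by omega
    by_cases hD : (I ∩ J).card = 1
    · have := fill_HV hΛ ht hA (I₁ := I \ J) (J₁ := I ∩ J) Finset.sdiff_subset le_rfl hdisj (by
        intro i hi j hj
        have hij : i ≠ j := by
          rintro rfl
          exact (Finset.mem_sdiff.1 hi).2 (Finset.mem_inter.1 hj).2
        rw [card_erase_sdiff (Finset.mem_inter.1 hj).1 hij, Finset.card_insert_of_notMem, Finset.card_erase_of_mem hi]
        · omega
        · exact fun h => (Finset.mem_sdiff.1 (Finset.mem_of_mem_erase h)).2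
            (Finset.mem_inter.1 hj).2)
      rw [hVI] at this
      left
      refine ⟨by omega, le_trans ?_ ((pb _ _ 1 1 (by omega) (by omega)).trans this)⟩
      norm_num
    -- split the doubly deleted indices into two halves, one for rows and one for columns
    · obtain ⟨D₁, hD₁, hcD⟩ := Finset.exists_subset_card_eq
        (Nat.div_le_self (I ∩ J).card 2)
      have hc2 : ((I ∩ J) \ D₁).card = (I ∩ J).card - (I ∩ J).card / 2 := by
        rw [Finset.card_sdiff_of_subset hD₁, hcD]
      have := fill_HV hΛ ht hA (I₁ := D₁) (J₁ := (I ∩ J) \ D₁)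
        (hD₁.trans Finset.inter_subset_left) Finset.sdiff_subset Finset.disjoint_sdiff (by
        intro i hi j hj
        have hij : i ≠ j := fun h => (Finset.mem_sdiff.1 hj).2 (h ▸ hi)
        have hj' := Finset.mem_inter.1 (Finset.mem_sdiff.1 hj).1
        have hi' := Finset.mem_inter.1 (hD₁ hi)
        rw [card_erase_sdiff hj'.1 hij, Finset.erase_eq_of_notMem
          (fun h => (Finset.mem_sdiff.1 h).2 hi'.2), Finset.card_insert_of_notMem
          (fun h => (Finset.mem_sdiff.1 h).2 hj'.2)]
        omega)
      rw [hVI] at this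
      by_cases hv : V Λ t ω ≤ 4
      · left
        refine ⟨hv, le_trans ?_ ((pb _ _ 1 1 (by omega) (by omega)).trans this)⟩
        norm_num
      · right
        refine le_trans ?_ ((pb _ _ 2 2 (by omega) (by omega)).trans this)
        norm_num

end

section

variable {n : ℕ}

/-! ### The Lyapunov function -/

/-- The Lyapunov function of the weight: nearly flat up to weight `4`, then slowly exponential. The
constants are chosen so that `phi_quarter`, `phi_nine` and `phi_four`, one for each case of `drift`,
hold. -/
noncomputable def phi (v : ℕ) : ℝ :=
  if v ≤ 1 then 1 else if v = 2 then 11 / 10 else if v = 3 then 1 + 13 / 120 else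
    (1 + 79 / 720 - 1 / 216) + 1 / 216 * (21 / 20) ^ (v - 4)

/-- A majorant of `phi`, larger only at the bottom, bounding the expectation of `phi` after one
step. -/
noncomputable def phit (v : ℕ) : ℝ := if v ≤ 1 then 21 / 20 else phi v

lemma phi_one : phi 1 = 1 := by norm_num [phi]
lemma phi_two : phi 2 = 11 / 10 := by norm_num [phi]
lemma phi_three : phi 3 = 1 + 13 / 120 := by norm_num [phi]
lemma phi_big (k : ℕ) : phi (k + 4) = (1 + 79 / 720 - 1 / 216) + 1 / 216 * (21 / 20) ^ k := by
  unfold phi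
  rw [if_neg (by omega), if_neg (by omega), if_neg (by omega), Nat.add_sub_cancel]

lemma one_le_zpow (k : ℕ) : (1 : ℝ) ≤ (21 / 20) ^ k := one_le_pow₀ (by norm_num)

lemma phi_le_succ (v : ℕ) : phi v ≤ phi (v + 1) := by
  match v with
  | 0 => norm_num [phi]
  | 1 => norm_num [phi]
  | 2 => norm_num [phi]
  | 3 => norm_num [phi]
  | k + 4 =>
    rw [show k + 4 + 1 = (k + 1) + 4 by ring, phi_big, phi_big, pow_succ]
    linarith [one_le_zpow k]

lemma phi_mono : Monotone phi := monotone_nat_of_le_succ phi_le_succ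

lemma phit_mono : Monotone phit := by
  refine monotone_nat_of_le_succ fun v => ?_
  match v with
  | 0 => norm_num [phit]
  | 1 => norm_num [phit, phi]
  | k + 2 =>
    unfold phit
    rw [if_neg (by omega), if_neg (by omega)]
    exact phi_le_succ _

lemma one_le_phi (v : ℕ) : 1 ≤ phi v := by
  have := phi_mono (Nat.zero_le v)
  have h0 : phi 0 = 1 := by norm_num [phi]
  linarith

lemma phi_le_phit (v : ℕ) : phi v ≤ phit v := by
  unfold phit
  split_ifs with h
  · have := phi_mono h; rw [phi_one] at this; linarith
  · exact le_rfl

lemma phit_eq {v : ℕ} (h : 2 ≤ v) : phit v = phi v := by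
  unfold phit; rw [if_neg (by omega)]

lemma phi_le_pow (v : ℕ) : phi v ≤ 2 * (21 / 20) ^ v := by
  have := one_le_zpow v
  match v with
  | 0 => norm_num [phi]
  | 1 => norm_num [phi]
  | 2 => norm_num [phi]
  | 3 => norm_num [phi]
  | k + 4 =>
    rw [phi_big, pow_add]
    have := one_le_zpow k
    norm_num at this ⊢
    linarith

/-- The contraction rate of the Lyapunov function. -/
noncomputable def kap : ℝ := 1 / 100000

lemma phi_quarter {v : ℕ} (h2 : 2 ≤ v) (h4 : v ≤ 4) :
    1 / 4 * phit (v - 1) + 3 / 4 * phit (v + 1) ≤ (1 - kap) * phi v := by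
  interval_cases v <;> norm_num [phit, phi, kap]

lemma phi_nine {v : ℕ} (h : 5 ≤ v) :
    9 / 16 * phit (v - 1) + 7 / 16 * phit (v + 1) ≤ (1 - kap) * phi v := by
  obtain ⟨k, rfl⟩ := Nat.exists_eq_add_of_le h
  rw [phit_eq (by omega), phit_eq (by omega), show 5 + k - 1 = k + 4 by omega,
    show 5 + k + 1 = (k + 2) + 4 by ring, show 5 + k = (k + 1) + 4 by ring, phi_big, phi_big,
    phi_big, kap, pow_add, pow_add]
  have := one_le_zpow k
  norm_num at this ⊢
  linarith

lemma phi_four {v : ℕ} (h : 6 ≤ v) :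
    1 / 4 * phit (v - 4) + 3 / 4 * phit (v + 1) ≤ (1 - kap) * phi v := by
  obtain ⟨k, rfl⟩ := Nat.exists_eq_add_of_le h
  match k with
  | 0 => norm_num [phit, phi, kap]
  | 1 => norm_num [phit, phi, kap]
  | k + 2 =>
    rw [phit_eq (by omega), phit_eq (by omega), show 6 + (k + 2) - 4 = k + 4 by omega,
      show 6 + (k + 2) + 1 = (k + 5) + 4 by ring, show 6 + (k + 2) = (k + 4) + 4 by ring, phi_big,
      phi_big, phi_big, kap, pow_add _ k 5, pow_add _ k 4]
    have := one_le_zpow k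
    norm_num at this ⊢
    linarith

/-- If `f ≤ m` always and `f ≤ u` with probability at least `p`, then the mean of a monotone function
of `f` is at most its mean for the two-point law on `u` and `m`. -/
lemma mean_le {α : Type*} [Fintype α] [Nonempty α] (f : α → ℕ) {g : ℕ → ℝ} (hg : Monotone g)
    {u m : ℕ} {p : ℝ} (hum : u ≤ m) (hm : ∀ a, f a ≤ m) {E : α → Prop} (hE : ∀ a, E a → f a ≤ u)
    (hp : p ≤ av fun a => ind (E a)) : av (fun a => g (f a)) ≤ p * g u + (1 - p) * g m := by
  have h1 : av (fun a => g (f a)) ≤ av fun a => g m - (g m - g u) * ind (E a) := by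
    refine av_mono fun a => ?_
    by_cases h : E a
    · rw [ind_pos h]; linarith [hg (hE a h)]
    · rw [ind_neg h]; linarith [hg (hm a)]
  rw [av_sub, av_const, av_mul] at h1
  have h2 : 0 ≤ g m - g u := by linarith [hg hum]
  nlinarith

/-- One step from a weight at least `2` contracts. -/
lemma step_contract {Λ : ℝ} (hΛ : 0 < Λ) {t : ℕ} (ht : t < n) {ω : Om n}
    (hV : V Λ t ω ≠ 4 * n + 1) (h2 : 2 ≤ V Λ t ω) :
    av (fun x => phit (V Λ (t + 1) (upd ω ⟨t, ht⟩ x))) ≤ (1 - kap) * phi (V Λ t ω) := by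
  have hm := V_succ_le hΛ ht ω
  rcases drift hΛ ht hV h2 with (⟨h4, h⟩ | h) | ⟨h6, h⟩
  · refine (mean_le _ phit_mono (by omega) hm (fun x hx => V_le hx) h).trans ?_
    have := phi_quarter h2 h4
    linarith
  · by_cases h4 : V Λ t ω ≤ 4
    · refine (mean_le _ phit_mono (by omega) hm (fun x hx => V_le hx)
        (le_trans (by norm_num : (1 / 4 : ℝ) ≤ 9 / 16) h)).trans ?_
      have := phi_quarter h2 h4
      linarith
    · refine (mean_le _ phit_mono (by omega) hm (fun x hx => V_le hx) h).trans ?_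
      have := phi_nine (by omega : 5 ≤ V Λ t ω)
      linarith
  · refine (mean_le _ phit_mono (by omega) hm (fun x hx => V_le hx) h).trans ?_
    have := phi_four h6
    linarith

/-- Without a lower bound on the weight, one step still does not increase `phi` beyond `phit`. -/
lemma step_phi {Λ : ℝ} (hΛ : 0 < Λ) {t : ℕ} (ht : t < n) (ω : Om n) :
    av (fun x => phi (V Λ (t + 1) (upd ω ⟨t, ht⟩ x))) ≤ phit (V Λ t ω) := by
  by_cases hV : V Λ t ω = 4 * n + 1
  · rw [hV, phit_eq (by omega)]
    exact av_le_of_le fun x => phi_mono (V_le_cap _ _ _)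
  by_cases h2 : 2 ≤ V Λ t ω
  · rw [phit_eq h2]
    refine (av_mono fun x => phi_le_phit _).trans ((step_contract hΛ ht hV h2).trans ?_)
    have := one_le_phi (V Λ t ω)
    unfold kap
    linarith
  · have h1 : V Λ t ω = 1 := by have := V_pos (Λ := Λ) (t := t) (ω := ω); omega
    refine (mean_le _ phi_mono (u := 1) (m := 2) (by omega)
      (fun x => (V_succ_le hΛ ht ω x).trans (by omega)) (fun x hx => V_le hx)
      (drift_one hΛ ht h1 (by omega))).trans ?_
    rw [h1, phi_one, phi_two]
    norm_num [phit]

/-! ### Dense bilinear forms -/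

lemma sum_ind {ι : Type*} (T : Finset ι) (p : ι → Prop) [DecidablePred p] :
    ∑ b ∈ T, ind (p b) = (T.filter p).card := by
  rw [Finset.card_filter]; push_cast
  refine Finset.sum_congr rfl fun a _ => ?_
  unfold ind; split_ifs <;> simp

/-- A bilinear form in independent signs `x`, `y`, a positive proportion of whose coefficients on
`Y × X` is at least `r` in absolute value, is smaller than `r` with small probability: apply the
Littlewood–Offord inequality to each row, Markov's inequality, and then once more to `y`. -/
lemma dense {ι : Type*} [Fintype ι] [DecidableEq ι] (X Y : Finset ι) (c : ι → ι → ℝ) (κ : ι → ℝ)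
    (G : ι → (ι → Bool) → ℝ) (h : (ι → Bool) → ℝ) {r s : ℝ} (hr : 0 < r) (hs : 0 < s)
    (hX : X.Nonempty) (hY : Y.Nonempty)
    (hG : ∀ b ∈ Y, ∀ x, G b x = ∑ a, rad (x a) * c b a + κ b)
    (hd : s * Y.card * X.card ≤ ∑ b ∈ Y, ∑ a ∈ X, ind (r ≤ |c b a|)) :
    av (fun x => av fun y : ι → Bool => ind (|∑ b, rad (y b) * G b x + h x| < r)) ≤
      2 / √(s * X.card / 2) + 1 / √(s * Y.card / 4) := by
  classical
  have hXc : (0 : ℝ) < X.card := by exact_mod_cast Finset.card_pos.2 hX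
  have hYc : (0 : ℝ) < Y.card := by exact_mod_cast Finset.card_pos.2 hY
  let N : ι → Finset ι := fun b => X.filter fun a => r ≤ |c b a|
  have hN : ∀ b, ∑ a ∈ X, ind (r ≤ |c b a|) = (N b).card := by
    intro b
    exact sum_ind X _
  simp only [hN] at hd
  set Y' := Y.filter fun b => s * X.card / 2 ≤ (N b).card with hY'
  have hY'Y : Y' ⊆ Y := Finset.filter_subset _ _
  have hY'c : s * Y.card / 2 ≤ Y'.card := by
    have e1 : ∑ b ∈ Y, ((N b).card : ℝ) ≤
        ∑ b ∈ Y, ((if s * X.card / 2 ≤ (N b).card then 1 else 0) * (X.card : ℝ) +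
          s * X.card / 2) := by
      refine Finset.sum_le_sum fun b _ => ?_
      split_ifs with hb
      · have : ((N b).card : ℝ) ≤ X.card := by
          exact_mod_cast Finset.card_le_card (Finset.filter_subset _ _)
        have : 0 < s * X.card / 2 := by positivity
        linarith
      · push Not at hb; linarith
    rw [Finset.sum_add_distrib, ← Finset.sum_mul, Finset.sum_const, nsmul_eq_mul,
      Finset.sum_ite, Finset.sum_const_zero, Finset.sum_const, add_zero, nsmul_eq_mul,
      mul_one] at e1
    have e2 : (s * Y.card / 2) * X.card ≤ Y'.card * X.card := by
      rw [hY']; nlinarith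
    exact le_of_mul_le_mul_right e2 hXc
  have hY'pos : (0 : ℝ) < Y'.card := lt_of_lt_of_le (by positivity) hY'c
  set p := 1 / √(s * X.card / 2) with hp
  have hrow : ∀ b ∈ Y', av (fun x => ind (|G b x| < r)) ≤ p := by
    intro b hb
    have hb' := Finset.mem_filter.1 hb
    simp only [hG b hb'.1]
    exact LO_abs (c b) hr (by positivity) (N b) hb'.2
      (fun a ha => (Finset.mem_filter.1 ha).2) (κ b)
  -- the number of good rows on which the linear form is small
  let Z : (ι → Bool) → ℝ := fun x => ∑ b ∈ Y', ind (|G b x| < r)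
  have hZ : av (fun x => ind ((Y'.card : ℝ) / 2 ≤ Z x)) ≤ 2 * p := by
    refine (markov Z (fun x => Finset.sum_nonneg fun _ _ => ind_nonneg _) (by positivity)).trans ?_
    rw [div_le_iff₀ (by positivity), av_sum]
    refine (Finset.sum_le_sum hrow).trans ?_
    rw [Finset.sum_const, nsmul_eq_mul]; linarith
  have hcond : ∀ x, av (fun y : ι → Bool => ind (|∑ b, rad (y b) * G b x + h x| < r)) ≤
      ind ((Y'.card : ℝ) / 2 ≤ Z x) + 1 / √(s * Y.card / 4) := by
    intro x
    by_cases hx : (Y'.card : ℝ) / 2 ≤ Z x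
    · rw [ind_pos hx]
      have := av_le_one_of_ind fun y : ι → Bool => |∑ b, rad (y b) * G b x + h x| < r
      have h2 : 0 ≤ 1 / √(s * Y.card / 4) := by positivity
      linarith
    · rw [ind_neg hx, zero_add]
      refine LO_abs (fun b => G b x) hr (by positivity) (Y'.filter fun b => r ≤ |G b x|) ?_
        (fun b hb => (Finset.mem_filter.1 hb).2) (h x)
      have e : Z x = Y'.card - ((Y'.filter fun b => r ≤ |G b x|).card : ℝ) := by
        rw [eq_sub_iff_add_eq]
        simp only [Z]
        rw [sum_ind]
        have e3 := Finset.card_filter_add_card_filter_not (s := Y') (fun b => |G b x| < r)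
        simp only [not_lt] at e3
        exact_mod_cast e3
      push Not at hx
      linarith
  refine (av_mono hcond).trans ?_
  rw [av_add, av_const]
  have : 2 / √(s * X.card / 2) = 2 * p := by rw [hp]; ring
  linarith

end

section

variable {n : ℕ}

/-! ### Density of heavy first-order minors -/

/-- The minor of the leading `t × t` block obtained by deleting row `a` and column `b` is heavy:
at least `lam Λ t` in absolute value. -/
def heavy (Λ : ℝ) (t : ℕ) (ω : Om n) (a b : Fin n) : Prop :=
  lam Λ t ≤ |perF (mat ω) ((lt n t).erase a) ((lt n t).erase b)|

/-- The lower half of the index set at time `t`. -/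
def Lo (n t : ℕ) : Finset (Fin n) := lt n (t / 2)

/-- The upper half of the index set at time `t`. -/
def Hi (n t : ℕ) : Finset (Fin n) := lt n t \ lt n (t / 2)

/-- A positive proportion (`kap / 2`) of the minors with deleted row in the upper half and deleted
column in the lower half is heavy. -/
def Dense (Λ : ℝ) (t : ℕ) (ω : Om n) : Prop :=
  kap / 2 * (Hi n t).card * (Lo n t).card ≤ ∑ b ∈ Hi n t, ∑ a ∈ Lo n t, ind (heavy Λ t ω b a)

lemma Lo_sub (t : ℕ) : Lo n t ⊆ lt n t := lt_mono (Nat.div_le_self _ _)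
lemma Hi_sub (t : ℕ) : Hi n t ⊆ lt n t := Finset.sdiff_subset
lemma card_Lo {t : ℕ} (ht : t ≤ n) : (Lo n t).card = t / 2 :=
  card_lt ((Nat.div_le_self _ _).trans ht)
lemma card_Hi {t : ℕ} (ht : t ≤ n) : (Hi n t).card = t - t / 2 := by
  unfold Hi
  rw [Finset.card_sdiff_of_subset (lt_mono (Nat.div_le_self _ _)), card_lt ht,
    card_lt ((Nat.div_le_self _ _).trans ht)]

lemma ne_of_Hi_Lo {t : ℕ} {a b : Fin n} (hb : b ∈ Hi n t) (ha : a ∈ Lo n t) : b ≠ a := by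
  rintro rfl; exact (Finset.mem_sdiff.1 hb).2 ha

lemma V_le_one_of_heavy {Λ : ℝ} {t : ℕ} {ω : Om n} {a b : Fin n} (ha : a ∈ lt n t)
    (hb : b ∈ lt n t) (hab : a ≠ b) (h : heavy Λ t ω a b) : V Λ t ω = 1 := by
  have hs : ({a} : Finset (Fin n)) \ {b} = {a} := by
    rw [Finset.sdiff_singleton_eq_erase, Finset.erase_eq_of_notMem (by simpa using hab.symm)]
  refine le_antisymm (V_le ⟨{a}, {b}, ⟨by simpa using ha, by simpa using hb, by simp, ?_, ?_⟩, ?_⟩)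
    V_pos
  · rw [hs]; simp
  · rw [Finset.sdiff_singleton_eq_erase, Finset.sdiff_singleton_eq_erase]; exact h
  · unfold wt; rw [hs]; simp

lemma kap_pos : 0 < kap := by norm_num [kap]

lemma V_of_Dense {Λ : ℝ} {t : ℕ} (h2 : 2 ≤ t) (ht : t ≤ n) {ω : Om n} (h : Dense Λ t ω) :
    V Λ t ω = 1 := by
  have h1 : (0 : ℝ) < kap / 2 * (Hi n t).card * (Lo n t).card := by
    have e1 : 0 < (Hi n t).card := by rw [card_Hi ht]; omega
    have e2 : 0 < (Lo n t).card := by rw [card_Lo ht]; omega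
    have := kap_pos
    positivity
  obtain ⟨b, hb, hb'⟩ := Finset.exists_ne_zero_of_sum_ne_zero (lt_of_lt_of_le h1 h).ne'
  obtain ⟨a, ha, ha'⟩ := Finset.exists_ne_zero_of_sum_ne_zero hb'
  refine V_le_one_of_heavy (Hi_sub t hb) (Lo_sub t ha) (ne_of_Hi_Lo hb ha) ?_
  by_contra hcon
  exact ha' (ind_neg hcon)

lemma heavy_relabel {Λ : ℝ} {t : ℕ} {σ : Equiv.Perm (Fin n)}
    (hσ : ∀ i, σ i ∈ lt n t ↔ i ∈ lt n t) (ω : Om n) (a b : Fin n) :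
    heavy Λ t (relabel σ ω) a b ↔ heavy Λ t ω (σ a) (σ b) := by
  unfold heavy
  rw [mat_relabel, perF_map, Finset.map_erase, Finset.map_erase, lt_map hσ]
  rfl

/-- A permutation preserving the initial segment and moving one off-diagonal position to another. -/
lemma exists_perm {t : ℕ} {a b u v : Fin n} (ha : a ∈ lt n t) (hb : b ∈ lt n t)
    (hu : u ∈ lt n t) (hv : v ∈ lt n t) (hab : a ≠ b) (huv : u ≠ v) :
    ∃ σ : Equiv.Perm (Fin n), (∀ i, σ i ∈ lt n t ↔ i ∈ lt n t) ∧ σ u = a ∧ σ v = b := by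
  have hsw : ∀ p q : Fin n, p ∈ lt n t → q ∈ lt n t →
      ∀ i, Equiv.swap p q i ∈ lt n t ↔ i ∈ lt n t := by
    intro p q hp hq i
    by_cases h1 : i = p
    · rw [h1, Equiv.swap_apply_left]; exact iff_of_true hq hp
    · by_cases h2 : i = q
      · rw [h2, Equiv.swap_apply_right]; exact iff_of_true hp hq
      · rw [Equiv.swap_apply_of_ne_of_ne h1 h2]
  obtain ⟨c, hcd⟩ : ∃ c, c = Equiv.swap u a b := ⟨_, rfl⟩
  have hc : c ∈ lt n t := hcd ▸ (hsw u a hu ha b).2 hb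
  have hcb : Equiv.swap u a c = b := by rw [hcd, Equiv.swap_apply_self]
  have hcu : u ≠ c := by
    intro h
    rw [← h, Equiv.swap_apply_left] at hcb
    exact hab hcb
  refine ⟨Equiv.swap u a * Equiv.swap v c, fun i => ?_, ?_, ?_⟩
  · rw [Equiv.Perm.mul_apply, hsw u a hu ha, hsw v c hv hc]
  · rw [Equiv.Perm.mul_apply, Equiv.swap_apply_of_ne_of_ne huv hcu, Equiv.swap_apply_left]
  · rw [Equiv.Perm.mul_apply, Equiv.swap_apply_left, hcb]

/-- Exchangeability: all off-diagonal positions behave alike. -/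
lemma exchange {Λ : ℝ} {t : ℕ} {a b u v : Fin n} (ha : a ∈ lt n t) (hb : b ∈ lt n t)
    (hu : u ∈ lt n t) (hv : v ∈ lt n t) (hab : a ≠ b) (huv : u ≠ v) :
    av (fun ω : Om n => phi (V Λ t ω) * ind (¬ heavy Λ t ω a b)) =
      av fun ω : Om n => phi (V Λ t ω) * ind (¬ heavy Λ t ω u v) := by
  obtain ⟨σ, hσ, h1, h2⟩ := exists_perm ha hb hu hv hab huv
  rw [← av_relabel σ (fun ω : Om n => phi (V Λ t ω) * ind (¬ heavy Λ t ω u v))]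
  refine congrArg av (funext fun ω => ?_)
  rw [V_relabel hσ, heavy_relabel hσ, h1, h2]

section TwoStep

variable {t : ℕ} (ht : t + 1 < n)

/-- The minor deleting row `t` and column `t + 1` after two steps is a bilinear form in the two new
rows, with the first-order minors of the old block as coefficients. -/
lemma spec_expand (ω : Om n) (x y : Fin n → Bool) :
    perF (mat (upd (upd ω ⟨t, by omega⟩ x) ⟨t + 1, ht⟩ y))
      ((lt n (t + 2)).erase ⟨t, by omega⟩) ((lt n (t + 2)).erase ⟨t + 1, ht⟩) =
    ∑ b, rad (y b) * (if b ∈ lt n t then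
        ∑ a, rad (x a) * (if a ∈ lt n t then
          perF (mat ω) ((lt n t).erase b) ((lt n t).erase a) else 0) + 0
      else if b = ⟨t, by omega⟩ then perF (mat ω) (lt n t) (lt n t) else 0) := by
  set u : Fin n := ⟨t, by omega⟩ with hu
  set v : Fin n := ⟨t + 1, ht⟩ with hv
  set T := lt n t with hT
  have huT : u ∉ T := notMem_lt (by omega)
  have hvT : v ∉ T := by rw [hT, mem_lt]; simp [hv]
  have huv : u ≠ v := by simp [hu, hv]
  have e0 : lt n (t + 2) = insert v (insert u T) := by
    rw [lt_succ (t := t + 1) ht, lt_succ (t := t) (by omega)]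
  have e1 : (lt n (t + 2)).erase u = insert v T := by
    rw [e0, Finset.erase_insert_of_ne huv.symm, Finset.erase_insert huT]
  have hvuT : v ∉ insert u T := by
    rw [Finset.mem_insert]; rintro (h | h); exacts [huv h.symm, hvT h]
  have e2 : (lt n (t + 2)).erase v = insert u T := by
    rw [e0, Finset.erase_insert hvuT]
  rw [e1, e2, perF_upd_row _ y hvT hvuT, Finset.sum_insert huT, Finset.erase_insert huT,
    perF_upd_of_notMem ω x huT huT]
  have e3 : ∀ b ∈ T, perF (mat (upd ω u x)) T ((insert u T).erase b) =
      ∑ a, rad (x a) * (if a ∈ T then perF (mat ω) (T.erase b) (T.erase a) else 0) + 0 := by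
    intro b hb
    have hub : u ≠ b := fun h => huT (h ▸ hb)
    rw [perF_symm _ (mat_symm _), Finset.erase_insert_of_ne hub,
      perF_upd_row ω x (fun h => huT (Finset.mem_of_mem_erase h)) huT, add_zero]
    simp only [mul_ite, mul_zero]
    rw [Finset.sum_ite_mem, Finset.univ_inter]
  rw [Finset.sum_congr rfl fun b hb => by rw [e3 b hb]]
  symm
  rw [← Finset.sum_subset (Finset.subset_univ (insert u T)), Finset.sum_insert huT, if_neg huT,
    if_pos rfl]
  · congr 1
    exact Finset.sum_congr rfl fun b hb => by rw [if_pos hb]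
  · intro b _ hb
    rw [Finset.mem_insert, not_or] at hb
    rw [if_neg hb.2, if_neg hb.1, mul_zero]

/-- The failure probability in `spec_dense`, of order `t ^ (-1/2)`. -/
noncomputable def tau (t : ℕ) : ℝ :=
  2 / √(kap / 2 * (t / 2 : ℕ) / 2) + 1 / √(kap / 2 * (t - t / 2 : ℕ) / 4)

/-- If heavy minors are dense, the minor deleting the two newest indices is heavy with high probability. -/
lemma spec_dense {Λ : ℝ} (hΛ : 0 < Λ) (h2 : 2 ≤ t) {ω : Om n} (h : Dense Λ t ω) :
    av (fun x => av fun y => ind (¬ heavy Λ (t + 2)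
      (upd (upd ω ⟨t, by omega⟩ x) ⟨t + 1, ht⟩ y) ⟨t, by omega⟩ ⟨t + 1, ht⟩)) ≤ tau t := by
  have hLo : (Lo n t).Nonempty := Finset.card_pos.1 (by rw [card_Lo (by omega)]; omega)
  have hHi : (Hi n t).Nonempty := Finset.card_pos.1 (by rw [card_Hi (by omega)]; omega)
  have key := dense (Lo n t) (Hi n t)
    (fun b a => if a ∈ lt n t then perF (mat ω) ((lt n t).erase b) ((lt n t).erase a) else 0)
    (fun _ => 0)
    (fun b x => if b ∈ lt n t then
        ∑ a, rad (x a) * (if a ∈ lt n t then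
          perF (mat ω) ((lt n t).erase b) ((lt n t).erase a) else 0) + 0
      else if b = ⟨t, by omega⟩ then perF (mat ω) (lt n t) (lt n t) else 0)
    (fun _ => 0) (lam_pos hΛ t) (half_pos kap_pos) hLo hHi
    (fun b hb x => by rw [if_pos (Hi_sub t hb)]) (by
      refine le_trans h (le_of_eq ?_)
      refine Finset.sum_congr rfl fun b _ => Finset.sum_congr rfl fun a ha => ?_
      rw [if_pos (Lo_sub t ha)]; rfl)
  rw [card_Lo (by omega), card_Hi (by omega)] at key
  refine le_trans (av_mono fun x => av_mono fun y => ind_mono fun hh => ?_) key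
  unfold heavy at hh
  rw [not_le, spec_expand ht] at hh
  rw [add_zero]
  exact hh.trans_le (lam_anti hΛ (by omega))

/-- If the weight is `1`, the minor deleting the two newest indices is heavy with probability at least
`1 / 4`: one large coefficient of the bilinear form of `spec_expand` is enough. -/
lemma spec_one {Λ : ℝ} (hΛ : 0 < Λ) {ω : Om n} (h : V Λ t ω = 1) :
    av (fun x => av fun y => ind (¬ heavy Λ (t + 2)
      (upd (upd ω ⟨t, by omega⟩ x) ⟨t + 1, ht⟩ y) ⟨t, by omega⟩ ⟨t + 1, ht⟩)) ≤ 3 / 4 := by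
  obtain ⟨I, J, ⟨hI, hJ, hc, h1, h2⟩, hw⟩ := exists_adm (by omega : V Λ t ω ≠ 4 * n + 1)
  unfold wt at hw
  have hle : (I \ J).card ≤ I.card := Finset.card_le_card Finset.sdiff_subset
  have hI1 : I.card = 1 := by omega
  obtain ⟨b₀, rfl⟩ := Finset.card_eq_one.1 hI1
  obtain ⟨a₀, rfl⟩ := Finset.card_eq_one.1 (hc ▸ hI1)
  rw [Finset.singleton_subset_iff] at hI hJ
  rw [Finset.sdiff_singleton_eq_erase, Finset.sdiff_singleton_eq_erase] at h2
  set G : Fin n → (Fin n → Bool) → ℝ := fun b x => if b ∈ lt n t then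
        ∑ a, rad (x a) * (if a ∈ lt n t then
          perF (mat ω) ((lt n t).erase b) ((lt n t).erase a) else 0) + 0
      else if b = ⟨t, by omega⟩ then perF (mat ω) (lt n t) (lt n t) else 0 with hG
  have lin : ∀ (c : Fin n → ℝ) (i : Fin n) (x y : Fin n → Bool), (∀ k ∉ ({i} : Finset (Fin n)),
      x k = y k) → ∑ k, rad (x k) * c k - ∑ k, rad (y k) * c k = (rad (x i) - rad (y i)) * c i := by
    intro c i x y hxy
    rw [← Finset.sum_sub_distrib, Finset.sum_eq_single i]
    · ring
    · intro k _ hk; rw [hxy k (by simpa using hk)]; ring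
    · intro h; exact absurd (Finset.mem_univ i) h
  have small : ∀ (c : Fin n → ℝ) (i : Fin n), lam Λ t ≤ |c i| →
      av (fun x : Fin n → Bool => ind (|∑ k, rad (x k) * c k| < lam Λ t)) ≤ 1 / 2 := by
    intro c i hci
    have := one_bad {i} (fun x : Fin n → Bool => |∑ k, rad (x k) * c k| < lam Λ t) (by
      intro x y hx hy hxy
      by_contra hne
      have hi : x i ≠ y i := by
        intro h; apply hne; funext k
        by_cases hk : k = i
        · rw [hk, h]
        · exact hxy k (by simpa using hk)
      have h3 := abs_sub (∑ k, rad (x k) * c k) (∑ k, rad (y k) * c k)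
      rw [lin c i x y hxy, abs_mul, rad_sub_abs hi] at h3
      linarith)
    simpa using this
  have s1 : av (fun x => ind (|G b₀ x| < lam Λ t)) ≤ 1 / 2 := by
    simp only [hG, if_pos hI, add_zero]
    refine small _ a₀ ?_
    rw [if_pos hJ]; exact h2
  have s2 : ∀ x, av (fun y : Fin n → Bool => ind (|∑ b, rad (y b) * G b x| < lam Λ t)) ≤
      1 / 2 + 1 / 2 * ind (|G b₀ x| < lam Λ t) := by
    intro x
    by_cases hx : |G b₀ x| < lam Λ t
    · rw [ind_pos hx]
      have := av_le_one_of_ind fun y : Fin n → Bool => |∑ b, rad (y b) * G b x| < lam Λ t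
      linarith
    · rw [ind_neg hx]
      have := small (fun b => G b x) b₀ (not_lt.1 hx)
      linarith
  refine le_trans (av_mono fun x => le_trans (av_mono fun y => ind_mono fun hh => ?_) (s2 x)) ?_
  · unfold heavy at hh
    rw [not_le, spec_expand ht] at hh
    exact hh.trans_le (lam_anti hΛ (by omega))
  · rw [av_add, av_const, av_mul]; linarith

lemma tau_nonneg (t : ℕ) : 0 ≤ tau t := by unfold tau; positivity

/-- The conditional two-step estimate. -/
lemma two_step {Λ : ℝ} (hΛ : 0 < Λ) (h2 : 2 ≤ t) (ω : Om n) :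
    av (fun x => av fun y =>
      phi (V Λ (t + 2) (upd (upd ω ⟨t, by omega⟩ x) ⟨t + 1, ht⟩ y)) * ind (¬ heavy Λ (t + 2)
      (upd (upd ω ⟨t, by omega⟩ x) ⟨t + 1, ht⟩ y) ⟨t, by omega⟩ ⟨t + 1, ht⟩)) ≤
    (1 - kap) * (phi (V Λ t ω) * ind (¬ Dense Λ t ω)) + phi 3 * tau t +
      phi (4 * n + 1) * ind (V Λ t ω = 4 * n + 1) := by
  have hk : (0 : ℝ) ≤ 1 - kap := by norm_num [kap]
  have n1 : 0 ≤ phi 3 * tau t := mul_nonneg (by linarith [one_le_phi 3]) (tau_nonneg t)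
  have n2 : 0 ≤ phi (4 * n + 1) * ind (V Λ t ω = 4 * n + 1) :=
    mul_nonneg (by linarith [one_le_phi (4 * n + 1)]) (ind_nonneg _)
  have n3 : 0 ≤ (1 - kap) * (phi (V Λ t ω) * ind (¬ Dense Λ t ω)) :=
    mul_nonneg hk (mul_nonneg (by linarith [one_le_phi (V Λ t ω)]) (ind_nonneg _))
  have hV2 : ∀ x y, V Λ (t + 2) (upd (upd ω ⟨t, by omega⟩ x) ⟨t + 1, ht⟩ y) ≤ V Λ t ω + 2 := by
    intro x y
    have a1 : V Λ (t + 2) (upd (upd ω ⟨t, by omega⟩ x) ⟨t + 1, ht⟩ y) ≤ _ :=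
      V_succ_le hΛ (t := t + 1) ht (upd ω ⟨t, by omega⟩ x) y
    have a2 := V_succ_le hΛ (t := t) (by omega) ω x
    omega
  -- pulling out a bound for `phi`
  have pull : V Λ t ω = 1 → ∀ p : ℝ, av (fun x => av fun y => ind (¬ heavy Λ (t + 2)
      (upd (upd ω ⟨t, by omega⟩ x) ⟨t + 1, ht⟩ y) ⟨t, by omega⟩ ⟨t + 1, ht⟩)) ≤ p →
      av (fun x => av fun y =>
      phi (V Λ (t + 2) (upd (upd ω ⟨t, by omega⟩ x) ⟨t + 1, ht⟩ y)) * ind (¬ heavy Λ (t + 2)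
      (upd (upd ω ⟨t, by omega⟩ x) ⟨t + 1, ht⟩ y) ⟨t, by omega⟩ ⟨t + 1, ht⟩)) ≤ phi 3 * p := by
    intro h1 p hp
    refine le_trans (av_mono fun x => av_mono fun y =>
      mul_le_mul_of_nonneg_right (phi_mono (b := 3) ?_) (ind_nonneg _)) ?_
    · have := hV2 x y; omega
    · simp only [av_mul]
      exact mul_le_mul_of_nonneg_left hp (by linarith [one_le_phi 3])
  have drop : av (fun x => av fun y =>
      phi (V Λ (t + 2) (upd (upd ω ⟨t, by omega⟩ x) ⟨t + 1, ht⟩ y)) * ind (¬ heavy Λ (t + 2)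
      (upd (upd ω ⟨t, by omega⟩ x) ⟨t + 1, ht⟩ y) ⟨t, by omega⟩ ⟨t + 1, ht⟩)) ≤
      av (fun x => av fun y =>
        phi (V Λ (t + 2) (upd (upd ω ⟨t, by omega⟩ x) ⟨t + 1, ht⟩ y))) := by
    refine av_mono fun x => av_mono fun y => ?_
    have := one_le_phi (V Λ (t + 2) (upd (upd ω ⟨t, by omega⟩ x) ⟨t + 1, ht⟩ y))
    exact mul_le_of_le_one_right (by linarith) (ind_le_one _)
  by_cases hD : Dense Λ t ω
  · have := pull (V_of_Dense h2 (by omega) hD) _ (spec_dense ht hΛ h2 hD)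
    linarith
  rw [ind_pos hD, mul_one] at n3 ⊢
  by_cases hc : V Λ t ω = 4 * n + 1
  · rw [ind_pos hc, mul_one]
    have : av (fun x => av fun y =>
        phi (V Λ (t + 2) (upd (upd ω ⟨t, by omega⟩ x) ⟨t + 1, ht⟩ y))) ≤ phi (4 * n + 1) :=
      av_le_of_le fun x => av_le_of_le fun y => phi_mono (V_le_cap _ _ _)
    linarith
  by_cases h1 : V Λ t ω = 1
  · have := pull h1 _ (spec_one ht hΛ h1)
    have hphi : phi (V Λ t ω) = 1 := by rw [h1, phi_one]
    rw [hphi]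
    rw [phi_three] at this n1 ⊢
    unfold kap
    linarith
  · have a1 := step_contract hΛ (t := t) (by omega) hc
      (by have := V_pos (Λ := Λ) (t := t) (ω := ω); omega)
    have a2 : av (fun x => av fun y =>
        phi (V Λ (t + 2) (upd (upd ω ⟨t, by omega⟩ x) ⟨t + 1, ht⟩ y))) ≤
        av (fun x => phit (V Λ (t + 1) (upd ω ⟨t, by omega⟩ x))) :=
      av_mono fun x => step_phi hΛ (t := t + 1) ht _
    linarith

end TwoStep

/-- The expected Lyapunov function on the event that heavy minors are not dense. -/
noncomputable def Psi (n : ℕ) (Λ : ℝ) (t : ℕ) : ℝ :=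
  av fun ω : Om n => phi (V Λ t ω) * ind (¬ Dense Λ t ω)

lemma Psi_nonneg (Λ : ℝ) (t : ℕ) : 0 ≤ Psi n Λ t :=
  av_nonneg fun ω => mul_nonneg (by linarith [one_le_phi (V Λ t ω)]) (ind_nonneg _)

/-- By exchangeability, failure of density is controlled by a single position. -/
lemma Psi_le_spec {Λ : ℝ} {t : ℕ} (h2 : 2 ≤ t) (ht : t ≤ n) {u v : Fin n} (hu : u ∈ lt n t)
    (hv : v ∈ lt n t) (huv : u ≠ v) : (1 - kap / 2) * Psi n Λ t ≤
      av fun ω : Om n => phi (V Λ t ω) * ind (¬ heavy Λ t ω u v) := by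
  set q := av fun ω : Om n => phi (V Λ t ω) * ind (¬ heavy Λ t ω u v) with hq
  have e1 : (0 : ℝ) < (Hi n t).card := by
    rw [card_Hi ht]; exact_mod_cast (by omega : 0 < t - t / 2)
  have e2 : (0 : ℝ) < (Lo n t).card := by
    rw [card_Lo ht]; exact_mod_cast (by omega : 0 < t / 2)
  have hpt : ∀ ω : Om n, ((1 - kap / 2) * (Hi n t).card * (Lo n t).card) *
      (phi (V Λ t ω) * ind (¬ Dense Λ t ω)) ≤
      ∑ b ∈ Hi n t, ∑ a ∈ Lo n t, phi (V Λ t ω) * ind (¬ heavy Λ t ω b a) := by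
    intro ω
    have hφ := one_le_phi (V Λ t ω)
    by_cases hD : Dense Λ t ω
    · rw [ind_neg (not_not.2 hD), mul_zero, mul_zero]
      exact Finset.sum_nonneg fun b _ => Finset.sum_nonneg fun a _ =>
        mul_nonneg (by linarith) (ind_nonneg _)
    · rw [ind_pos hD, mul_one, mul_comm]
      simp only [← Finset.mul_sum]
      refine mul_le_mul_of_nonneg_left ?_ (by linarith)
      simp only [ind_not, Finset.sum_sub_distrib, Finset.sum_const, nsmul_eq_mul, mul_one]
      unfold Dense at hD
      push Not at hD
      nlinarith
  have h3 := av_mono hpt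
  rw [av_mul, av_sum] at h3
  simp only [av_sum] at h3
  have h4 : ∑ b ∈ Hi n t, ∑ a ∈ Lo n t,
      av (fun ω : Om n => phi (V Λ t ω) * ind (¬ heavy Λ t ω b a)) =
      (Hi n t).card * (Lo n t).card * q := by
    rw [Finset.sum_congr rfl fun b hb => Finset.sum_congr rfl fun a ha =>
      exchange (Hi_sub t hb) (Lo_sub t ha) hu hv (ne_of_Hi_Lo hb ha) huv]
    simp only [Finset.sum_const, nsmul_eq_mul]
    ring
  rw [h4] at h3
  have h5 : ((Hi n t).card * (Lo n t).card : ℝ) * ((1 - kap / 2) * Psi n Λ t) ≤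
      ((Hi n t).card * (Lo n t).card : ℝ) * q := by
    unfold Psi
    linarith
  exact le_of_mul_le_mul_left h5 (by positivity)

/-- Two steps contract `Psi`, up to small errors. -/
lemma Psi_contract {Λ : ℝ} (hΛ : 0 < Λ) {t : ℕ} (h2 : 2 ≤ t) (ht : t + 1 < n) :
    Psi n Λ (t + 2) ≤ (1 - kap / 2) * Psi n Λ t + 2 * (phi 3 * tau t +
      phi (4 * n + 1) * av fun ω : Om n => ind (V Λ t ω = 4 * n + 1)) := by
  have h1 := Psi_le_spec (Λ := Λ) (t := t + 2) (n := n) (by omega) (by omega)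
    (u := ⟨t, by omega⟩) (v := ⟨t + 1, ht⟩) (by simp [mem_lt]) (by simp [mem_lt]) (by simp)
  rw [av_upd ⟨t + 1, ht⟩, av_upd ⟨t, by omega⟩] at h1
  have h3 := h1.trans (av_mono (two_step ht hΛ h2))
  rw [av_add, av_add, av_mul, av_const, av_mul] at h3
  change _ ≤ (1 - kap) * Psi n Λ t + _ + _ at h3
  set e := phi 3 * tau t + phi (4 * n + 1) * av fun ω : Om n => ind (V Λ t ω = 4 * n + 1) with he
  have he0 : 0 ≤ e := add_nonneg (mul_nonneg (by linarith [one_le_phi 3]) (tau_nonneg t))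
    (mul_nonneg (by linarith [one_le_phi (4 * n + 1)]) (av_nonneg fun _ => ind_nonneg _))
  have h4 := Psi_nonneg (n := n) Λ t
  have h5 : (1 - kap / 2) * Psi n Λ (t + 2) ≤
      (1 - kap / 2) * ((1 - kap / 2) * Psi n Λ t + 2 * e) := by
    unfold kap at h3 ⊢
    nlinarith
  exact le_of_mul_le_mul_left h5 (by norm_num [kap])

end

section

variable {n : ℕ}

/-! ### Small-ball estimate for Rademacher sums of vectors -/

section SmallBall

variable {ι κ : Type*} [Fintype ι] [DecidableEq ι] [Fintype κ]

/-- A function which is odd under flipping one coordinate has average zero. -/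
lemma av_flip (i : ι) (f : (ι → Bool) → ℝ)
    (hf : ∀ x, f (Function.update x i (!(x i))) = - f x) : av f = 0 := by
  have hinv : Function.Involutive fun x : ι → Bool => Function.update x i (!(x i)) := by
    intro x
    simp
  have h1 := av_equiv (Function.Involutive.toPerm _ hinv) f
  have h2 : (fun x : ι → Bool => f ((Function.Involutive.toPerm _ hinv) x)) = fun x => (-1) * f x := by
    funext x
    rw [neg_one_mul]
    exact hf x
  rw [h2, av_mul] at h1
  linarith

lemma rad_moment {b b' c c' : ι} (hb : b ≠ b') (hc : c ≠ c') :
    av (fun x : ι → Bool => rad (x b) * rad (x b') * (rad (x c) * rad (x c'))) =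
      (if b = c ∧ b' = c' then 1 else 0) + (if b = c' ∧ b' = c then 1 else 0) := by
  by_cases h1 : b = c
  · subst h1
    by_cases h2 : b' = c'
    · subst h2
      have : ∀ x : ι → Bool, rad (x b) * rad (x b') * (rad (x b) * rad (x b')) = 1 := by
        intro x
        have e1 := rad_mul_self (x b)
        have e2 := rad_mul_self (x b')
        calc _ = (rad (x b) * rad (x b)) * (rad (x b') * rad (x b')) := by ring
          _ = 1 := by rw [e1, e2, one_mul]
      simp only [this, av_const]
      simp [hb]
    · rw [if_neg (by tauto), if_neg (by tauto), add_zero]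
      refine av_flip b' _ fun x => ?_
      simp only [Function.update_self, Function.update_of_ne hb, Function.update_of_ne (Ne.symm h2),
        rad_not]
      ring
  · by_cases h2 : b = c'
    · subst h2
      by_cases h3 : b' = c
      · subst h3
        have : ∀ x : ι → Bool, rad (x b) * rad (x b') * (rad (x b') * rad (x b)) = 1 := by
          intro x
          have e1 := rad_mul_self (x b)
          have e2 := rad_mul_self (x b')
          calc _ = (rad (x b) * rad (x b)) * (rad (x b') * rad (x b')) := by ring
            _ = 1 := by rw [e1, e2, one_mul]
        simp only [this, av_const]
        simp [hb]
      · rw [if_neg (by tauto), if_neg (by tauto), add_zero]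
        refine av_flip b' _ fun x => ?_
        simp only [Function.update_self, Function.update_of_ne hb,
          Function.update_of_ne (Ne.symm h3), rad_not]
        ring
    · rw [if_neg (by tauto), if_neg (by tauto), add_zero]
      refine av_flip b _ fun x => ?_
      simp only [Function.update_self, Function.update_of_ne hb.symm,
        Function.update_of_ne (Ne.symm h1), Function.update_of_ne (Ne.symm h2), rad_not]
      ring

/-- Second moment of an off-diagonal quadratic chaos. -/
lemma chaos_sq (h : ι → ι → ℝ) (hs : ∀ b b', h b b' = h b' b) (h0 : ∀ b, h b b = 0) :
    av (fun x : ι → Bool => (∑ b, ∑ b', rad (x b) * rad (x b') * h b b') ^ 2) =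
      2 * ∑ b, ∑ b', h b b' ^ 2 := by
  have e1 : ∀ x : ι → Bool, (∑ b, ∑ b', rad (x b) * rad (x b') * h b b') ^ 2 =
      ∑ b, ∑ b', ∑ c, ∑ c', (h b b' * h c c') *
        (rad (x b) * rad (x b') * (rad (x c) * rad (x c'))) := by
    intro x
    rw [sq]
    simp only [Finset.sum_mul, Finset.mul_sum]
    refine Finset.sum_congr rfl fun b _ => Finset.sum_congr rfl fun b' _ =>
      Finset.sum_congr rfl fun c _ => Finset.sum_congr rfl fun c' _ => by ring
  simp only [e1, av_sum, av_mul]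
  rw [Finset.mul_sum]
  refine Finset.sum_congr rfl fun b _ => ?_
  rw [Finset.mul_sum]
  refine Finset.sum_congr rfl fun b' _ => ?_
  by_cases hb : b = b'
  · subst hb
    simp [h0]
  have e2 : ∀ c c', (h b b' * h c c') *
      av (fun x : ι → Bool => rad (x b) * rad (x b') * (rad (x c) * rad (x c'))) =
      (if c = b then if c' = b' then h b b' ^ 2 else 0 else 0) +
      (if c = b' then if c' = b then h b b' ^ 2 else 0 else 0) := by
    intro c c'
    by_cases hc : c = c'
    · subst hc
      rw [h0, mul_zero, zero_mul]
      have : ¬ (c = b ∧ c = b') := fun h => hb (h.1.symm.trans h.2)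
      by_cases h1 : c = b <;> by_cases h2 : c = b' <;> simp_all
    · rw [rad_moment hb hc]
      by_cases h1 : c = b
      · subst h1
        by_cases h2 : c' = b'
        · subst h2; simp [hb]; ring
        · simp [h2, hb, Ne.symm h2, Ne.symm hb]
      · by_cases h2 : c = b'
        · subst h2
          by_cases h3 : c' = b
          · subst h3; simp [h1, hs c c']; ring
          · simp [h1, h3, Ne.symm h1, Ne.symm h3]
        · simp [h1, h2, Ne.symm h1, Ne.symm h2]
  simp only [e2, Finset.sum_add_distrib]
  have e3 : ∀ p q : ι, ∑ c, ∑ c', (if c = p then if c' = q then h b b' ^ 2 else 0 else 0) =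
      h b b' ^ 2 := by
    intro p q
    rw [Finset.sum_eq_single p]
    · simp
    · intro c _ hc; simp [hc]
    · intro h; exact absurd (Finset.mem_univ p) h
  rw [e3, e3]
  ring

/-- If the vectors `w b` have squared norm at most `W` and total squared norm at least
`δ * #ι * W`, then a random signed sum has squared norm at least `θ * W` with failure probability
at most `η`. Either the Gram matrix has small Hilbert-Schmidt norm and the second moment method
applies, or many `w b` correlate with a single `w b₀`, and the one-dimensional
Littlewood-Offord bound applies to the projection onto `w b₀`. -/
lemma small_ball (w : ι → κ → ℝ) {W δ η θ : ℝ} (hW : 0 < W) (hδ : 0 < δ) (hη : 0 < η)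
    (hθ : 0 ≤ θ) (hι : 0 < Fintype.card ι)
    (h1 : ∀ b, ∑ k, w b k ^ 2 ≤ W)
    (h2 : δ * Fintype.card ι * W ≤ ∑ b, ∑ k, w b k ^ 2)
    (h3 : 2 * θ ≤ δ * Fintype.card ι)
    (h4 : (√θ / √(η * δ / 32) + 1) / √(η * δ / 32 * Fintype.card ι) ≤ η) :
    av (fun x : ι → Bool => ind (∑ k, (∑ b, rad (x b) * w b k) ^ 2 < θ * W)) ≤ η := by
  set N : ℝ := (Fintype.card ι : ℝ) with hN
  have hN0 : 0 < N := by rw [hN]; exact_mod_cast hι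
  set μ := ∑ b, ∑ k, w b k ^ 2 with hμ
  have hμ0 : 0 < μ := lt_of_lt_of_le (by positivity) h2
  set g : ι → ι → ℝ := fun b b' => ∑ k, w b k * w b' k with hg
  have hgs : ∀ b b', g b b' = g b' b := fun b b' =>
    Finset.sum_congr rfl fun k _ => mul_comm _ _
  have hgd : ∀ b, g b b = ∑ k, w b k ^ 2 := fun b =>
    Finset.sum_congr rfl fun k _ => (sq _).symm
  have hcs : ∀ b b', g b b' ^ 2 ≤ g b b * g b' b' := by
    intro b b'
    rw [hgd, hgd]
    exact Finset.sum_mul_sq_le_sq_mul_sq _ _ _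
  by_cases hcase : ∑ b, ∑ b', g b b' ^ 2 ≤ η * μ ^ 2 / 16
  · -- second moment method
    set h : ι → ι → ℝ := fun b b' => if b = b' then 0 else g b b' with hh
    have hhs : ∀ b b', h b b' = h b' b := by
      intro b b'
      simp only [hh, hgs b b', eq_comm]
    have hQ := chaos_sq h hhs (fun b => by simp [hh])
    have hle : ∑ b, ∑ b', h b b' ^ 2 ≤ ∑ b, ∑ b', g b b' ^ 2 := by
      refine Finset.sum_le_sum fun b _ => Finset.sum_le_sum fun b' _ => ?_
      simp only [hh]
      split_ifs
      · rw [zero_pow two_ne_zero]; exact sq_nonneg _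
      · exact le_rfl
    have hexp : ∀ x : ι → Bool, ∑ k, (∑ b, rad (x b) * w b k) ^ 2 =
        μ + ∑ b, ∑ b', rad (x b) * rad (x b') * h b b' := by
      intro x
      have e1 : ∑ k, (∑ b, rad (x b) * w b k) ^ 2 =
          ∑ b, ∑ b', rad (x b) * rad (x b') * g b b' := by
        simp only [sq, Finset.sum_mul, Finset.mul_sum, hg]
        rw [Finset.sum_comm]
        refine Finset.sum_congr rfl fun b _ => ?_
        rw [Finset.sum_comm]
        refine Finset.sum_congr rfl fun b' _ => Finset.sum_congr rfl fun k _ => by ring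
      rw [e1, hμ, ← Finset.sum_add_distrib]
      refine Finset.sum_congr rfl fun b _ => ?_
      have e2 : ∀ b', rad (x b) * rad (x b') * g b b' =
          (if b = b' then g b b else 0) + rad (x b) * rad (x b') * h b b' := by
        intro b'
        by_cases hb : b = b'
        · subst hb; simp [hh, rad_mul_self]
        · simp [hh, hb]
      simp only [e2, Finset.sum_add_distrib]
      rw [Finset.sum_ite_eq, if_pos (Finset.mem_univ b), hgd]
    have hm := markov (fun x : ι → Bool => (∑ b, ∑ b', rad (x b) * rad (x b') * h b b') ^ 2)
      (fun x => sq_nonneg _) (r := μ ^ 2 / 4) (by positivity)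
    refine le_trans (av_mono fun x => ind_mono fun hx => ?_) (hm.trans ?_)
    · rw [hexp x] at hx
      have : θ * W ≤ μ / 2 := by nlinarith
      nlinarith
    · rw [hQ, div_le_iff₀ (by positivity)]
      nlinarith [sq_nonneg μ]
  · -- projection onto a single vector
    push Not at hcase
    obtain ⟨b₀, hb₀⟩ : ∃ b₀, η / 16 * μ * g b₀ b₀ < ∑ b, g b₀ b ^ 2 := by
      by_contra hcon
      push Not at hcon
      have := Finset.sum_le_sum fun b (_ : b ∈ univ) => hcon b
      rw [← Finset.mul_sum] at this
      simp only [hgd] at this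
      rw [← hμ] at this
      nlinarith
    set T := g b₀ b₀ with hT
    have hT0 : 0 < T := by
      have hT1 : 0 ≤ T := by rw [hT, hgd]; positivity
      rcases hT1.lt_or_eq with h | h
      · exact h
      · exfalso
        have : ∑ b, g b₀ b ^ 2 ≤ 0 := Finset.sum_nonpos fun b _ => by
          have := hcs b₀ b
          rw [← hT, ← h, zero_mul] at this
          exact this
        rw [← h, mul_zero] at hb₀
        linarith
    set c : ι → ℝ := fun b => g b₀ b / √T with hc
    have hc2 : ∀ b, c b ^ 2 = g b₀ b ^ 2 / T := by
      intro b
      rw [hc, div_pow, Real.sq_sqrt hT0.le]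
    have hcW : ∀ b, c b ^ 2 ≤ W := by
      intro b
      rw [hc2, div_le_iff₀ hT0]
      have e1 := hcs b₀ b
      have e2 : g b b ≤ W := by rw [hgd]; exact h1 b
      nlinarith
    have hcs2 : η / 16 * (δ * N * W) ≤ ∑ b, c b ^ 2 := by
      simp only [hc2]
      rw [← Finset.sum_div, le_div_iff₀ hT0]
      refine le_trans ?_ hb₀.le
      gcongr
    set S : Finset ι := univ.filter fun b => η * δ / 32 * W ≤ c b ^ 2 with hS
    have hScard : η * δ / 32 * N ≤ S.card := by
      have e1 : ∑ b, c b ^ 2 ≤ ∑ b, ((if b ∈ S then W else 0) + η * δ / 32 * W) := by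
        refine Finset.sum_le_sum fun b _ => ?_
        by_cases hb : b ∈ S
        · rw [if_pos hb]
          have := hcW b
          have : 0 < η * δ / 32 * W := by positivity
          linarith
        · rw [if_neg hb, zero_add]
          simp only [hS, Finset.mem_filter, Finset.mem_univ, true_and, not_le] at hb
          exact hb.le
      rw [Finset.sum_add_distrib, Finset.sum_ite_mem, Finset.univ_inter, Finset.sum_const,
        Finset.sum_const, nsmul_eq_mul, nsmul_eq_mul, Finset.card_univ, ← hN] at e1
      have e2 : (η * δ / 32 * N) * W ≤ S.card * W := by nlinarith
      exact le_of_mul_le_mul_right e2 hW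
    have hLO := LO_scaled c (ρ := √(η * δ / 32 * W)) (s := η * δ / 32 * N) (R := √(θ * W))
      (by positivity) (by positivity) (by positivity) S hScard (by
        intro i hi
        simp only [hS, Finset.mem_filter, Finset.mem_univ, true_and] at hi
        rw [← Real.sqrt_sq_eq_abs]
        exact Real.sqrt_le_sqrt hi)
    refine le_trans (av_mono fun x => ind_mono fun hx => ?_) (hLO.trans ?_)
    · have e1 : (∑ b, rad (x b) * c b) ^ 2 ≤ ∑ k, (∑ b, rad (x b) * w b k) ^ 2 := by
        have e2 : ∑ b, rad (x b) * c b = (∑ k, w b₀ k * ∑ b, rad (x b) * w b k) / √T := by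
          simp only [hc, hg, Finset.mul_sum, Finset.sum_div]
          rw [Finset.sum_comm]
          refine Finset.sum_congr rfl fun b _ => ?_
          refine Finset.sum_congr rfl fun k _ => ?_
          ring
        rw [e2, div_pow, Real.sq_sqrt hT0.le, div_le_iff₀ hT0]
        have e3 := Finset.sum_mul_sq_le_sq_mul_sq univ (fun k => w b₀ k)
          (fun k => ∑ b, rad (x b) * w b k)
        rw [← hgd b₀, ← hT] at e3
        linarith
      rw [← Real.sqrt_sq_eq_abs]
      exact Real.sqrt_lt_sqrt (sq_nonneg _) (e1.trans_lt hx)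
    · refine le_trans (le_of_eq ?_) h4
      rw [Real.sqrt_mul hθ, Real.sqrt_mul (by positivity), mul_div_mul_right _ _
        (Real.sqrt_pos.2 hW).ne']

end SmallBall

end

section

variable {n : ℕ}

/-! ### Growing a heavy minor from scratch -/

/-- The sum of the squares of the minors with rows `A` and columns among the first `k`. -/
noncomputable def mass (k : ℕ) (ω : Om n) (A : Finset (Fin n)) : ℝ :=
  ∑ B ∈ powersetCard A.card (lt n k), perF (mat ω) A B ^ 2

/-- As `mass`, leaving out the principal minor. -/
noncomputable def mass' (k : ℕ) (ω : Om n) (A : Finset (Fin n)) : ℝ :=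
  ∑ B ∈ (powersetCard A.card (lt n k)).erase A, perF (mat ω) A B ^ 2

lemma mass'_le (k : ℕ) (ω : Om n) (A : Finset (Fin n)) : mass' k ω A ≤ mass k ω A :=
  Finset.sum_le_sum_of_subset_of_nonneg (Finset.erase_subset _ _) fun _ _ _ => sq_nonneg _

lemma mass_empty (k : ℕ) (ω : Om n) : mass k ω ∅ = 1 := by
  unfold mass
  rw [Finset.card_empty, Finset.powersetCard_zero, Finset.sum_singleton, perF_empty, if_pos rfl]
  norm_num

lemma mass'_mono {k : ℕ} (ω : Om n) (A : Finset (Fin n)) : mass' k ω A ≤ mass' (k + 1) ω A :=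
  Finset.sum_le_sum_of_subset_of_nonneg
    (Finset.erase_subset_erase _ (Finset.powersetCard_mono (lt_mono (by omega))))
    fun _ _ _ => sq_nonneg _

lemma mass'_upd {k : ℕ} (hk : k < n) (ω : Om n) (x : Fin n → Bool) {A : Finset (Fin n)}
    (hA : A ⊆ lt n k) : mass' k (upd ω ⟨k, hk⟩ x) A = mass' k ω A := by
  refine Finset.sum_congr rfl fun B hB => ?_
  have hB' := (Finset.mem_powersetCard.1 (Finset.mem_of_mem_erase hB)).1
  rw [perF_upd_of_notMem ω x (fun h => notMem_lt hk (hA h)) (fun h => notMem_lt hk (hB' h))]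

/-- The vector of minors with one more column, the column `b` being assigned to the new row. -/
noncomputable def wv (k : ℕ) (ω : Om n) (A : Finset (Fin n)) (b : Fin n) (B : Finset (Fin n)) : ℝ :=
  if B ∈ powersetCard (A.card + 1) (lt n k) ∧ b ∈ B then perF (mat ω) A (B.erase b) else 0

lemma wv_sq (k : ℕ) (ω : Om n) (A : Finset (Fin n)) {b : Fin n} (hb : b ∈ lt n k) :
    ∑ B, wv k ω A b B ^ 2 =
      ∑ B ∈ (powersetCard A.card (lt n k)).filter (fun B => b ∉ B), perF (mat ω) A B ^ 2 := by
  have h1 : ∑ B, wv k ω A b B ^ 2 =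
      ∑ B ∈ (powersetCard (A.card + 1) (lt n k)).filter (fun B => b ∈ B),
        perF (mat ω) A (B.erase b) ^ 2 := by
    rw [Finset.sum_filter, ← Finset.sum_subset (Finset.subset_univ
      (powersetCard (A.card + 1) (lt n k)))]
    · refine Finset.sum_congr rfl fun B hB => ?_
      unfold wv
      by_cases h : b ∈ B <;> simp [h, hB, -Finset.mem_powersetCard]
    · intro B _ hB
      unfold wv
      rw [if_neg fun h => hB h.1]
      norm_num
  rw [h1]
  refine Finset.sum_bij' (fun B _ => B.erase b) (fun B _ => insert b B) ?_ ?_ ?_ ?_ ?_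
  · intro B hB
    simp only [Finset.mem_filter, Finset.mem_powersetCard] at hB ⊢
    refine ⟨⟨(Finset.erase_subset _ _).trans hB.1.1, ?_⟩, Finset.notMem_erase _ _⟩
    rw [Finset.card_erase_of_mem hB.2, hB.1.2, Nat.add_sub_cancel]
  · intro B hB
    simp only [Finset.mem_filter, Finset.mem_powersetCard] at hB ⊢
    refine ⟨⟨Finset.insert_subset hb hB.1.1, ?_⟩, Finset.mem_insert_self _ _⟩
    rw [Finset.card_insert_of_notMem hB.2, hB.1.2]
  · intro B hB
    exact Finset.insert_erase (Finset.mem_filter.1 hB).2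
  · intro B hB
    exact Finset.erase_insert (Finset.mem_filter.1 hB).2
  · intro B hB
    rfl

lemma wv_sq_le (k : ℕ) (ω : Om n) (A : Finset (Fin n)) (b : Fin n) :
    ∑ B, wv k ω A b B ^ 2 ≤ mass k ω A := by
  by_cases hb : b ∈ lt n k
  · rw [wv_sq k ω A hb]
    exact Finset.sum_le_sum_of_subset_of_nonneg (Finset.filter_subset _ _) fun _ _ _ => sq_nonneg _
  · have : ∑ B, wv k ω A b B ^ 2 = 0 := by
      refine Finset.sum_eq_zero fun B _ => ?_
      unfold wv
      rw [if_neg fun h => hb ((Finset.mem_powersetCard.1 h.1).1 h.2)]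
      norm_num
    rw [this]
    exact Finset.sum_nonneg fun _ _ => sq_nonneg _

/-- Each minor with rows `A` extends to a larger column set in `k - #A` ways. -/
lemma wv_total {k : ℕ} (hk : k ≤ n) (ω : Om n) (A : Finset (Fin n)) :
    ((k - A.card : ℕ) : ℝ) * mass k ω A ≤ ∑ b, ∑ B, wv k ω A b B ^ 2 := by
  have h1 : ∑ b ∈ lt n k, ∑ B, wv k ω A b B ^ 2 ≤ ∑ b, ∑ B, wv k ω A b B ^ 2 :=
    Finset.sum_le_sum_of_subset_of_nonneg (Finset.subset_univ _) fun _ _ _ =>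
      Finset.sum_nonneg fun _ _ => sq_nonneg _
  refine le_trans (le_of_eq ?_) h1
  rw [Finset.sum_congr rfl fun b hb => wv_sq k ω A hb]
  simp only [Finset.sum_filter]
  rw [Finset.sum_comm]
  unfold mass
  rw [Finset.mul_sum]
  refine Finset.sum_congr rfl fun B hB => ?_
  obtain ⟨hB1, hB2⟩ := Finset.mem_powersetCard.1 hB
  rw [← Finset.sum_filter, Finset.sum_const, nsmul_eq_mul, Finset.filter_notMem_eq_sdiff,
    Finset.card_sdiff_of_subset hB1, card_lt hk, hB2]

/-- The new row produces a signed sum of the vectors `wv`. -/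
lemma mass_succ {k : ℕ} (hk : k < n) (ω : Om n) (x : Fin n → Bool) {A : Finset (Fin n)}
    (hA : A ⊆ lt n k) :
    ∑ B, (∑ b, rad (x b) * wv k ω A b B) ^ 2 ≤
      mass' (k + 1) (upd ω ⟨k, hk⟩ x) (insert ⟨k, hk⟩ A) := by
  have hkA : (⟨k, hk⟩ : Fin n) ∉ A := fun h => notMem_lt hk (hA h)
  have h1 : ∀ B ∉ powersetCard (A.card + 1) (lt n k),
      (∑ b, rad (x b) * wv k ω A b B) ^ 2 = 0 := by
    intro B hB
    rw [Finset.sum_eq_zero fun b _ => ?_, zero_pow two_ne_zero]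
    unfold wv
    rw [if_neg fun h => hB h.1, mul_zero]
  rw [← Finset.sum_subset (Finset.subset_univ (powersetCard (A.card + 1) (lt n k)))
    fun B _ hB => h1 B hB]
  unfold mass'
  rw [Finset.card_insert_of_notMem hkA]
  have h2 : ∀ B ∈ powersetCard (A.card + 1) (lt n k), (⟨k, hk⟩ : Fin n) ∉ B := fun B hB h =>
    notMem_lt hk ((Finset.mem_powersetCard.1 hB).1 h)
  rw [Finset.sum_congr rfl fun B hB => ?_]
  · refine Finset.sum_le_sum_of_subset_of_nonneg (f := fun B =>
      perF (mat (upd ω ⟨k, hk⟩ x)) (insert ⟨k, hk⟩ A) B ^ 2) ?_ fun _ _ _ => sq_nonneg _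
    intro B hB
    refine Finset.mem_erase.2 ⟨?_, Finset.powersetCard_mono (lt_mono (by omega)) hB⟩
    intro h
    exact h2 B hB (h ▸ Finset.mem_insert_self _ _)
  · rw [perF_upd_row ω x hkA (h2 B hB), ← Finset.sum_subset (Finset.subset_univ B)]
    · congr 1
      refine Finset.sum_congr rfl fun b hb => ?_
      unfold wv
      rw [if_pos ⟨hB, hb⟩]
    · intro b _ hb
      unfold wv
      rw [if_neg fun h => hb h.2, mul_zero]

/-- At time `k` there is a set `A` of rows of size between `k - d - f` and `k - d` whose non-principal
minors have sum of squares at least `θ ^ #A` (no condition if `A` is empty). -/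
def Grown (d : ℕ) (θ : ℝ) (k f : ℕ) (ω : Om n) : Prop :=
  ∃ A ⊆ lt n k, A.card + d ≤ k ∧ k ≤ A.card + d + f ∧ (A = ∅ ∨ θ ^ A.card ≤ mass' k ω A)

lemma Grown.mass {k : ℕ} {θ : ℝ} {ω : Om n} {A : Finset (Fin n)}
    (h : A = ∅ ∨ θ ^ A.card ≤ mass' k ω A) : θ ^ A.card ≤ mass k ω A := by
  rcases h with rfl | h
  · rw [mass_empty]; simp
  · exact h.trans (mass'_le _ _ _)

lemma Grown.wait {d : ℕ} {θ : ℝ} {k f : ℕ} (hk : k < n) {ω : Om n} (h : Grown d θ k f ω)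
    (x : Fin n → Bool) : Grown d θ (k + 1) (f + 1) (upd ω ⟨k, hk⟩ x) := by
  obtain ⟨A, hA, h1, h2, h3⟩ := h
  refine ⟨A, hA.trans (lt_mono (by omega)), by omega, by omega, h3.imp_right fun h => ?_⟩
  rw [← mass'_upd hk ω x hA] at h
  exact h.trans (mass'_mono _ _)

lemma Grown_upd {d : ℕ} {θ : ℝ} {k f : ℕ} (hk : k < n) (ω : Om n) (x : Fin n → Bool) :
    Grown d θ k f (upd ω ⟨k, hk⟩ x) ↔ Grown d θ k f ω := by
  unfold Grown
  refine exists_congr fun A => and_congr_right fun hA => ?_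
  rw [mass'_upd hk ω x hA]

/-- The numerical condition under which one growth step fails with probability at most `η`. -/
def StepOK (n d : ℕ) (δ η θ : ℝ) : Prop :=
  δ * n ≤ d ∧ 2 * θ ≤ δ * n ∧ (√θ / √(η * δ / 32) + 1) / √(η * δ / 32 * n) ≤ η

lemma grow_step {d : ℕ} {δ η θ : ℝ} (hδ : 0 < δ) (hη : 0 < η) (hθ : 0 < θ)
    (hok : StepOK n d δ η θ) {k f : ℕ} (hk : k < n) {ω : Om n} (h : Grown d θ k f ω) :
    av (fun x => ind (¬ Grown d θ (k + 1) f (upd ω ⟨k, hk⟩ x))) ≤ η := by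
  obtain ⟨A, hA, h1, h2, h3⟩ := h
  obtain ⟨o1, o2, o3⟩ := hok
  have hm := Grown.mass h3
  have hm0 : 0 < mass k ω A := lt_of_lt_of_le (by positivity) hm
  have hcard : (Fintype.card (Fin n) : ℝ) = n := by simp
  have key := small_ball (wv k ω A) hm0 hδ hη hθ.le (by simp; omega) (wv_sq_le k ω A)
    (by
      refine le_trans ?_ (wv_total hk.le ω A)
      rw [hcard]
      refine mul_le_mul_of_nonneg_right (o1.trans ?_) hm0.le
      exact_mod_cast (by omega : d ≤ k - A.card))
    (by rw [hcard]; exact o2) (by rw [hcard]; exact o3)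
  refine le_trans (av_mono fun x => ind_mono fun hx => ?_) key
  by_contra hcon
  push Not at hcon
  have hkA : (⟨k, hk⟩ : Fin n) ∉ A := fun h => notMem_lt hk (hA h)
  refine hx ⟨insert ⟨k, hk⟩ A, ?_, ?_, ?_, Or.inr ?_⟩
  · rw [lt_succ hk]; exact Finset.insert_subset_insert _ hA
  · rw [Finset.card_insert_of_notMem hkA]; omega
  · rw [Finset.card_insert_of_notMem hkA]; omega
  · refine le_trans ?_ (hcon.trans (mass_succ hk ω x hA))
    rw [Finset.card_insert_of_notMem hkA, pow_succ']
    exact mul_le_mul_of_nonneg_left hm hθ.le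

/-- Failing to grow `f` times is exponentially unlikely in `f`, with an arbitrarily small base. -/
lemma grow {d : ℕ} {δ η θ : ℝ} (hδ : 0 < δ) (hη : 0 < η) (hθ : 0 < θ)
    (hok : StepOK n d δ η θ) : ∀ (j f : ℕ), d + j ≤ n →
    av (fun ω : Om n => ind (¬ Grown d θ (d + j) f ω)) ≤ 2 ^ j * η ^ f := by
  intro j
  induction j with
  | zero =>
    intro f _
    have : ∀ ω : Om n, Grown d θ (d + 0) f ω := fun ω =>
      ⟨∅, Finset.empty_subset _, by simp, by simp, Or.inl rfl⟩
    simp only [ind_neg (not_not.2 (this _)), av_const]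
    positivity
  | succ j ih =>
    intro f hj
    cases f with
    | zero =>
      refine (av_le_one_of_ind _).trans ?_
      rw [pow_zero, mul_one]
      exact one_le_pow₀ (by norm_num)
    | succ f =>
      have hk : d + j < n := by omega
      have i1 := ih (f + 1) hk.le
      have i2 := ih f hk.le
      rw [av_upd ⟨d + j, hk⟩]
      have hpt : ∀ ω : Om n, av (fun x => ind (¬ Grown d θ (d + (j + 1)) (f + 1)
          (upd ω ⟨d + j, hk⟩ x))) ≤
          ind (¬ Grown d θ (d + j) (f + 1) ω) + η * ind (¬ Grown d θ (d + j) f ω) := by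
        intro ω
        by_cases h1 : Grown d θ (d + j) f ω
        · have : ∀ x, Grown d θ (d + (j + 1)) (f + 1) (upd ω ⟨d + j, hk⟩ x) := h1.wait hk
          simp only [ind_neg (not_not.2 (this _)), av_const]
          exact add_nonneg (ind_nonneg _) (mul_nonneg hη.le (ind_nonneg _))
        · rw [ind_pos h1, mul_one]
          by_cases h2 : Grown d θ (d + j) (f + 1) ω
          · have := grow_step hδ hη hθ hok hk h2
            have h0 := ind_nonneg (¬ Grown d θ (d + j) (f + 1) ω)
            have e : d + (j + 1) = d + j + 1 := rfl
            rw [e]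
            linarith
          · rw [ind_pos h2]
            have := av_le_one_of_ind fun x : Fin n → Bool =>
              ¬ Grown d θ (d + (j + 1)) (f + 1) (upd ω ⟨d + j, hk⟩ x)
            linarith
      refine (av_mono hpt).trans ?_
      rw [av_add, av_mul]
      calc _ ≤ 2 ^ j * η ^ (f + 1) + η * (2 ^ j * η ^ f) := by gcongr
        _ = _ := by ring

/-- The largest minor is at least the average one, and there are at most `2 ^ n` of them. -/
lemma V_of_Grown {d f K : ℕ} {θ Λ : ℝ} (hθ : 1 ≤ θ) (hΛ : 0 < Λ)
    (hΛ2 : Λ ^ 2 * 2 ^ n ≤ θ ^ (K - d - f)) (hK : d + f < K) (hKn : K ≤ n) {ω : Om n}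
    (h : Grown d θ K f ω) : V Λ K ω ≤ 4 * (d + f) := by
  obtain ⟨A, hA, h1, h2, h3⟩ := h
  have hAne : A ≠ ∅ := by rintro rfl; simp at h2; omega
  have h4 := h3.resolve_left hAne
  obtain ⟨B, hB, hB2⟩ : ∃ B ∈ (powersetCard A.card (lt n K)).erase A,
      Λ ^ 2 ≤ perF (mat ω) A B ^ 2 := by
    by_contra hcon
    push Not at hcon
    have e1 : mass' K ω A < Λ ^ 2 * 2 ^ n := by
      have hne : ((powersetCard A.card (lt n K)).erase A).Nonempty := by
        by_contra hne
        rw [Finset.not_nonempty_iff_eq_empty] at hne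
        unfold mass' at h4
        rw [hne, Finset.sum_empty] at h4
        have : 0 < θ ^ A.card := by positivity
        linarith
      have e2 : (((powersetCard A.card (lt n K)).erase A).card : ℝ) ≤ 2 ^ n := by
        have := Finset.card_le_univ ((powersetCard A.card (lt n K)).erase A)
        rw [Fintype.card_finset, Fintype.card_fin] at this
        exact_mod_cast this
      have e3 := Finset.sum_lt_sum_of_nonempty hne hcon
      rw [Finset.sum_const, nsmul_eq_mul] at e3
      unfold mass'
      nlinarith [sq_nonneg Λ]
    have e2 : θ ^ (K - d - f) ≤ θ ^ A.card := pow_le_pow_right₀ hθ (by omega)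
    linarith
  obtain ⟨hBA, hBp⟩ := Finset.mem_erase.1 hB
  obtain ⟨hBs, hBc⟩ := Finset.mem_powersetCard.1 hBp
  have hcI : (lt n K \ A).card = K - A.card := by
    rw [Finset.card_sdiff_of_subset hA, card_lt hKn]
  have hcJ : (lt n K \ B).card = K - A.card := by
    rw [Finset.card_sdiff_of_subset hBs, card_lt hKn, hBc]
  refine V_le ⟨lt n K \ A, lt n K \ B, ⟨Finset.sdiff_subset, Finset.sdiff_subset,
    hcI.trans hcJ.symm, ?_, ?_⟩, ?_⟩
  · rw [Nat.succ_le_iff, Finset.card_pos, Finset.sdiff_nonempty]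
    intro hsub
    refine hBA (Finset.eq_of_subset_of_card_le ?_ hBc.ge)
    intro i hi
    by_contra hiA
    have := hsub (Finset.mem_sdiff.2 ⟨hBs hi, hiA⟩)
    exact (Finset.mem_sdiff.1 this).2 hi
  · rw [Finset.sdiff_sdiff_eq_self hA, Finset.sdiff_sdiff_eq_self hBs]
    have e1 : Λ ≤ |perF (mat ω) A B| := by
      rw [← abs_of_pos hΛ]; exact sq_le_sq.1 hB2
    refine le_trans ?_ e1
    unfold lam
    exact mul_le_of_le_one_right hΛ.le (pow_le_one₀ (by norm_num) (by norm_num))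
  · unfold wt
    have : ((lt n K \ A) \ (lt n K \ B)).card ≤ (lt n K \ A).card :=
      Finset.card_le_card Finset.sdiff_subset
    omega

/-- The outcome of the growth phase. -/
lemma growth {d f K : ℕ} {δ η θ Λ : ℝ} (hδ : 0 < δ) (hη : 0 < η) (hθ : 1 ≤ θ) (hΛ : 0 < Λ)
    (hok : StepOK n d δ η θ) (hΛ2 : Λ ^ 2 * 2 ^ n ≤ θ ^ (K - d - f)) (hK : d + f < K)
    (hKn : K ≤ n) : av (fun ω : Om n => ind (¬ V Λ K ω ≤ 4 * (d + f))) ≤ 2 ^ n * η ^ f := by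
  obtain ⟨j, rfl⟩ := Nat.exists_eq_add_of_le (by omega : d ≤ K)
  refine le_trans (av_mono fun ω => ind_mono (mt fun h => V_of_Grown hθ hΛ hΛ2 hK hKn h))
    ((grow hδ hη (by linarith) hok j f hKn).trans ?_)
  gcongr
  · norm_num
  · omega

end

section

variable {n : ℕ}

/-! ### The last row: decoupling -/

/-- Splitting a quadratic form along a partition of the index set. -/
lemma quad_split {ι : Type*} [DecidableEq ι] {L H : Finset ι} (hd : Disjoint L H) (z : ι → ℝ)
    (P : ι → ι → ℝ) (hP : ∀ a b, P a b = P b a) :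
    ∑ b ∈ L ∪ H, ∑ a ∈ L ∪ H, z b * z a * P a b =
      ∑ b ∈ L, ∑ a ∈ L, z b * z a * P a b + ∑ b ∈ H, ∑ a ∈ H, z b * z a * P a b +
        ∑ b ∈ H, z b * ∑ a ∈ L, z a * (2 * P b a) := by
  rw [Finset.sum_union hd]
  simp only [Finset.sum_union hd, Finset.sum_add_distrib]
  have e1 : ∑ b ∈ L, ∑ a ∈ H, z b * z a * P a b = ∑ b ∈ H, ∑ a ∈ L, z b * z a * P a b := by
    rw [Finset.sum_comm]
    refine Finset.sum_congr rfl fun b _ => Finset.sum_congr rfl fun a _ => ?_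
    rw [hP a b]; ring
  have e2 : ∑ b ∈ H, z b * ∑ a ∈ L, z a * (2 * P b a) =
      2 * ∑ b ∈ H, ∑ a ∈ L, z b * z a * P a b := by
    simp only [Finset.mul_sum]
    refine Finset.sum_congr rfl fun b _ => Finset.sum_congr rfl fun a _ => ?_
    rw [hP a b]; ring
  rw [e1, e2]
  ring

/-- If the heavy minors are dense at the last but one step, the permanent is anti-concentrated
given everything but the last row: squaring the probability and resampling the coordinates outside
`Hi` leaves a form which is bilinear in the `Hi` and the `Lo` coordinates. -/
lemma final_dense {t : ℕ} (ht : t < n) (hn : t + 1 = n) {Λ : ℝ} (hΛ : 0 < Λ) (h2 : 2 ≤ t)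
    {ω : Om n} (h : Dense Λ t ω) (a₀ : ℝ) :
    av (fun x => ind (|perm (mat (upd ω ⟨t, ht⟩ x)) - a₀| < lam Λ t)) ≤ √(tau t) := by
  have hLo : (Lo n t).Nonempty := Finset.card_pos.1 (by rw [card_Lo (by omega)]; omega)
  have hHi : (Hi n t).Nonempty := Finset.card_pos.1 (by rw [card_Hi (by omega)]; omega)
  have hdis : Disjoint (Lo n t) (Hi n t) := Finset.disjoint_sdiff
  have hun : lt n t = Lo n t ∪ Hi n t := (Finset.union_sdiff_of_subset (Lo_sub t)).symm
  set r := lam Λ t with hr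
  have hr0 : 0 < r := lam_pos hΛ t
  set w : Fin n := ⟨t, ht⟩ with hw
  have hwT : w ∉ lt n t := notMem_lt ht
  have hwH : w ∉ Hi n t := fun h => hwT (Hi_sub t h)
  set P : Fin n → Fin n → ℝ := fun a b => perF (mat ω) ((lt n t).erase a) ((lt n t).erase b)
    with hP
  have hPs : ∀ a b, P a b = P b a := fun a b => perF_symm _ (mat_symm ω) _ _
  set p₀ := perF (mat ω) (lt n t) (lt n t) with hp₀
  set F : (Fin n → Bool) → ℝ := fun x => perm (mat (upd ω w x)) with hF
  have hFe : ∀ x y : Fin n → Bool, F ((Hi n t).piecewise y x) =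
      (rad (x w) * p₀ + ∑ b ∈ Lo n t, ∑ a ∈ Lo n t, rad (x b) * rad (x a) * P a b) +
      ∑ b ∈ Hi n t, ∑ a ∈ Hi n t, rad (y b) * rad (y a) * P a b +
      ∑ b ∈ Hi n t, rad (y b) * ∑ a ∈ Lo n t, rad (x a) * (2 * P b a) := by
    intro x y
    set z := (Hi n t).piecewise y x with hz
    have hzH : ∀ b ∈ Hi n t, z b = y b := fun b hb => Finset.piecewise_eq_of_mem _ _ _ hb
    have hzL : ∀ b ∈ Lo n t, z b = x b := fun b hb =>
      Finset.piecewise_eq_of_notMem _ _ _ (Finset.disjoint_left.1 hdis hb)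
    have hzw : z w = x w := Finset.piecewise_eq_of_notMem _ _ _ hwH
    have e1 : F z = rad (z w) * p₀ +
        ∑ b ∈ lt n t, ∑ a ∈ lt n t, rad (z b) * rad (z a) * P a b := by
      have hfull : (univ : Finset (Fin n)) = insert w (lt n t) := by
        rw [← lt_succ ht]
        ext i
        simp only [Finset.mem_univ, mem_lt, true_iff]
        omega
      have e0 : F z = perF (mat (upd ω w z)) univ univ := (perF_univ _).symm
      rw [e0, hfull, perF_upd_quad ω z hwT hwT]
    rw [e1, hun, quad_split hdis (fun i => rad (z i)) P hPs, hzw]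
    have f1 : ∑ b ∈ Lo n t, ∑ a ∈ Lo n t, rad (z b) * rad (z a) * P a b =
        ∑ b ∈ Lo n t, ∑ a ∈ Lo n t, rad (x b) * rad (x a) * P a b :=
      Finset.sum_congr rfl fun b hb => Finset.sum_congr rfl fun a ha => by rw [hzL a ha, hzL b hb]
    have f2 : ∑ b ∈ Hi n t, ∑ a ∈ Hi n t, rad (z b) * rad (z a) * P a b =
        ∑ b ∈ Hi n t, ∑ a ∈ Hi n t, rad (y b) * rad (y a) * P a b :=
      Finset.sum_congr rfl fun b hb => Finset.sum_congr rfl fun a ha => by rw [hzH a ha, hzH b hb]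
    have f3 : ∑ b ∈ Hi n t, rad (z b) * ∑ a ∈ Lo n t, rad (z a) * (2 * P b a) =
        ∑ b ∈ Hi n t, rad (y b) * ∑ a ∈ Lo n t, rad (x a) * (2 * P b a) :=
      Finset.sum_congr rfl fun b hb => by
        rw [hzH b hb]
        congr 1
        exact Finset.sum_congr rfl fun a ha => by rw [hzL a ha]
    rw [f1, f2, f3]
    ring
  -- the contribution of the coordinates outside `Hi` to the difference
  set q : (Fin n → Bool) → ℝ := fun x =>
    rad (x w) * p₀ + ∑ b ∈ Lo n t, ∑ a ∈ Lo n t, rad (x b) * rad (x a) * P a b with hq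
  set e : (Fin n → Bool) → (Fin n → Bool) → ℝ := fun y x =>
    ind (|F ((Hi n t).piecewise y x) - a₀| < r) with he
  set p := av (fun x => ind (|F x - a₀| < r)) with hp
  have hp1 : p = av fun y => av fun x => e y x := by
    rw [hp, av_piecewise (Hi n t), av_comm]
  have hp2 : p ^ 2 ≤ av fun y => av fun x => av fun x' => e y x * e y x' := by
    rw [hp1]
    refine (av_sq_le _).trans (le_of_eq ?_)
    refine congrArg av (funext fun y => ?_)
    simp only [av_mul, av_mul_right]
    rw [sq]
  have hp3 : p ^ 2 ≤ av fun x' => av fun x => av fun y => ind (|F ((Hi n t).piecewise y x) -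
      F ((Hi n t).piecewise y x')| < 2 * r) := by
    refine hp2.trans ?_
    have e1 : (av fun y => av fun x => av fun x' => e y x * e y x') =
        av fun x' => av fun x => av fun y => e y x * e y x' := by
      rw [av_comm]
      have : ∀ x, (av fun y => av fun x' => e y x * e y x') =
          av fun x' => av fun y => e y x * e y x' := fun x => av_comm _
      simp only [this]
      rw [av_comm]
    rw [e1]
    refine av_mono fun x' => av_mono fun x => av_mono fun y => ?_
    simp only [he]
    rw [← ind_and]
    refine ind_mono fun hh => ?_
    obtain ⟨h3, h4⟩ := hh
    rw [abs_lt] at h3 h4 ⊢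
    constructor <;> linarith [h3.1, h3.2, h4.1, h4.2]
  have hp4 : ∀ x' : Fin n → Bool, (av fun x => av fun y => ind (|F ((Hi n t).piecewise y x) -
      F ((Hi n t).piecewise y x')| < 2 * r)) ≤ tau t := by
    intro x'
    have key := dense (Lo n t) (Hi n t) (fun b a => if a ∈ Lo n t then 2 * P b a else 0)
      (fun b => - ∑ a ∈ Lo n t, rad (x' a) * (2 * P b a))
      (fun b x => if b ∈ Hi n t then ∑ a, rad (x a) * (if a ∈ Lo n t then 2 * P b a else 0) +
        - ∑ a ∈ Lo n t, rad (x' a) * (2 * P b a) else 0)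
      (fun x => q x - q x') (r := 2 * r) (by positivity) (half_pos kap_pos) hLo hHi
      (fun b hb x => by rw [if_pos hb]) (by
        refine le_trans h (le_of_eq ?_)
        refine Finset.sum_congr rfl fun b _ => Finset.sum_congr rfl fun a ha => ?_
        rw [if_pos ha]
        have : heavy Λ t ω b a ↔ 2 * r ≤ |2 * P b a| := by
          rw [abs_mul, abs_two]
          unfold heavy
          constructor <;> intro hh <;> simp only [hP, hr] at * <;> linarith
        rw [this])
    rw [card_Lo (by omega), card_Hi (by omega)] at key
    refine le_trans (av_mono fun x => av_mono fun y => ind_mono fun hh => ?_) key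
    rw [hFe, hFe] at hh
    refine lt_of_eq_of_lt ?_ hh
    congr 1
    have g1 : ∑ b, rad (y b) * (if b ∈ Hi n t then
        ∑ a, rad (x a) * (if a ∈ Lo n t then 2 * P b a else 0) +
        - ∑ a ∈ Lo n t, rad (x' a) * (2 * P b a) else 0) =
        ∑ b ∈ Hi n t, rad (y b) * ∑ a ∈ Lo n t, rad (x a) * (2 * P b a) -
        ∑ b ∈ Hi n t, rad (y b) * ∑ a ∈ Lo n t, rad (x' a) * (2 * P b a) := by
      rw [← Finset.sum_sub_distrib]
      simp only [mul_ite, mul_zero]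
      rw [Finset.sum_ite_mem, Finset.univ_inter]
      refine Finset.sum_congr rfl fun b _ => ?_
      rw [Finset.sum_ite_mem, Finset.univ_inter]
      ring
    rw [g1]
    simp only [hq]
    ring
  have hp5 : p ^ 2 ≤ tau t := hp3.trans (av_le_of_le hp4)
  exact Real.le_sqrt_of_sq_le hp5

end

section

variable {n : ℕ}

/-! ### The bound for fixed parameters -/

/-- A uniform bound for `tau t`, `t ≥ n / 2`. -/
noncomputable def tauMax (n : ℕ) : ℝ := 24 / √(kap * n)

lemma tau_le {t : ℕ} (h2 : 2 ≤ t) (hn : 1 ≤ n) (ht : n ≤ 2 * t) : tau t ≤ tauMax n := by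
  have hn0 : (0 : ℝ) < n := by exact_mod_cast hn
  have hk := kap_pos
  have e1 : (n : ℝ) / 8 ≤ (t / 2 : ℕ) := by
    have : n ≤ 8 * (t / 2) := by omega
    have : (n : ℝ) ≤ 8 * (t / 2 : ℕ) := by exact_mod_cast this
    linarith
  have e2 : (n : ℝ) / 8 ≤ (t - t / 2 : ℕ) := by
    have : n ≤ 8 * (t - t / 2) := by omega
    have : (n : ℝ) ≤ 8 * (t - t / 2 : ℕ) := by exact_mod_cast this
    linarith
  have e3 : √(kap * n) / 8 = √(kap * n / 64) := by
    rw [Real.sqrt_div (by positivity)]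
    congr 1
    rw [show (64 : ℝ) = 8 ^ 2 by norm_num, Real.sqrt_sq (by norm_num)]
  have e4 : √(kap * n) / 8 ≤ √(kap / 2 * (t / 2 : ℕ) / 2) := by
    rw [e3]; exact Real.sqrt_le_sqrt (by nlinarith)
  have e5 : √(kap * n) / 8 ≤ √(kap / 2 * (t - t / 2 : ℕ) / 4) := by
    rw [e3]; exact Real.sqrt_le_sqrt (by nlinarith)
  have e6 : 0 < √(kap * n) := by positivity
  unfold tau tauMax
  have f1 : 2 / √(kap / 2 * (t / 2 : ℕ) / 2) ≤ 2 / (√(kap * n) / 8) := by gcongr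
  have f2 : 1 / √(kap / 2 * (t - t / 2 : ℕ) / 4) ≤ 1 / (√(kap * n) / 8) := by gcongr
  have f3 : 2 / (√(kap * n) / 8) + 1 / (√(kap * n) / 8) = 24 / √(kap * n) := by
    field_simp; norm_num
  linarith

/-- Iterating the two-step contraction. -/
lemma Psi_iter {Λ : ℝ} (hΛ : 0 < Λ) {K : ℕ} (hn : n ≤ 2 * K) {ξ : ℝ}
    (hξ : av (fun ω : Om n => ind (V Λ K ω = 4 * n + 1)) ≤ ξ) (j : ℕ) (hj : K + 2 * j + 1 ≤ n) :
    Psi n Λ (K + 2 * j) ≤ (1 - kap / 2) ^ j * Psi n Λ K +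
      4 / kap * (phi 3 * tauMax n + phi (4 * n + 1) * ξ) := by
  have hk := kap_pos
  have hp3 := one_le_phi 3
  have hpc := one_le_phi (4 * n + 1)
  have hξ0 : 0 ≤ ξ := le_trans (av_nonneg fun _ => ind_nonneg _) hξ
  have ht0 : 0 ≤ tauMax n := by unfold tauMax; positivity
  induction j with
  | zero =>
    have : 0 ≤ 4 / kap * (phi 3 * tauMax n + phi (4 * n + 1) * ξ) := by positivity
    rw [pow_zero, one_mul]
    simpa using this
  | succ j ih =>
    have i1 := ih (by omega)
    have i2 := Psi_contract (n := n) hΛ (t := K + 2 * j) (by omega) (by omega)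
    have i3 : tau (K + 2 * j) ≤ tauMax n := tau_le (by omega) (by omega) (by omega)
    have i4 : av (fun ω : Om n => ind (V Λ (K + 2 * j) ω = 4 * n + 1)) ≤ ξ :=
      le_trans (av_mono fun ω => ind_mono fun h =>
        V_cap_mono hΛ (by omega : K ≤ K + 2 * j) (by omega) h) hξ
    have i5 : phi 3 * tau (K + 2 * j) +
        phi (4 * n + 1) * av (fun ω : Om n => ind (V Λ (K + 2 * j) ω = 4 * n + 1)) ≤
        phi 3 * tauMax n + phi (4 * n + 1) * ξ := by
      gcongr
    set E := phi 3 * tauMax n + phi (4 * n + 1) * ξ with hE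
    have e : K + 2 * (j + 1) = K + 2 * j + 2 := by ring
    have hk2 : (0 : ℝ) ≤ 1 - kap / 2 := by norm_num [kap]
    have i6 : (1 - kap / 2) * Psi n Λ (K + 2 * j) ≤
        (1 - kap / 2) * ((1 - kap / 2) ^ j * Psi n Λ K + 4 / kap * E) :=
      mul_le_mul_of_nonneg_left i1 hk2
    have i7 : kap / 2 * (4 / kap * E) = 2 * E := by field_simp; norm_num
    rw [e, pow_succ']
    nlinarith

/-- The value of `Psi` when the weight is at most `m` up to probability `ξ`. -/
lemma Psi_start {Λ : ℝ} {K m : ℕ} {ξ : ℝ}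
    (hξ : av (fun ω : Om n => ind (¬ V Λ K ω ≤ m)) ≤ ξ) :
    Psi n Λ K ≤ phi m + phi (4 * n + 1) * ξ := by
  have hpc := one_le_phi (4 * n + 1)
  have hpt : ∀ ω : Om n, phi (V Λ K ω) * ind (¬ Dense Λ K ω) ≤
      phi m + phi (4 * n + 1) * ind (¬ V Λ K ω ≤ m) := by
    intro ω
    have h1 := one_le_phi (V Λ K ω)
    have h2 : phi (V Λ K ω) * ind (¬ Dense Λ K ω) ≤ phi (V Λ K ω) :=
      mul_le_of_le_one_right (by linarith) (ind_le_one _)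
    by_cases h : V Λ K ω ≤ m
    · rw [ind_neg (not_not.2 h)]
      have := phi_mono h
      linarith
    · rw [ind_pos h]
      have := phi_mono (V_le_cap Λ K ω)
      have := one_le_phi m
      linarith
  refine (av_mono hpt).trans ?_
  rw [av_add, av_const, av_mul]
  gcongr

/-- The anti-concentration estimate with explicit parameters. -/
lemma main_bound {d f K N : ℕ} {δ η θ Λ : ℝ} (hδ : 0 < δ) (hη : 0 < η) (hθ : 1 ≤ θ) (hΛ : 0 < Λ)
    (hok : StepOK n d δ η θ) (hΛ2 : Λ ^ 2 * 2 ^ n ≤ θ ^ (K - d - f)) (hK : d + f < K)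
    (hKN : K + 2 * N + 1 = n) (h2 : 2 ≤ K) (hn : n ≤ 2 * K) (a : ℝ) :
    av (fun ω : Om n => ind (|perm (mat ω) - a| < lam Λ (n - 1))) ≤
      (1 - kap / 2) ^ N * (phi (4 * (d + f)) + phi (4 * n + 1) * (2 ^ n * η ^ f)) +
      4 / kap * (phi 3 * tauMax n + phi (4 * n + 1) * (2 ^ n * η ^ f)) + √(tauMax n) := by
  have hg := growth hδ hη hθ hΛ hok hΛ2 hK (by omega : K ≤ n)
  have hcap : av (fun ω : Om n => ind (V Λ K ω = 4 * n + 1)) ≤ 2 ^ n * η ^ f :=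
    le_trans (av_mono fun ω => ind_mono fun h => by omega) hg
  have h1 := Psi_iter hΛ hn hcap N hKN.le
  have h3 := Psi_start hg
  have hk2 : (0 : ℝ) ≤ 1 - kap / 2 := by norm_num [kap]
  have h4 := mul_le_mul_of_nonneg_left h3 (pow_nonneg hk2 N)
  have ht : K + 2 * N < n := by omega
  have e : n - 1 = K + 2 * N := by omega
  have h5 : av (fun ω : Om n => ind (|perm (mat ω) - a| < lam Λ (n - 1))) ≤
      Psi n Λ (K + 2 * N) + √(tauMax n) := by
    rw [e, av_upd ⟨K + 2 * N, ht⟩]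
    have hpt : ∀ ω : Om n, av (fun x => ind (|perm (mat (upd ω ⟨K + 2 * N, ht⟩ x)) - a| <
        lam Λ (K + 2 * N))) ≤
        phi (V Λ (K + 2 * N) ω) * ind (¬ Dense Λ (K + 2 * N) ω) + √(tauMax n) := by
      intro ω
      by_cases hD : Dense Λ (K + 2 * N) ω
      · rw [ind_neg (not_not.2 hD), mul_zero, zero_add]
        exact (final_dense ht hKN hΛ (by omega) hD a).trans
          (Real.sqrt_le_sqrt (tau_le (by omega) (by omega) (by omega)))
      · rw [ind_pos hD, mul_one]
        have i1 := one_le_phi (V Λ (K + 2 * N) ω)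
        have i2 := av_le_one_of_ind fun x : Fin n → Bool =>
          |perm (mat (upd ω ⟨K + 2 * N, ht⟩ x)) - a| < lam Λ (K + 2 * N)
        have i3 := Real.sqrt_nonneg (tauMax n)
        linarith
    refine (av_mono hpt).trans (le_of_eq ?_)
    rw [av_add, av_const]
    rfl
  linarith

end

section

/-! ### Choice of parameters -/

open Filter in
lemma ev_rpow {s c : ℝ} (hs : 0 < s) (hc : 0 < c) : ∀ᶠ n : ℕ in atTop, (n : ℝ) ^ (-s) ≤ c :=
  ((tendsto_rpow_neg_atTop hs).comp tendsto_natCast_atTop_atTop).eventually_le_const hc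

open Filter in
lemma ev_exp {b c : ℝ} (hb : 0 < b) (hc : 0 < c) :
    ∀ᶠ n : ℕ in atTop, Real.exp (-b * n) ≤ c * (n : ℝ) ^ (-(1 / 8) : ℝ) := by
  have h1 := (isLittleO_exp_neg_mul_rpow_atTop hb (-(1 / 8))).bound hc
  have h2 := tendsto_natCast_atTop_atTop (R := ℝ) |>.eventually h1
  filter_upwards [h2] with n hn
  rw [Real.norm_of_nonneg (Real.exp_pos _).le,
    Real.norm_of_nonneg (Real.rpow_nonneg (Nat.cast_nonneg n) _)] at hn
  exact hn

lemma phi_le_exp (v : ℕ) : phi v ≤ 2 * Real.exp (v / 20) := by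
  refine (phi_le_pow v).trans ?_
  have : (21 / 20 : ℝ) ≤ Real.exp (1 / 20) := by
    have := Real.add_one_le_exp (1 / 20 : ℝ)
    linarith
  have h2 : ((21 : ℝ) / 20) ^ v ≤ Real.exp (1 / 20) ^ v := by gcongr
  rw [← Real.exp_nat_mul] at h2
  rw [show (v : ℝ) / 20 = v * (1 / 20) by ring]
  linarith

/-- The contraction over `N ≈ γ n` rounds beats the initial value of the potential. -/
lemma initial_small {n d f N : ℕ} {γ δ : ℝ} (hδ : δ = kap * γ / 2)
    (hd : (d : ℝ) ≤ δ * n + 1) (hf : (f : ℝ) ≤ δ * n + 1) (hN : γ * n - 1 ≤ N) :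
    (1 - kap / 2) ^ N * phi (4 * (d + f)) ≤ 6 * Real.exp (-(3 / 10 * kap * γ) * n) := by
  have h1 : (1 - kap / 2) ^ N ≤ Real.exp (-(kap / 2)) ^ N := by
    have := Real.add_one_le_exp (-(kap / 2))
    have h0 : (0 : ℝ) ≤ 1 - kap / 2 := by norm_num [kap]
    exact pow_le_pow_left₀ h0 (by linarith) N
  rw [← Real.exp_nat_mul] at h1
  have h2 := phi_le_exp (4 * (d + f))
  have hp := one_le_phi (4 * (d + f))
  have hk := kap_pos
  have hk1 : kap ≤ 1 / 10 := by norm_num [kap]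
  calc (1 - kap / 2) ^ N * phi (4 * (d + f)) ≤
      Real.exp (N * (-(kap / 2))) * (2 * Real.exp ((4 * (d + f) : ℕ) / 20)) := by gcongr
    _ = 2 * Real.exp (N * (-(kap / 2)) + (4 * (d + f) : ℕ) / 20) := by rw [Real.exp_add]; ring
    _ ≤ 2 * Real.exp (1 + -(3 / 10 * kap * γ) * n) := by
        refine mul_le_mul_of_nonneg_left (Real.exp_le_exp.2 ?_) (by norm_num)
        push_cast
        subst hδ
        nlinarith
    _ = 2 * Real.exp 1 * Real.exp (-(3 / 10 * kap * γ) * n) := by rw [Real.exp_add]; ring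
    _ ≤ 6 * Real.exp (-(3 / 10 * kap * γ) * n) := by
        have := Real.exp_one_lt_d9
        gcongr
        linarith

/-- The failure probability of the growth phase beats the largest value of the potential. -/
lemma cap_small {n f : ℕ} {η : ℝ} (hη : 0 < η) (h : η ^ f ≤ (1 / 8) ^ n) :
    phi (4 * n + 1) * (2 ^ n * η ^ f) ≤ 3 * (1 / 2) ^ n := by
  have h1 := phi_le_pow (4 * n + 1)
  have hp := one_le_phi (4 * n + 1)
  calc phi (4 * n + 1) * (2 ^ n * η ^ f) ≤
      (2 * (21 / 20) ^ (4 * n + 1)) * (2 ^ n * (1 / 8) ^ n) := by gcongr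
    _ = 21 / 10 * ((21 / 20) ^ 4 * 2 * (1 / 8)) ^ n := by
        rw [pow_succ, pow_mul, mul_pow, mul_pow]; ring
    _ ≤ 3 * (1 / 2) ^ n := by
        gcongr <;> norm_num

lemma step_ok {n d : ℕ} {δ η ε m : ℝ} (hδ : 0 < δ) (hη : 0 < η) (hn : 1 ≤ n)
    (hm : m = η * δ / 32) (hd : δ * n ≤ d) (h1 : (n : ℝ) ^ (-(ε / 2)) ≤ δ / 2)
    (h2 : (n : ℝ) ^ (-(ε / 4)) ≤ η * m / 2) (h3 : (n : ℝ) ^ (-(1 / 2) : ℝ) ≤ η * √m / 2) :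
    StepOK n d δ η ((n : ℝ) ^ (1 - ε / 2)) := by
  have hn0 : (0 : ℝ) < n := by exact_mod_cast hn
  have hm0 : 0 < m := by rw [hm]; positivity
  refine ⟨hd, ?_, ?_⟩
  · rw [sub_eq_add_neg, Real.rpow_add hn0, Real.rpow_one]
    nlinarith
  · rw [← hm]
    have e1 : √((n : ℝ) ^ (1 - ε / 2)) = √n * (n : ℝ) ^ (-(ε / 4)) := by
      rw [Real.sqrt_eq_rpow, Real.sqrt_eq_rpow, ← Real.rpow_mul hn0.le, ← Real.rpow_add hn0]
      congr 1; ring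
    have e2 : (n : ℝ) ^ (-(1 / 2) : ℝ) = 1 / √n := by
      rw [Real.rpow_neg hn0.le, Real.sqrt_eq_rpow, one_div, one_div]
    have hsn : 0 < √(n : ℝ) := Real.sqrt_pos.2 hn0
    have hsm : 0 < √m := Real.sqrt_pos.2 hm0
    have hmm : √m * √m = m := Real.mul_self_sqrt hm0.le
    rw [e1, Real.sqrt_mul hm0.le]
    rw [e2, div_le_iff₀ hsn] at h3
    rw [div_le_iff₀ (by positivity)]
    have e3 : √n * (n : ℝ) ^ (-(ε / 4)) / √m ≤ √n * (η * m / 2) / √m := by gcongr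
    have e4 : √n * (η * m / 2) / √m = η * √m / 2 * √n := by
      rw [div_eq_iff hsm.ne']
      calc √n * (η * m / 2) = √n * (η * (√m * √m) / 2) := by rw [hmm]
        _ = _ := by ring
    nlinarith

/-- The final threshold exceeds `n ^ (n / 2 - ε n)`. -/
lemma thr_large {n M : ℕ} {ε : ℝ} (hε : 0 < ε) (hε2 : ε ≤ 1 / 2) (hn : 1 ≤ n)
    (hM : (1 - 3 * (ε / 8)) * n ≤ M) (h1 : (n : ℝ) ^ (-ε) ≤ 1 / 5) :
    (n : ℝ) ^ ((n : ℝ) / 2 - ε * n) <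
      lam √(((n : ℝ) ^ (1 - ε / 2)) ^ M / 2 ^ n) (n - 1) := by
  have hn0 : (0 : ℝ) < n := by exact_mod_cast hn
  have hn1 : (1 : ℝ) ≤ n := by exact_mod_cast hn
  set θ := (n : ℝ) ^ (1 - ε / 2) with hθ
  have hθ0 : 0 < θ := by positivity
  have e1 : √(θ ^ M / 2 ^ n) * (2 / 3) ^ n ≤ lam √(θ ^ M / 2 ^ n) (n - 1) := by
    unfold lam
    refine mul_le_mul_of_nonneg_left ?_ (Real.sqrt_nonneg _)
    exact pow_le_pow_of_le_one (by norm_num) (by norm_num) (by omega)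
  refine lt_of_lt_of_le ?_ e1
  refine lt_of_pow_lt_pow_left₀ 2 (by positivity) ?_
  rw [mul_pow, Real.sq_sqrt (by positivity)]
  have e2 : ((n : ℝ) ^ ((n : ℝ) / 2 - ε * n)) ^ 2 = (n : ℝ) ^ ((n : ℝ) - 2 * ε * n) := by
    rw [← Real.rpow_natCast, ← Real.rpow_mul hn0.le]
    congr 1; push_cast; ring
  have e3 : θ ^ M = (n : ℝ) ^ ((1 - ε / 2) * M) := by
    rw [hθ, ← Real.rpow_natCast, ← Real.rpow_mul hn0.le]
  have e4 : (n : ℝ) ^ ((n : ℝ) - 2 * ε * n) * (n : ℝ) ^ (ε * n) ≤ θ ^ M := by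
    rw [e3, ← Real.rpow_add hn0]
    refine Real.rpow_le_rpow_of_exponent_le hn1 ?_
    have : (1 - ε / 2) * ((1 - 3 * (ε / 8)) * n) ≤ (1 - ε / 2) * M :=
      mul_le_mul_of_nonneg_left hM (by linarith)
    nlinarith [mul_pos hε hn0, mul_pos (mul_pos hε hε) hn0]
  have e5 : (5 : ℝ) ^ n ≤ (n : ℝ) ^ (ε * n) := by
    rw [Real.rpow_mul hn0.le, Real.rpow_natCast]
    refine pow_le_pow_left₀ (by norm_num) ?_ n
    rw [Real.rpow_neg hn0.le, inv_le_comm₀ (by positivity) (by norm_num)] at h1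
    norm_num at h1
    exact h1
  have e6 : (1 : ℝ) < 5 ^ n * (((2 / 3) ^ n) ^ 2 / 2 ^ n) := by
    have : (5 : ℝ) ^ n * (((2 / 3) ^ n) ^ 2 / 2 ^ n) = (10 / 9) ^ n := by
      rw [← pow_mul, mul_comm n 2, pow_mul, ← div_pow, ← mul_pow]
      norm_num
    rw [this]
    exact one_lt_pow₀ (by norm_num) (by omega)
  rw [e2]
  set A := (n : ℝ) ^ ((n : ℝ) - 2 * ε * n) with hA
  have hA0 : 0 < A := by positivity
  set q : ℝ := ((2 / 3) ^ n) ^ 2 / 2 ^ n with hq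
  have hq0 : 0 < q := by positivity
  calc A = A * 1 := (mul_one A).symm
    _ < A * (5 ^ n * q) := mul_lt_mul_of_pos_left e6 hA0
    _ ≤ A * ((n : ℝ) ^ (ε * n) * q) := by gcongr
    _ = (A * (n : ℝ) ^ (ε * n)) * q := by ring
    _ ≤ θ ^ M * q := by gcongr
    _ = θ ^ M / 2 ^ n * ((2 / 3) ^ n) ^ 2 := by rw [hq]; ring

end

section

/-- The total error is at most `n ^ (-1/8)` for large `n`. -/
lemma total_small {b : ℝ} (hb : 0 < b) : ∀ᶠ n : ℕ in Filter.atTop, ∀ P A X : ℝ,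
    0 ≤ P → P ≤ 1 → 0 ≤ X → P * A ≤ 6 * Real.exp (-b * n) → X ≤ 3 * (1 / 2) ^ n →
    P * (A + X) + 4 / kap * (phi 3 * tauMax n + X) + √(tauMax n) ≤ (n : ℝ) ^ (-(1 / 8) : ℝ) := by
  have hk := kap_pos
  have hsk : 0 < √kap := Real.sqrt_pos.2 hk
  filter_upwards [ev_exp hb (c := 1 / 24) (by norm_num),
    ev_exp (Real.log_pos one_lt_two) (c := kap / 96) (by positivity),
    ev_rpow (s := 3 / 8) (c := √kap / 24 * (kap / 32)) (by norm_num) (by positivity),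
    ev_rpow (s := 1 / 4) (c := √kap / 24 * (1 / 16)) (by norm_num) (by positivity),
    Filter.eventually_ge_atTop 1] with n h1 h2 h3 h4 hn P A X hP hP1 hX hA hX2
  have hn0 : (0 : ℝ) < n := by exact_mod_cast hn
  set y : ℝ := (n : ℝ) ^ (-(1 / 8) : ℝ) with hy
  have hy0 : 0 < y := by positivity
  have hhalf : ((1 : ℝ) / 2) ^ n = Real.exp (-Real.log 2 * n) := by
    rw [mul_comm, Real.exp_nat_mul, Real.exp_neg, Real.exp_log (by norm_num)]
    norm_num
  rw [hhalf] at hX2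
  have hT : tauMax n = 24 / √kap * (n : ℝ) ^ (-(1 / 2) : ℝ) := by
    unfold tauMax
    rw [Real.sqrt_mul hk.le, Real.rpow_neg hn0.le, ← Real.sqrt_eq_rpow]
    field_simp
  have hT1 : tauMax n ≤ kap / 32 * y := by
    have e : (n : ℝ) ^ (-(1 / 2) : ℝ) = (n : ℝ) ^ (-(3 / 8) : ℝ) * y := by
      rw [hy, ← Real.rpow_add hn0]; norm_num
    rw [hT, e]
    calc 24 / √kap * ((n : ℝ) ^ (-(3 / 8) : ℝ) * y)
        ≤ 24 / √kap * ((√kap / 24 * (kap / 32)) * y) := by gcongr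
      _ = kap / 32 * y := by field_simp
  have hT2 : tauMax n ≤ (y / 4) ^ 2 := by
    have e : (n : ℝ) ^ (-(1 / 2) : ℝ) = (n : ℝ) ^ (-(1 / 4) : ℝ) * y ^ 2 := by
      rw [hy, ← Real.rpow_natCast, ← Real.rpow_mul hn0.le, ← Real.rpow_add hn0]; norm_num
    rw [hT, e]
    calc 24 / √kap * ((n : ℝ) ^ (-(1 / 4) : ℝ) * y ^ 2)
        ≤ 24 / √kap * ((√kap / 24 * (1 / 16)) * y ^ 2) := by gcongr
      _ = (y / 4) ^ 2 := by field_simp; norm_num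
  have hT3 : √(tauMax n) ≤ y / 4 := Real.sqrt_le_iff.2 ⟨by positivity, hT2⟩
  have hT0 : 0 ≤ tauMax n := by unfold tauMax; positivity
  have hphi : phi 3 ≤ 2 := by norm_num [phi]
  have hX3 : X ≤ kap / 32 * y := by linarith
  have h5 : 4 / kap * (phi 3 * tauMax n + X) ≤ 4 / kap * (2 * (kap / 32 * y) + kap / 32 * y) := by
    gcongr
  have h6 : 4 / kap * (2 * (kap / 32 * y) + kap / 32 * y) = 3 / 8 * y := by field_simp; norm_num
  have h7 : P * X ≤ X := mul_le_of_le_one_left hX hP1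
  have hk1 : kap ≤ 1 := by norm_num [kap]
  have h8 : kap / 32 * y ≤ 1 / 32 * y := by gcongr
  rw [mul_add]
  linarith

/-- The theorem with `c = 1 / 8` for `ε ≤ 1 / 2`, from `main_bound` with `N ≈ γ n`, `d = f ≈ δ n`,
`θ = n ^ (1 - ε / 2)`, where `γ = ε / 8` and `δ = kap * γ / 2`, so that the contraction during `N`
rounds beats the growth of `phi` on the initial weight `4 (d + f)`. -/
lemma anti_small {ε : ℝ} (hε : 0 < ε) (hε2 : ε ≤ 1 / 2) : ∀ᶠ n : ℕ in Filter.atTop, ∀ a : ℝ,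
    prob n (fun M => |perm M - a| ≤ (n : ℝ) ^ ((n : ℝ) / 2 - ε * n)) ≤
      (n : ℝ) ^ (-(1 / 8) : ℝ) := by
  have hk := kap_pos
  have hk1 : kap ≤ 1 / 10 := by norm_num [kap]
  set γ : ℝ := ε / 8 with hγ
  have hγ0 : 0 < γ := by positivity
  set δ : ℝ := kap * γ / 2 with hδ
  have hδ0 : 0 < δ := by positivity
  set η : ℝ := (1 / 8 : ℝ) ^ (1 / δ) with hη
  have hη0 : 0 < η := by positivity
  have hη1 : η ≤ 1 := Real.rpow_le_one (by norm_num) (by norm_num) (by positivity)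
  set m : ℝ := η * δ / 32 with hm
  have hm0 : 0 < m := by positivity
  filter_upwards [total_small (b := 3 / 10 * kap * γ) (by positivity),
    ev_rpow (s := ε / 2) (c := δ / 2) (by positivity) (by positivity),
    ev_rpow (s := ε / 4) (c := η * m / 2) (by positivity) (by positivity),
    ev_rpow (s := 1 / 2) (c := η * √m / 2) (by positivity) (by positivity),
    ev_rpow (s := ε) (c := 1 / 5) hε (by norm_num),
    Filter.eventually_ge_atTop ⌈100 / γ⌉₊] with n h0 h1 h2 h3 h4 hn a
  have hγn : 100 ≤ γ * n := by
    have := Nat.ceil_le.1 hn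
    rw [div_le_iff₀ hγ0] at this
    linarith
  have hγ1 : γ ≤ 1 / 16 := by rw [hγ]; linarith
  have hnr : (1600 : ℝ) ≤ n := by nlinarith [Nat.cast_nonneg (α := ℝ) n]
  have hn1 : 1 ≤ n := by
    have : (1 : ℝ) ≤ n := by linarith
    exact_mod_cast this
  have hn0 : (0 : ℝ) < n := by linarith
  obtain ⟨N, hN⟩ : ∃ N, N = ⌊γ * n⌋₊ := ⟨_, rfl⟩
  obtain ⟨d, hd⟩ : ∃ d, d = ⌈δ * n⌉₊ := ⟨_, rfl⟩
  have hN1 : (N : ℝ) ≤ γ * n := hN ▸ Nat.floor_le (by positivity)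
  have hN2 : γ * n - 1 ≤ N := by
    have := Nat.lt_floor_add_one (γ * n)
    rw [hN]; linarith
  have hd1 : δ * n ≤ d := hd ▸ Nat.le_ceil _
  have hd2 : (d : ℝ) ≤ δ * n + 1 := by
    rw [hd]; exact (Nat.ceil_lt_add_one (by positivity)).le
  have hδγ : δ * n ≤ 1 / 20 * (γ * n) := by
    rw [hδ]; nlinarith
  -- the three pieces `2N + 1`, `d`, `d` take up at most `3γn` of the `n` rounds
  have hroom : ((2 * N + 1 + 2 * d : ℕ) : ℝ) ≤ 3 * (γ * n) := by
    push_cast; linarith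
  have hγn' : γ * n ≤ 1 / 16 * n := by gcongr
  have hroom2 : 2 * (2 * N + 1 + 2 * d) + 10 ≤ n := by
    have : ((2 * (2 * N + 1 + 2 * d) + 10 : ℕ) : ℝ) ≤ n := by
      push_cast at hroom ⊢; linarith
    exact_mod_cast this
  obtain ⟨K, hK⟩ : ∃ K, K + 2 * N + 1 = n := ⟨n - 1 - 2 * N, by omega⟩
  have hM : (1 - 3 * (ε / 8)) * n ≤ (K - d - d : ℕ) := by
    have e : (K - d - d) + (2 * N + 1 + 2 * d) = n := by omega
    have e' : ((K - d - d : ℕ) : ℝ) + ((2 * N + 1 + 2 * d : ℕ) : ℝ) = n := by exact_mod_cast e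
    have : ε / 8 = γ := rfl
    rw [this]
    linarith
  set θ : ℝ := (n : ℝ) ^ (1 - ε / 2) with hθ
  have hθ1 : 1 ≤ θ := Real.one_le_rpow (by exact_mod_cast hn1) (by linarith)
  set Λ : ℝ := √(θ ^ (K - d - d) / 2 ^ n) with hΛ
  have hθ0 : 0 < θ := by linarith
  have hΛ0 : 0 < Λ := Real.sqrt_pos.2 (by positivity)
  have hΛ2 : Λ ^ 2 * 2 ^ n ≤ θ ^ (K - d - d) := by
    rw [hΛ, Real.sq_sqrt (by positivity)]
    exact le_of_eq (by field_simp)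
  have hηd : η ^ d ≤ (1 / 8) ^ n := by
    have e : ((1 : ℝ) / 8) ^ n = η ^ (δ * n) := by
      rw [hη, ← Real.rpow_mul (by norm_num), ← mul_assoc, one_div_mul_cancel hδ0.ne', one_mul,
        Real.rpow_natCast]
    rw [e, ← Real.rpow_natCast]
    exact Real.rpow_le_rpow_of_exponent_ge hη0 hη1 hd1
  have hb := main_bound (n := n) hδ0 hη0 hθ1 hΛ0
    (step_ok hδ0 hη0 hn1 hm hd1 h1 h2 h3) hΛ2 (by omega) hK (by omega) (by omega) a
  have hthr := thr_large hε hε2 hn1 hM h4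
  rw [prob_eq_av]
  refine (av_mono fun ω => ind_mono fun h => lt_of_le_of_lt h hthr).trans (hb.trans ?_)
  have hp := one_le_phi (4 * n + 1)
  refine h0 _ _ _ (pow_nonneg (by norm_num [kap]) _) (pow_le_one₀ (by norm_num [kap]) (by linarith))
    (by positivity) (initial_small hδ hd2 hd2 hN2) (cap_small hη0 hηd)

lemma prob_mono {n : ℕ} {P Q : Matrix (Fin n) (Fin n) ℝ → Prop} (h : ∀ M, P M → Q M) :
    prob n P ≤ prob n Q := by
  rw [prob_eq_av, prob_eq_av]
  exact av_mono fun ω => ind_mono (h _)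

end

end PerAnti

/-- Anti-concentration version of the main theorem: there is a constant `c > 0` such that
for every `ε > 0` and all `n` sufficiently large with respect to `ε`, for every real `a`,
`Pr(|per M_n - a| ≤ n^(n/2-εn)) ≤ n^(-c)`; in particular `Pr(per M_n = a) ≤ n^(-c)`. -/
theorem per_anticoncentration :
    ∃ c : ℝ, 0 < c ∧ ∀ ε : ℝ, 0 < ε → ∃ n₀ : ℕ, ∀ n : ℕ, n₀ ≤ n → ∀ a : ℝ,
      prob n (fun M => |perm M - a| ≤ (n : ℝ) ^ ((n : ℝ) / 2 - ε * n)) ≤ (n : ℝ) ^ (-c) ∧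
      prob n (fun M => perm M = a) ≤ (n : ℝ) ^ (-c) := by
  refine ⟨1 / 8, by norm_num, fun ε hε => ?_⟩
  obtain ⟨n₀, h⟩ := Filter.eventually_atTop.1
    (PerAnti.anti_small (ε := min ε (1 / 2)) (lt_min hε (by norm_num)) (min_le_right _ _))
  refine ⟨max n₀ 1, fun n hn a => ?_⟩
  have hn1 : (1 : ℝ) ≤ n := by exact_mod_cast (le_max_right _ _).trans hn
  have key := h n ((le_max_left _ _).trans hn) a
  constructor
  · refine le_trans (PerAnti.prob_mono fun M hM => hM.trans ?_) key
    refine Real.rpow_le_rpow_of_exponent_le hn1 ?_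
    have := mul_le_mul_of_nonneg_right (min_le_left ε (1 / 2)) (by linarith : (0 : ℝ) ≤ n)
    linarith
  · refine le_trans (PerAnti.prob_mono fun M hM => ?_) key
    rw [hM, sub_self, abs_zero]
    positivity
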